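/- Let α,β>−1 and let φ∈L^∞(0,∞). Define, for θ,φ'∈(0,π) with θ≠φ', the Laplace-transform-type multiplier kernel M̃_φ^{α,β}(θ,φ')=−∫₀^∞ ∂_t H̃_t^{α,β}(θ,φ')·φ(t) dt (the integral converges absolutely). Then there exists a constant C=C(α,β) such that for all θ,φ'∈(0,π) with θ≠φ': |M̃_φ^{α,β}(θ,φ')| ≤ C‖φ‖_{L^∞}/μ⁺_{α,β}(B(θ,|θ−φ'|)) and |∂_θ M̃_φ^{α,β}(θ,φ')|+|∂_{φ'} M̃_φ^{α,β}(θ,φ')| ≤ C‖φ‖_{L^∞}/(|θ−φ'|·μ⁺_{α,β}(B(θ,|θ−φ'|))). -/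

import Mathlib

open MeasureTheory Real Set
open scoped ENNReal

noncomputable section

/-- The classical Jacobi polynomial `P_n^{α,β}`. -/
def jacobiP (α β : ℝ) (n : ℕ) (x : ℝ) : ℝ :=
  ∑ m ∈ Finset.range (n + 1),
    (Real.Gamma (α + n + 1) * Real.Gamma (α + β + n + m + 1)) /
      ((m.factorial : ℝ) * ((n - m).factorial : ℝ) * Real.Gamma (α + β + n + 1) *
        Real.Gamma (α + m + 1)) * ((x - 1) / 2) ^ m

/-- `Ψ^{α,β}(θ) = |sin(θ/2)|^{α+1/2} (cos(θ/2))^{β+1/2}`. -/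
def jPsi (α β θ : ℝ) : ℝ := |Real.sin (θ / 2)| ^ (α + 1 / 2) * Real.cos (θ / 2) ^ (β + 1 / 2)

/-- The measure `μ_{α,β}` on `(−π, π)`, with density `(Ψ^{α,β})²` w.r.t. Lebesgue measure. -/
def jacobiMeasure (α β : ℝ) : Measure ℝ :=
  (volume.restrict (Ioo (-π) π)).withDensity fun θ => ENNReal.ofReal (jPsi α β θ ^ 2)

/-- The restriction `μ⁺_{α,β}` of `μ_{α,β}` to `(0, π)`. -/
def jacobiMeasurePlus (α β : ℝ) : Measure ℝ := (jacobiMeasure α β).restrict (Ioo 0 π)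

/-- The normalizing constant `c_n^{α,β}` making `𝒫_n^{α,β}` have unit `L²(μ⁺)` norm. -/
def cJ (α β : ℝ) (n : ℕ) : ℝ :=
  (∫ θ, jacobiP α β n (Real.cos θ) ^ 2 ∂(jacobiMeasurePlus α β)) ^ (-(1 / 2) : ℝ)

/-- The normalized trigonometric Jacobi polynomial `𝒫_n^{α,β}(θ)`. -/
def trigP (α β : ℝ) (n : ℕ) (θ : ℝ) : ℝ := cJ α β n * jacobiP α β n (Real.cos θ)

/-- The eigenvalue `λ_n^{α,β} = (n + (α+β+1)/2)²`. -/
def jLam (α β : ℝ) (n : ℕ) : ℝ := ((n : ℝ) + (α + β + 1) / 2) ^ 2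

/-- The symmetrized system `Φ_n^{α,β}`. -/
def symPhi (α β : ℝ) (n : ℕ) (θ : ℝ) : ℝ :=
  if Even n then (Real.sqrt 2)⁻¹ * trigP α β (n / 2) θ
  else (Real.sqrt 2)⁻¹ * (Real.sin θ / 2) * trigP (α + 1) (β + 1) ((n - 1) / 2) θ

/-- The Jacobi functions `φ_n^{α,β} = Ψ^{α,β} 𝒫_n^{α,β}`. -/
def phiFun (α β : ℝ) (n : ℕ) (θ : ℝ) : ℝ := jPsi α β θ * trigP α β n θ

/-- The symmetrized Jacobi function system `Θ_n^{α,β}`. -/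
def jTheta (α β : ℝ) (n : ℕ) (θ : ℝ) : ℝ :=
  if Even n then (Real.sqrt 2)⁻¹ * phiFun α β (n / 2) θ
  else (Real.sqrt 2)⁻¹ * Real.sign θ * phiFun (α + 1) (β + 1) ((n - 1) / 2) θ

/-- The symmetrized Jacobi–Poisson semigroup `ℍ_t^{α,β}f(θ)` (polynomial setting). -/
def symH (α β : ℝ) (f : ℝ → ℝ) (t θ : ℝ) : ℝ :=
  ∑' n : ℕ, Real.exp (-t * Real.sqrt (jLam α β ((n + 1) / 2))) *
    (∫ φ, f φ * symPhi α β n φ ∂(jacobiMeasure α β)) * symPhi α β n θ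

/-- The symmetrized Jacobi–Poisson semigroup `H̄_t^{α,β}f(θ)` (function setting). -/
def symHbar (α β : ℝ) (f : ℝ → ℝ) (t θ : ℝ) : ℝ :=
  ∑' n : ℕ, Real.exp (-t * Real.sqrt (jLam α β ((n + 1) / 2))) *
    (∫ φ in Ioo (-π) π, f φ * jTheta α β n φ) * jTheta α β n θ

/-- The non-symmetrized Jacobi–Poisson semigroup `ℋ_t^{α,β}f(θ)` (polynomial setting). -/
def jacH (α β : ℝ) (f : ℝ → ℝ) (t θ : ℝ) : ℝ :=
  ∑' n : ℕ, Real.exp (-t * Real.sqrt (jLam α β n)) *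
    (∫ φ, f φ * trigP α β n φ ∂(jacobiMeasurePlus α β)) * trigP α β n θ

/-- The non-symmetrized Jacobi–Poisson semigroup `𝓗̄_t^{α,β}f(θ)` (function setting). -/
def jacHbar (α β : ℝ) (f : ℝ → ℝ) (t θ : ℝ) : ℝ :=
  ∑' n : ℕ, Real.exp (-t * Real.sqrt (jLam α β n)) *
    (∫ φ in Ioo 0 π, f φ * phiFun α β n φ) * phiFun α β n θ

/-- The symmetrized derivative `𝔻_{α,β}`. -/
def symD (α β : ℝ) (f : ℝ → ℝ) : ℝ → ℝ := fun θ =>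
  deriv f θ + (α - β + (α + β + 1) * Real.cos θ) / Real.sin θ * ((f θ - f (-θ)) / 2)

/-- The symmetrized derivative `D̄_{α,β}` (function setting). -/
def symDbar (α β : ℝ) (f : ℝ → ℝ) : ℝ → ℝ := fun θ =>
  deriv f θ -
    ((2 * α + 1) / 4 * (Real.cos (θ / 2) / Real.sin (θ / 2)) -
      (2 * β + 1) / 4 * Real.tan (θ / 2)) * f (-θ)

/-- The derivative `D_{α,β}` (non-symmetrized function setting). -/
def jacD (α β : ℝ) (f : ℝ → ℝ) : ℝ → ℝ := fun θ =>
  deriv f θ - (2 * α + 1) / 4 * (Real.cos (θ / 2) / Real.sin (θ / 2)) * f θ +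
    (2 * β + 1) / 4 * Real.tan (θ / 2) * f θ

/-- `δ*_{α,β} = −d/dθ − (α+1/2)cot(θ/2) + (β+1/2)tan(θ/2)`. -/
def delStar (α β : ℝ) (f : ℝ → ℝ) : ℝ → ℝ := fun θ =>
  -deriv f θ - (α + 1 / 2) * (Real.cos (θ / 2) / Real.sin (θ / 2)) * f θ +
    (β + 1 / 2) * Real.tan (θ / 2) * f θ

/-- `δ_N^even`: `N` alternating factors, rightmost (first applied) one being `δ = d/dθ`. -/
def deltaEven (α β : ℝ) : ℕ → (ℝ → ℝ) → ℝ → ℝ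
  | 0 => fun f => f
  | N + 1 => fun f => (if N % 2 = 0 then deriv else delStar α β) (deltaEven α β N f)

/-- `δ_N^odd`: `N` alternating factors, rightmost (first applied) one being `δ*_{α,β}`. -/
def deltaOdd (α β : ℝ) : ℕ → (ℝ → ℝ) → ℝ → ℝ
  | 0 => fun f => f
  | N + 1 => fun f => (if N % 2 = 0 then delStar α β else deriv) (deltaOdd α β N f)

/-- The Jacobi–Poisson kernel `H_t^{α,β}(θ,φ)` (even part of the symmetrized kernel). -/
def jHker (α β t θ φ : ℝ) : ℝ :=
  (1 / 2) * ∑' n : ℕ, Real.exp (-t * Real.sqrt (jLam α β n)) * trigP α β n θ * trigP α β n φ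

/-- The kernel `H̃_t^{α,β}(θ,φ)` (odd part of the symmetrized kernel). -/
def jHtil (α β t θ φ : ℝ) : ℝ :=
  (1 / 8) * Real.sin θ * Real.sin φ *
    ∑' n : ℕ, Real.exp (-t * Real.sqrt (jLam α β (n + 1))) *
      trigP (α + 1) (β + 1) n θ * trigP (α + 1) (β + 1) n φ

/-- `μ⁺_{α,β}(B(θ,r))` where `B(θ,r) = (θ−r, θ+r) ∩ (0,π)`. -/
def ballMeasure (α β θ r : ℝ) : ℝ≥0∞ := jacobiMeasurePlus α β (Ioo (θ - r) (θ + r))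

/-- The Muckenhoupt class `A_p^{α,β}` (`1 < p < ∞`) on `(−π,π)` w.r.t. `μ_{α,β}`. -/
def IsApWeight (α β p : ℝ) (w : ℝ → ℝ) : Prop :=
  (∀ θ, 0 ≤ w θ) ∧
    ∃ C : ℝ, ∀ a b : ℝ, -π ≤ a → a ≤ b → b ≤ π →
      (∫⁻ θ in Ioo a b, ENNReal.ofReal (w θ) ∂(jacobiMeasure α β)) *
          (∫⁻ θ in Ioo a b, ENNReal.ofReal (w θ ^ (-1 / (p - 1))) ∂(jacobiMeasure α β)) ^
            (p - 1) ≤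
        ENNReal.ofReal C * jacobiMeasure α β (Ioo a b) ^ p

/-- The Muckenhoupt class `A_1^{α,β}` on `(−π,π)` w.r.t. `μ_{α,β}`. -/
def IsA1Weight (α β : ℝ) (w : ℝ → ℝ) : Prop :=
  (∀ θ, 0 ≤ w θ) ∧
    ∃ C : ℝ, ∀ a b : ℝ, -π ≤ a → a ≤ b → b ≤ π →
      ∫⁻ θ in Ioo a b, ENNReal.ofReal (w θ) ∂(jacobiMeasure α β) ≤
        ENNReal.ofReal C *
          essInf (fun θ => ENNReal.ofReal (w θ)) ((jacobiMeasure α β).restrict (Ioo a b)) *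
          jacobiMeasure α β (Ioo a b)

/-- The Muckenhoupt class `(A_p^{α,β})⁺` (`1 < p < ∞`) on `(0,π)` w.r.t. `μ⁺_{α,β}`. -/
def IsApWeightPlus (α β p : ℝ) (w : ℝ → ℝ) : Prop :=
  (∀ θ, 0 ≤ w θ) ∧
    ∃ C : ℝ, ∀ a b : ℝ, 0 ≤ a → a ≤ b → b ≤ π →
      (∫⁻ θ in Ioo a b, ENNReal.ofReal (w θ) ∂(jacobiMeasurePlus α β)) *
          (∫⁻ θ in Ioo a b, ENNReal.ofReal (w θ ^ (-1 / (p - 1))) ∂(jacobiMeasurePlus α β)) ^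
            (p - 1) ≤
        ENNReal.ofReal C * jacobiMeasurePlus α β (Ioo a b) ^ p

/-- The Muckenhoupt class `(A_1^{α,β})⁺` on `(0,π)` w.r.t. `μ⁺_{α,β}`. -/
def IsA1WeightPlus (α β : ℝ) (w : ℝ → ℝ) : Prop :=
  (∀ θ, 0 ≤ w θ) ∧
    ∃ C : ℝ, ∀ a b : ℝ, 0 ≤ a → a ≤ b → b ≤ π →
      ∫⁻ θ in Ioo a b, ENNReal.ofReal (w θ) ∂(jacobiMeasurePlus α β) ≤
        ENNReal.ofReal C *
          essInf (fun θ => ENNReal.ofReal (w θ)) ((jacobiMeasurePlus α β).restrict (Ioo a b)) *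
          jacobiMeasurePlus α β (Ioo a b)

/-- The double power weight `w_{r,s}(θ) = |sin(θ/2)|^r (cos(θ/2))^s`. -/
def wrs (r s θ : ℝ) : ℝ := |Real.sin (θ / 2)| ^ r * Real.cos (θ / 2) ^ s


/-- The Laplace-transform-type multiplier kernel `M̃_φ^{α,β}(θ,ψ)`. -/
def lapKer (α β : ℝ) (φfun : ℝ → ℝ) (θ ψ : ℝ) : ℝ :=
  -∫ t in Ioi (0 : ℝ), deriv (fun s => jHtil α β s θ ψ) t * φfun t


namespace JacobiPoisson

/-!
Put `a = α + 1` and `b = β + 1`. Bailey's terminating Appell series `F₄` is an eigenfunction of the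
Jacobi operator in each of two angles, hence factors as a product of two Jacobi polynomials. Read
through a beta integral this is a product formula, and summing it against the explicit norms turns
the Poisson kernel of parameters `(a, b)` into a constant times the integral of
`sinh (t / 2) * (cosh (t / 2) - w) ^ (-(a + b + 2))` against `sin ^ (2 * a)` and `sin ^ (2 * b)`,
where `w` is a bilinear form in the half angles. All terms being positive, the `t`-derivative and
its increments in `θ` are bounded pointwise; integrating out the two auxiliary angles produces the
volume factor, integrating out `t` the inverse distance, and the two factors `sin θ` and `sin φ`
compensate the shift of the parameters when the volume factor is compared with the measure of the
ball.
-/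

section JacobiPolynomials

open Polynomial

/-- The rising factorial `(x)_m = x (x + 1) ⋯ (x + m - 1)`. -/
def poch (x : ℝ) (m : ℕ) : ℝ := (ascPochhammer ℝ m).eval x

@[simp]
lemma poch_zero (x : ℝ) : poch x 0 = 1 := by simp [poch]

lemma poch_succ (x : ℝ) (m : ℕ) : poch x (m + 1) = poch x m * (x + m) :=
  ascPochhammer_succ_eval m x

lemma poch_succ_left (x : ℝ) (m : ℕ) : poch x (m + 1) = x * poch (x + 1) m := by
  simp [poch, ascPochhammer_succ_left]

lemma poch_add (x : ℝ) (m n : ℕ) : poch x (m + n) = poch x m * poch (x + m) n := by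
  simp [poch, ← ascPochhammer_mul]

lemma poch_pos {x : ℝ} (hx : 0 < x) (m : ℕ) : 0 < poch x m :=
  ascPochhammer_pos m x hx

lemma poch_neg_natCast_of_lt {n k : ℕ} (h : n < k) : poch (-(n : ℝ)) k = 0 :=
  ascPochhammer_eval_neg_coe_nat_of_lt h

/-- The product `(-n)_k (n + a + b + 1)_k` of the first `k` gaps between the eigenvalues
`i (i + a + b + 1)` and `n (n + a + b + 1)` of the Jacobi operator. -/
def eigenGapProd (a b : ℝ) (n k : ℕ) : ℝ := poch (-(n : ℝ)) k * poch (n + a + b + 1) k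

@[simp]
lemma eigenGapProd_zero (a b : ℝ) (n : ℕ) : eigenGapProd a b n 0 = 1 := by simp [eigenGapProd]

lemma eigenGapProd_succ (a b : ℝ) (n k : ℕ) : eigenGapProd a b n (k + 1) =
    (k * (k + a + b + 1) - n * (n + a + b + 1)) * eigenGapProd a b n k := by
  simp only [eigenGapProd, poch_succ]
  ring

lemma eigenGapProd_eq_zero_of_lt (a b : ℝ) {n k : ℕ} (h : n < k) : eigenGapProd a b n k = 0 := by
  simp [eigenGapProd, poch_neg_natCast_of_lt h]

/-- The `j`-th term `u ^ j / (j! (a + 1)_j)` of the series `₀F₁(; a + 1; u)`. -/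
def hyp01Term (a u : ℝ) (j : ℕ) : ℝ := u ^ j / (j.factorial * poch (a + 1) j)

@[simp]
lemma hyp01Term_zero (a u : ℝ) : hyp01Term a u 0 = 1 := by simp [hyp01Term]

lemma hyp01Term_succ {a : ℝ} (ha : -1 < a) (u : ℝ) (j : ℕ) :
    ((j : ℝ) + 1) * (j + 1 + a) * hyp01Term a u (j + 1) = u * hyp01Term a u j := by
  have hpoch : poch (a + 1) j ≠ 0 := (poch_pos (by linarith) j).ne'
  have hja : a + 1 + j ≠ 0 := by linarith [j.cast_nonneg (α := ℝ)]
  simp only [hyp01Term, poch_succ, Nat.factorial_succ]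
  push_cast
  field_simp
  ring

lemma hyp01Term_mul (a u v : ℝ) (j : ℕ) : hyp01Term a (u * v) j = hyp01Term a u j * v ^ j := by
  simp only [hyp01Term, mul_pow]
  ring

lemma hyp01Term_zero_right (a : ℝ) {j : ℕ} (hj : j ≠ 0) : hyp01Term a 0 j = 0 := by
  simp [hyp01Term, hj]

/-- The Jacobi polynomial in the hypergeometric normalization `₂F₁(-n, n + a + b + 1; a + 1; X)`,
so that `X` stands for `(1 - cos θ) / 2 = sin² (θ / 2)` and the value at `X = 0` is `1`. -/
def jacobiPoly (a b : ℝ) (n : ℕ) : ℝ[X] :=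
  ∑ m ∈ Finset.range (n + 1), C (eigenGapProd a b n m * hyp01Term a 1 m) * X ^ m

lemma coeff_jacobiPoly (a b : ℝ) (n m : ℕ) :
    (jacobiPoly a b n).coeff m = eigenGapProd a b n m * hyp01Term a 1 m := by
  simp only [jacobiPoly, finsetSum_coeff, coeff_C_mul_X_pow, Finset.sum_ite_eq, Finset.mem_range]
  split_ifs with h
  · rfl
  · rw [eigenGapProd_eq_zero_of_lt a b (by omega), zero_mul]

lemma coeff_jacobiPoly_succ {a : ℝ} (ha : -1 < a) (b : ℝ) (n m : ℕ) :
    ((m : ℝ) + 1) * (m + a + 1) * (jacobiPoly a b n).coeff (m + 1) =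
      (m * (m + a + b + 1) - n * (n + a + b + 1)) * (jacobiPoly a b n).coeff m := by
  rw [coeff_jacobiPoly, coeff_jacobiPoly, eigenGapProd_succ]
  linear_combination (m * (m + a + b + 1) - n * (n + a + b + 1)) * eigenGapProd a b n m *
    hyp01Term_succ ha 1 m

lemma eval_zero_jacobiPoly (a b : ℝ) (n : ℕ) : (jacobiPoly a b n).eval 0 = 1 := by
  simp [← coeff_zero_eq_eval_zero, coeff_jacobiPoly]

lemma jacobiPoly_zero (a b : ℝ) : jacobiPoly a b 0 = 1 := by simp [jacobiPoly]

/-- The Jacobi (hypergeometric) operator `X (1 - X) ∂² + (a + 1 - (a + b + 2) X) ∂`. -/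
def jacobiOp (a b : ℝ) : ℝ[X] →ₗ[ℝ] ℝ[X] :=
  LinearMap.mulLeft ℝ (X * (1 - X)) ∘ₗ derivative ∘ₗ derivative +
    LinearMap.mulLeft ℝ (C (a + 1) - C (a + b + 2) * X) ∘ₗ derivative

lemma jacobiOp_apply (a b : ℝ) (f : ℝ[X]) : jacobiOp a b f =
    X * (1 - X) * derivative (derivative f) + (C (a + 1) - C (a + b + 2) * X) * derivative f :=
  rfl

lemma coeff_jacobiOp (a b : ℝ) (f : ℝ[X]) (m : ℕ) : (jacobiOp a b f).coeff m =
    (m + 1) * (m + a + 1) * f.coeff (m + 1) - m * (m + a + b + 1) * f.coeff m := by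
  have h_expand : jacobiOp a b f =
      X * derivative (derivative f) - X * (X * derivative (derivative f)) +
        C (a + 1) * derivative f - C (a + b + 2) * (X * derivative f) := by
    rw [jacobiOp_apply]
    ring
  rw [h_expand]
  simp only [coeff_add, coeff_sub, coeff_C_mul]
  rcases m with _ | _ | m
  · simp [coeff_derivative]
  · simp [coeff_derivative, coeff_X_mul]
    ring
  · simp [coeff_derivative, coeff_X_mul]
    ring

lemma jacobiOp_jacobiPoly {a : ℝ} (ha : -1 < a) (b : ℝ) (n : ℕ) :
    jacobiOp a b (jacobiPoly a b n) = -((n : ℝ) * (n + a + b + 1)) • jacobiPoly a b n := by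
  ext m
  rw [coeff_jacobiOp, coeff_smul, smul_eq_mul]
  linear_combination coeff_jacobiPoly_succ ha b n m

lemma eq_smul_jacobiPoly_of_jacobiOp_eq {a b : ℝ} (ha : -1 < a) {n : ℕ} {f : ℝ[X]}
    (hf : jacobiOp a b f = -((n : ℝ) * (n + a + b + 1)) • f) :
    f = f.eval 0 • jacobiPoly a b n := by
  ext m
  rw [coeff_smul, smul_eq_mul, ← coeff_zero_eq_eval_zero]
  induction m with
  | zero => simp [coeff_jacobiPoly]
  | succ m ih =>
    have hm : ((m : ℝ) + 1) * (m + a + 1) ≠ 0 := by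
      have : 0 < (m : ℝ) + a + 1 := by linarith [m.cast_nonneg (α := ℝ)]
      positivity
    have hcoeff := congrArg (coeff · m) hf
    simp only [coeff_jacobiOp, coeff_smul, smul_eq_mul] at hcoeff
    refine mul_left_cancel₀ hm ?_
    linear_combination hcoeff - f.coeff 0 * coeff_jacobiPoly_succ ha b n m +
      (m * (m + a + b + 1) - n * (n + a + b + 1)) * ih

lemma derivative_jacobiPoly_succ {a : ℝ} (ha : -1 < a) (b : ℝ) (n : ℕ) :
    derivative (jacobiPoly a b (n + 1)) =
      -(((n : ℝ) + 1) * (n + a + b + 2) / (a + 1)) • jacobiPoly (a + 1) (b + 1) n := by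
  ext m
  have hpoch : poch (a + 1 + 1) m ≠ 0 := (poch_pos (by linarith) m).ne'
  have ha' : a + 1 ≠ 0 := by linarith
  simp only [coeff_derivative, coeff_smul, smul_eq_mul, coeff_jacobiPoly, eigenGapProd, hyp01Term,
    poch_succ_left, Nat.factorial_succ]
  push_cast
  rw [show -((n : ℝ) + 1) + 1 = -n by ring,
    show (n : ℝ) + 1 + a + b + 1 + 1 = n + (a + 1) + (b + 1) + 1 by ring]
  field_simp
  simp
  ring

end JacobiPolynomials

/-! ### The product formula -/

section ProductFormula

open Polynomial Finset.HasAntidiagonal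

lemma X_mul_derivative_X_pow (j : ℕ) : X * derivative (X ^ j : ℝ[X]) = (j : ℝ[X]) * X ^ j := by
  cases j with
  | zero => simp
  | succ j =>
    rw [derivative_X_pow_succ]
    simp only [C_add, C_1, map_natCast, Nat.cast_succ]
    ring

lemma one_sub_X_mul_derivative_one_sub_X_pow (l : ℕ) :
    (1 - X) * derivative ((1 - X) ^ l : ℝ[X]) = -((l : ℝ[X]) * (1 - X) ^ l) := by
  have h := congrArg (fun p : ℝ[X] => p.comp (1 - X)) (X_mul_derivative_X_pow l)
  have hcomp : ((1 - X) ^ l : ℝ[X]) = (X ^ l).comp (1 - X) := by simp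
  rw [hcomp, derivative_comp]
  simp only [mul_comp, X_comp, natCast_comp, derivative_sub, derivative_one, derivative_X] at h ⊢
  linear_combination -h

lemma jacobiOp_mul_of_euler (a b : ℝ) {p q : ℝ} {u v : ℝ[X]}
    (hu : X * derivative u = C p * u) (hv : (1 - X) * derivative v = -(C q * v)) :
    jacobiOp a b (u * v) = (p + a) • (derivative u * v) - (q + b) • (u * derivative v) -
      ((p + q) * (p + q + a + b + 1)) • (u * v) := by
  have hu' := congrArg derivative hu
  have hv' := congrArg derivative hv
  simp only [derivative_mul, derivative_sub, derivative_one, derivative_X, derivative_C,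
    derivative_neg] at hu' hv'
  simp only [jacobiOp_apply, derivative_mul, derivative_add, smul_eq_C_mul, C_add, C_mul, C_1]
  rw [show (C (2 : ℝ)) = 2 from rfl]
  linear_combination (1 - X) * v * hu' + X * u * hv' +
    (2 * (1 - X) * derivative v - (1 + C a + C b + C p) * v) * hu +
    (1 + C a + C b + C q + 2 * C p) * u * hv

lemma jacobiOp_X_pow_mul_one_sub_X_pow (a b : ℝ) (j l : ℕ) :
    jacobiOp a b (X ^ j * (1 - X) ^ l) =
      ((j : ℝ) * (j + a)) • (X ^ (j - 1) * (1 - X) ^ l) +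
        ((l : ℝ) * (l + b)) • (X ^ j * (1 - X) ^ (l - 1)) -
        (((j : ℝ) + l) * (j + l + a + b + 1)) • (X ^ j * (1 - X) ^ l) := by
  rw [jacobiOp_mul_of_euler a b (p := j) (q := l) (by simp [X_mul_derivative_X_pow])
    (by simp [one_sub_X_mul_derivative_one_sub_X_pow])]
  simp [derivative_pow, smul_eq_C_mul]
  ring

/-- The homogeneous part of degree `k`, in the variables `x y` and `(1 - x) (1 - y)`, of the series
defining Appell's function `F₄`, with the Pochhammer symbols in its numerator removed. -/
def appellLayer (a b x y : ℝ) (k : ℕ) : ℝ :=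
  ∑ p ∈ antidiagonal k, hyp01Term a (x * y) p.1 * hyp01Term b ((1 - x) * (1 - y)) p.2

/-- `appellLayer` as a polynomial in its first variable. -/
def appellLayerPoly (a b y : ℝ) (k : ℕ) : ℝ[X] :=
  ∑ p ∈ antidiagonal k,
    (hyp01Term a y p.1 * hyp01Term b (1 - y) p.2) • (X ^ p.1 * (1 - X) ^ p.2)

lemma eval_appellLayerPoly (a b x y : ℝ) (k : ℕ) :
    (appellLayerPoly a b y k).eval x = appellLayer a b x y k := by
  simp only [appellLayerPoly, appellLayer, eval_finsetSum]
  refine Finset.sum_congr rfl fun p _ => ?_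
  rw [mul_comm x, mul_comm (1 - x), hyp01Term_mul, hyp01Term_mul]
  simp
  ring

lemma appellLayer_comm (a b x y : ℝ) (k : ℕ) : appellLayer a b x y k = appellLayer a b y x k := by
  simp only [appellLayer, mul_comm x y, mul_comm (1 - x) (1 - y)]

lemma appellLayer_zero (a b x y : ℝ) : appellLayer a b x y 0 = 1 := by
  simp [appellLayer]

lemma appellLayerPoly_zero (a b y : ℝ) : appellLayerPoly a b y 0 = 1 := by
  simp [appellLayerPoly]

lemma jacobiOp_appellLayerPoly_succ {a b : ℝ} (ha : -1 < a) (hb : -1 < b) (y : ℝ) (k : ℕ) :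
    jacobiOp a b (appellLayerPoly a b y (k + 1)) = appellLayerPoly a b y k -
      (((k : ℝ) + 1) * (k + 1 + a + b + 1)) • appellLayerPoly a b y (k + 1) := by
  set c : ℕ × ℕ → ℝ := fun p => hyp01Term a y p.1 * hyp01Term b (1 - y) p.2
  have h_lower_left : ∑ p ∈ antidiagonal (k + 1),
      (c p * (p.1 * (p.1 + a))) • (X ^ (p.1 - 1) * (1 - X) ^ p.2 : ℝ[X]) =
        y • appellLayerPoly a b y k := by
    rw [Finset.Nat.sum_antidiagonal_succ, appellLayerPoly, Finset.smul_sum]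
    simp only [CharP.cast_eq_zero, zero_mul, mul_zero, zero_smul, zero_add, smul_smul]
    refine Finset.sum_congr rfl fun p _ => ?_
    congr 1
    push_cast
    linear_combination hyp01Term b (1 - y) p.2 * hyp01Term_succ ha y p.1
  have h_lower_right : ∑ p ∈ antidiagonal (k + 1),
      (c p * (p.2 * (p.2 + b))) • (X ^ p.1 * (1 - X) ^ (p.2 - 1) : ℝ[X]) =
        (1 - y) • appellLayerPoly a b y k := by
    rw [Finset.Nat.sum_antidiagonal_succ', appellLayerPoly, Finset.smul_sum]
    simp only [CharP.cast_eq_zero, zero_mul, mul_zero, zero_smul, zero_add, smul_smul]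
    refine Finset.sum_congr rfl fun p _ => ?_
    congr 1
    push_cast
    linear_combination hyp01Term a y p.1 * hyp01Term_succ hb (1 - y) p.2
  have h_termwise : jacobiOp a b (appellLayerPoly a b y (k + 1)) =
      ∑ p ∈ antidiagonal (k + 1),
        ((c p * (p.1 * (p.1 + a))) • (X ^ (p.1 - 1) * (1 - X) ^ p.2) +
          (c p * (p.2 * (p.2 + b))) • (X ^ p.1 * (1 - X) ^ (p.2 - 1)) -
          (((k : ℝ) + 1) * (k + 1 + a + b + 1)) • c p • (X ^ p.1 * (1 - X) ^ p.2)) := by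
    rw [appellLayerPoly, map_sum]
    refine Finset.sum_congr rfl fun p hp => ?_
    have hsum : (p.1 : ℝ) + p.2 = k + 1 := mod_cast mem_antidiagonal.1 hp
    rw [map_smul, jacobiOp_X_pow_mul_one_sub_X_pow, hsum]
    module
  rw [h_termwise, Finset.sum_sub_distrib, Finset.sum_add_distrib, h_lower_left, h_lower_right,
    ← Finset.smul_sum, ← appellLayerPoly]
  module

/-- Appell's terminating function `F₄(-n, n + a + b + 1; a + 1, b + 1; x y, (1 - x) (1 - y))`. -/
def appellF4 (a b : ℝ) (n : ℕ) (x y : ℝ) : ℝ :=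
  ∑ k ∈ Finset.range (n + 1), eigenGapProd a b n k * appellLayer a b x y k

/-- `appellF4` as a polynomial in its first variable. -/
def appellF4Poly (a b y : ℝ) (n : ℕ) : ℝ[X] :=
  ∑ k ∈ Finset.range (n + 1), eigenGapProd a b n k • appellLayerPoly a b y k

lemma eval_appellF4Poly (a b x y : ℝ) (n : ℕ) :
    (appellF4Poly a b y n).eval x = appellF4 a b n x y := by
  simp [appellF4Poly, appellF4, eval_finsetSum, eval_appellLayerPoly]

lemma appellF4_comm (a b x y : ℝ) (n : ℕ) : appellF4 a b n x y = appellF4 a b n y x := by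
  simp only [appellF4, appellLayer_comm a b x y]

lemma jacobiOp_appellF4Poly {a b : ℝ} (ha : -1 < a) (hb : -1 < b) (y : ℝ) (n : ℕ) :
    jacobiOp a b (appellF4Poly a b y n) =
      -((n : ℝ) * (n + a + b + 1)) • appellF4Poly a b y n := by
  have h_partial (N : ℕ) :
      ∑ k ∈ Finset.range (N + 1), eigenGapProd a b n k • jacobiOp a b (appellLayerPoly a b y k) =
        -((n : ℝ) * (n + a + b + 1)) •
          (∑ k ∈ Finset.range (N + 1), eigenGapProd a b n k • appellLayerPoly a b y k) -
          eigenGapProd a b n (N + 1) • appellLayerPoly a b y N := by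
    induction N with
    | zero => simp [appellLayerPoly_zero, jacobiOp_apply, eigenGapProd_succ]
    | succ N ih =>
      rw [Finset.sum_range_succ, ih, Finset.sum_range_succ _ (N + 1),
        jacobiOp_appellLayerPoly_succ ha hb, eigenGapProd_succ a b n (N + 1)]
      push_cast
      module
  simp only [appellF4Poly, map_sum, map_smul]
  rw [h_partial, eigenGapProd_eq_zero_of_lt a b n.lt_succ_self, zero_smul, sub_zero]

lemma appellF4_eq_mul_jacobiPoly {a b : ℝ} (ha : -1 < a) (hb : -1 < b) (n : ℕ) (x y : ℝ) :
    appellF4 a b n x y = appellF4 a b n 0 y * (jacobiPoly a b n).eval x := by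
  rw [← eval_appellF4Poly, eq_smul_jacobiPoly_of_jacobiOp_eq ha (jacobiOp_appellF4Poly ha hb y n),
    eval_smul, eval_appellF4Poly, smul_eq_mul]

lemma appellF4_zero_one (a b : ℝ) (n : ℕ) : appellF4 a b n 0 1 = 1 := by
  have h_layer {k : ℕ} (hk : k ≠ 0) : appellLayer a b 0 1 k = 0 := by
    refine Finset.sum_eq_zero fun p hp => ?_
    have hne : p.1 ≠ 0 ∨ p.2 ≠ 0 := by
      have := mem_antidiagonal.1 hp
      omega
    rcases hne with h | h <;> simp [hyp01Term_zero_right _ h]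
  rw [appellF4, Finset.sum_eq_single 0]
  · simp [appellLayer_zero]
  · exact fun k _ hk => by rw [h_layer hk, mul_zero]
  · simp

lemma jacobiPoly_one_mul_appellF4 {a b : ℝ} (ha : -1 < a) (hb : -1 < b) (n : ℕ) (x y : ℝ) :
    (jacobiPoly a b n).eval 1 * appellF4 a b n x y =
      (jacobiPoly a b n).eval x * (jacobiPoly a b n).eval y := by
  have h_zero (y : ℝ) : appellF4 a b n 0 y = appellF4 a b n 0 0 * (jacobiPoly a b n).eval y := by
    rw [appellF4_comm, appellF4_eq_mul_jacobiPoly ha hb]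
  have h_one := appellF4_zero_one a b n
  rw [h_zero] at h_one
  rw [appellF4_eq_mul_jacobiPoly ha hb, h_zero]
  linear_combination (jacobiPoly a b n).eval x * (jacobiPoly a b n).eval y * h_one

lemma eval_one_jacobiPoly_succ {a b : ℝ} (ha : -1 < a) (hb : -1 < b) (n : ℕ) :
    (jacobiPoly a b (n + 1)).eval 1 =
      -((b + 1) / (a + 1)) * (jacobiPoly (a + 1) (b + 1) n).eval 1 := by
  have hgap : ((n : ℝ) + 1) * (n + a + b + 2) ≠ 0 := by
    have : 0 < (n : ℝ) + a + b + 2 := by linarith [n.cast_nonneg (α := ℝ)]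
    positivity
  have ha' : a + 1 ≠ 0 := by linarith
  have h_eigen := congrArg (eval 1) (jacobiOp_jacobiPoly ha b (n + 1))
  simp only [jacobiOp_apply, derivative_jacobiPoly_succ ha, eval_add, eval_mul, eval_sub, eval_X,
    eval_one, eval_C, eval_smul, smul_eq_mul, sub_self, mul_zero, zero_mul, zero_add,
    Nat.cast_add, Nat.cast_one] at h_eigen
  refine mul_left_cancel₀ hgap ?_
  field_simp at h_eigen ⊢
  linear_combination h_eigen

lemma eval_one_jacobiPoly (n : ℕ) {a b : ℝ} (ha : -1 < a) (hb : -1 < b) :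
    (jacobiPoly a b n).eval 1 = (-1) ^ n * (poch (b + 1) n / poch (a + 1) n) := by
  induction n generalizing a b with
  | zero => simp [jacobiPoly_zero]
  | succ n ih =>
    have ha1 : a + 1 ≠ 0 := by linarith
    have hpoch := (poch_pos (x := a + 1 + 1) (by linarith) n).ne'
    rw [eval_one_jacobiPoly_succ ha hb, ih (by linarith) (by linarith), poch_succ_left,
      poch_succ_left, pow_succ]
    field_simp

end ProductFormula

/-! ### The norms of the Jacobi polynomials -/

section JacobiIntegral

open Polynomial

lemma sin_half_nonneg {θ : ℝ} (hθ : θ ∈ Icc 0 π) : 0 ≤ sin (θ / 2) :=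
  sin_nonneg_of_nonneg_of_le_pi (by linarith [hθ.1]) (by linarith [hθ.2, pi_pos])

lemma cos_half_nonneg {θ : ℝ} (hθ : θ ∈ Icc 0 π) : 0 ≤ cos (θ / 2) :=
  cos_nonneg_of_mem_Icc ⟨by linarith [hθ.1, pi_pos], by linarith [hθ.2]⟩

lemma sin_half_pos {θ : ℝ} (hθ : θ ∈ Ioo 0 π) : 0 < sin (θ / 2) :=
  sin_pos_of_pos_of_lt_pi (by linarith [hθ.1]) (by linarith [hθ.2, pi_pos])

lemma cos_half_pos {θ : ℝ} (hθ : θ ∈ Ioo 0 π) : 0 < cos (θ / 2) :=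
  cos_pos_of_mem_Ioo ⟨by linarith [hθ.1, pi_pos], by linarith [hθ.2]⟩

/-- The Jacobi weight `sin (θ / 2) ^ (2 a + 1) cos (θ / 2) ^ (2 b + 1)`, which is the density of
`jacobiMeasurePlus a b` on `(0, π)`. -/
def jacobiWeight (a b θ : ℝ) : ℝ := sin (θ / 2) ^ (2 * a + 1) * cos (θ / 2) ^ (2 * b + 1)

/-- The integral over `(0, π)` of a polynomial in `sin² (θ / 2)` against the Jacobi weight. -/
def jacobiIntegral (a b : ℝ) (f : ℝ[X]) : ℝ :=
  ∫ θ in (0 : ℝ)..π, jacobiWeight a b θ * f.eval (sin (θ / 2) ^ 2)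

lemma jacobiWeight_pos (a b : ℝ) {θ : ℝ} (hθ : θ ∈ Ioo 0 π) : 0 < jacobiWeight a b θ :=
  mul_pos (rpow_pos_of_pos (sin_half_pos hθ) _) (rpow_pos_of_pos (cos_half_pos hθ) _)

lemma jacobiWeight_add_one {a b : ℝ} (ha : -1 / 2 ≤ a) (hb : -1 / 2 ≤ b) {θ : ℝ}
    (hθ : θ ∈ Icc 0 π) : jacobiWeight (a + 1) (b + 1) θ =
      jacobiWeight a b θ * (sin (θ / 2) ^ 2 * cos (θ / 2) ^ 2) := by
  have h_sin : sin (θ / 2) ^ (2 * (a + 1) + 1) = sin (θ / 2) ^ (2 * a + 1) * sin (θ / 2) ^ 2 := by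
    rw [← rpow_add_natCast' (sin_half_nonneg hθ) (by push_cast; linarith)]
    push_cast
    ring_nf
  have h_cos : cos (θ / 2) ^ (2 * (b + 1) + 1) = cos (θ / 2) ^ (2 * b + 1) * cos (θ / 2) ^ 2 := by
    rw [← rpow_add_natCast' (cos_half_nonneg hθ) (by push_cast; linarith)]
    push_cast
    ring_nf
  rw [jacobiWeight, jacobiWeight, h_sin, h_cos]
  ring

lemma jacobiIntegral_smul (a b c : ℝ) (f : ℝ[X]) :
    jacobiIntegral a b (c • f) = c * jacobiIntegral a b f := by
  rw [jacobiIntegral, jacobiIntegral, ← intervalIntegral.integral_const_mul]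
  congr 1
  ext θ
  simp
  ring

section

variable {a b : ℝ} (ha : -1 / 2 ≤ a) (hb : -1 / 2 ≤ b)
include ha hb

lemma continuous_jacobiWeight : Continuous (jacobiWeight a b) :=
  (Continuous.rpow_const (by fun_prop) fun _ => Or.inr (by linarith)).mul
    (Continuous.rpow_const (by fun_prop) fun _ => Or.inr (by linarith))

lemma intervalIntegrable_jacobiWeight_mul_eval (f : ℝ[X]) (c d : ℝ) :
    IntervalIntegrable (fun θ => jacobiWeight a b θ * f.eval (sin (θ / 2) ^ 2)) volume c d :=
  ((continuous_jacobiWeight ha hb).mul (f.continuous.comp (by fun_prop))).intervalIntegrable c d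

lemma jacobiIntegral_add (f g : ℝ[X]) :
    jacobiIntegral a b (f + g) = jacobiIntegral a b f + jacobiIntegral a b g := by
  rw [jacobiIntegral, jacobiIntegral, jacobiIntegral, ← intervalIntegral.integral_add
    (intervalIntegrable_jacobiWeight_mul_eval ha hb f 0 π)
    (intervalIntegrable_jacobiWeight_mul_eval ha hb g 0 π)]
  simp [mul_add]

lemma hasDerivAt_jacobiWeight_primitive (h : ℝ[X]) {θ : ℝ} (hθ : θ ∈ Icc 0 π) :
    HasDerivAt
      (fun θ => sin (θ / 2) ^ (2 * a + 2) * cos (θ / 2) ^ (2 * b + 2) * h.eval (sin (θ / 2) ^ 2))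
      (jacobiWeight a b θ * ((C (a + 1) - C (a + b + 2) * X) * h +
        X * (1 - X) * derivative h).eval (sin (θ / 2) ^ 2)) θ := by
  have d_half : HasDerivAt (fun θ : ℝ => θ / 2) (1 / 2) θ := (hasDerivAt_id θ).div_const 2
  have d_sin := d_half.sin.rpow_const (p := 2 * a + 2) (Or.inr (by linarith))
  have d_cos := d_half.cos.rpow_const (p := 2 * b + 2) (Or.inr (by linarith))
  have d_eval := (h.hasDerivAt (sin (θ / 2) ^ 2)).comp θ (d_half.sin.fun_pow 2)
  refine ((d_sin.fun_mul d_cos).fun_mul d_eval).congr_deriv ?_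
  have h_sin : sin (θ / 2) ^ (2 * a + 2) = sin (θ / 2) ^ (2 * a + 1) * sin (θ / 2) := by
    rw [← rpow_add_one' (sin_half_nonneg hθ) (by linarith)]
    ring_nf
  have h_cos : cos (θ / 2) ^ (2 * b + 2) = cos (θ / 2) ^ (2 * b + 1) * cos (θ / 2) := by
    rw [← rpow_add_one' (cos_half_nonneg hθ) (by linarith)]
    ring_nf
  have h_sq : cos (θ / 2) ^ 2 = 1 - sin (θ / 2) ^ 2 := cos_sq' (θ / 2)
  simp only [eval_add, eval_mul, eval_C, eval_sub, eval_one, eval_X, jacobiWeight,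
    Function.comp_apply]
  rw [show 2 * a + 2 - 1 = 2 * a + 1 by ring, show 2 * b + 2 - 1 = 2 * b + 1 by ring, h_sin, h_cos]
  push_cast
  generalize sin (θ / 2) ^ (2 * a + 1) = s
  generalize cos (θ / 2) ^ (2 * b + 1) = c
  linear_combination (s * c * ((a + 1) * h.eval (sin (θ / 2) ^ 2) +
    sin (θ / 2) ^ 2 * (derivative h).eval (sin (θ / 2) ^ 2))) * h_sq

lemma jacobiIntegral_derivative_eq_zero (h : ℝ[X]) :
    jacobiIntegral a b
      ((C (a + 1) - C (a + b + 2) * X) * h + X * (1 - X) * derivative h) = 0 := by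
  rw [jacobiIntegral, intervalIntegral.integral_eq_sub_of_hasDerivAt
    (fun θ hθ => hasDerivAt_jacobiWeight_primitive ha hb h (uIcc_of_le pi_pos.le ▸ hθ))
    (intervalIntegrable_jacobiWeight_mul_eval ha hb _ 0 π), cos_pi_div_two, zero_div, sin_zero,
    zero_rpow (by linarith), zero_rpow (by linarith)]
  simp

lemma jacobiIntegral_jacobiOp_mul (f g : ℝ[X]) :
    jacobiIntegral a b (jacobiOp a b f * g) =
      -jacobiIntegral a b (X * (1 - X) * (derivative f * derivative g)) := by
  rw [eq_neg_iff_add_eq_zero, ← jacobiIntegral_add ha hb,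
    ← jacobiIntegral_derivative_eq_zero ha hb (derivative f * g), jacobiOp_apply]
  congr 1
  simp only [derivative_mul]
  ring

lemma jacobiIntegral_add_one (f : ℝ[X]) :
    jacobiIntegral (a + 1) (b + 1) f = jacobiIntegral a b (X * (1 - X) * f) := by
  refine intervalIntegral.integral_congr fun θ hθ => ?_
  rw [uIcc_of_le pi_pos.le] at hθ
  simp only [jacobiWeight_add_one ha hb hθ, eval_mul, eval_sub, eval_one, eval_X, ← cos_sq']
  ring

lemma jacobiIntegral_one_pos : 0 < jacobiIntegral a b 1 := by
  refine intervalIntegral.intervalIntegral_pos_of_pos_on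
    (intervalIntegrable_jacobiWeight_mul_eval ha hb 1 0 π) (fun θ hθ => ?_) pi_pos
  simpa using jacobiWeight_pos a b hθ

lemma jacobiIntegral_add_one_one :
    jacobiIntegral (a + 1) (b + 1) 1 =
      (a + 1) * (b + 1) / ((a + b + 2) * (a + b + 3)) * jacobiIntegral a b 1 := by
  have h_parts (h p q : ℝ[X]) (c d : ℝ) (hpq : (C (a + 1) - C (a + b + 2) * X) * h +
      X * (1 - X) * derivative h = c • p + d • q) :
      c * jacobiIntegral a b p + d * jacobiIntegral a b q = 0 := by
    rw [← jacobiIntegral_smul, ← jacobiIntegral_smul, ← jacobiIntegral_add ha hb, ← hpq,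
      jacobiIntegral_derivative_eq_zero ha hb]
  have h_first := h_parts 1 1 X (a + 1) (-(a + b + 2)) (by simp [smul_eq_C_mul]; ring)
  have h_second := h_parts X X (X * X) (a + 2) (-(a + b + 3)) (by
    simp only [smul_eq_C_mul, derivative_X, C_add, C_neg, C_1]
    rw [show (C (2 : ℝ)) = 2 from rfl, show (C (3 : ℝ)) = 3 from rfl]
    ring)
  have h_shift : jacobiIntegral (a + 1) (b + 1) 1 =
      jacobiIntegral a b X - jacobiIntegral a b (X * X) := by
    rw [jacobiIntegral_add_one ha hb,
      show (X * (1 - X) * 1 : ℝ[X]) = X + (-1 : ℝ) • (X * X) by rw [neg_one_smul]; ring,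
      jacobiIntegral_add ha hb, jacobiIntegral_smul]
    ring
  have hab2 : a + b + 2 ≠ 0 := by linarith
  have hab3 : a + b + 3 ≠ 0 := by linarith
  rw [h_shift]
  field_simp
  linear_combination (a + b + 2) * h_second - (b + 1) * h_first

end

/-- The squared `L²(μ⁺)` norm of `jacobiPoly a b n`. -/
def jacobiNormSq (a b : ℝ) (n : ℕ) : ℝ := jacobiIntegral a b (jacobiPoly a b n * jacobiPoly a b n)

lemma jacobiNormSq_zero (a b : ℝ) : jacobiNormSq a b 0 = jacobiIntegral a b 1 := by
  simp [jacobiNormSq, jacobiPoly_zero]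

lemma jacobiNormSq_succ {a b : ℝ} (ha : -1 / 2 ≤ a) (hb : -1 / 2 ≤ b) (n : ℕ) :
    jacobiNormSq a b (n + 1) =
      (n + 1) * (n + a + b + 2) / (a + 1) ^ 2 * jacobiNormSq (a + 1) (b + 1) n := by
  have h_eigen :=
    jacobiIntegral_jacobiOp_mul ha hb (jacobiPoly a b (n + 1)) (jacobiPoly a b (n + 1))
  rw [jacobiOp_jacobiPoly (by linarith), derivative_jacobiPoly_succ (by linarith), smul_mul_smul,
    mul_smul_comm, smul_mul_assoc, jacobiIntegral_smul, jacobiIntegral_smul,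
    ← jacobiIntegral_add_one ha hb, ← jacobiNormSq, ← jacobiNormSq] at h_eigen
  have hgap : ((n : ℝ) + 1) * (n + a + b + 2) ≠ 0 := by
    have : 0 < (n : ℝ) + a + b + 2 := by linarith [n.cast_nonneg (α := ℝ)]
    positivity
  have ha' : a + 1 ≠ 0 := by linarith
  refine mul_left_cancel₀ hgap ?_
  push_cast at h_eigen
  field_simp at h_eigen ⊢
  linear_combination -h_eigen

lemma jacobiNormSq_eq (n : ℕ) {a b : ℝ} (ha : -1 / 2 < a) (hb : -1 / 2 < b) :
    jacobiNormSq a b n = (a + b + 1) * jacobiIntegral a b 1 *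
      (n.factorial * poch (b + 1) n / poch (a + 1) n) /
        ((2 * n + a + b + 1) * poch (a + b + 1) n) := by
  induction n generalizing a b with
  | zero =>
    have : a + b + 1 ≠ 0 := by linarith
    simp [jacobiNormSq_zero, mul_div_cancel_left₀ _ this]
  | succ n ih =>
    have hab1 : 0 < a + b + 1 := by linarith
    have hab2 : 0 < a + b + 2 := by linarith
    have hab3 : 0 < a + b + 3 := by linarith
    have ha1 : 0 < a + 1 := by linarith
    have hb1 : 0 < b + 1 := by linarith
    have hnab : 0 < n + a + b + 2 := by linarith
    have h_poch : 0 < poch (a + b + 3) n := poch_pos (by linarith) n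
    have h_pocha : 0 < poch (a + 1 + 1) n := poch_pos (by linarith) n
    have h_poch_succ : poch (a + b + 1) (n + 1) =
        (a + b + 1) * (a + b + 2) * poch (a + b + 3) n / (n + a + b + 2) := by
      have h_two : poch (a + b + 1) (n + 2) = (a + b + 1) * ((a + b + 2) * poch (a + b + 3) n) := by
        rw [poch_succ_left, poch_succ_left]
        ring_nf
      rw [poch_succ] at h_two
      push_cast at h_two
      rw [eq_div_iff hnab.ne']
      linear_combination h_two
    rw [jacobiNormSq_succ ha.le hb.le, ih (by linarith) (by linarith),
      jacobiIntegral_add_one_one ha.le hb.le, h_poch_succ, poch_succ_left (a + 1),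
      poch_succ_left (b + 1), Nat.factorial_succ, show a + 1 + (b + 1) + 1 = a + b + 3 by ring,
      show 2 * (n : ℝ) + (a + 1) + (b + 1) + 1 = 2 * n + a + b + 3 by ring,
      show 2 * ((n + 1 : ℕ) : ℝ) + a + b + 1 = 2 * n + a + b + 3 by push_cast; ring]
    push_cast
    field_simp

lemma jacobiNormSq_pos {a b : ℝ} (ha : -1 / 2 < a) (hb : -1 / 2 < b) (n : ℕ) :
    0 < jacobiNormSq a b n := by
  have hab : 0 < a + b + 1 := by linarith
  have hn : 0 < 2 * (n : ℝ) + a + b + 1 := by linarith [n.cast_nonneg (α := ℝ)]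
  have h_int := jacobiIntegral_one_pos ha.le hb.le
  have h_pochab := poch_pos hab n
  have h_pocha := poch_pos (x := a + 1) (by linarith) n
  have h_pochb := poch_pos (x := b + 1) (by linarith) n
  rw [jacobiNormSq_eq n ha hb]
  positivity

end JacobiIntegral

/-! ### The normalized system in terms of `jacobiPoly` -/

section NormalizedSystem

open Polynomial

lemma Gamma_add_natCast {x : ℝ} (hx : 0 < x) (m : ℕ) : Gamma (x + m) = poch x m * Gamma x := by
  induction m with
  | zero => simp
  | succ m ih =>
    push_cast
    rw [← add_assoc, Gamma_add_one (by positivity), ih, poch_succ]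
    ring

lemma poch_neg_natCast {n m : ℕ} (h : m ≤ n) :
    poch (-(n : ℝ)) m = (-1) ^ m * n.factorial / (n - m).factorial := by
  rw [poch, ascPochhammer_eval_neg_eq_descPochhammer, descPochhammer_eval_eq_descFactorial,
    eq_div_iff (by positivity), ← Nat.factorial_mul_descFactorial h]
  push_cast
  ring

lemma jacobiP_one {a b : ℝ} {n : ℕ} (h : 0 < a + b + n + 1) :
    jacobiP a b n 1 = Gamma (a + n + 1) / (n.factorial * Gamma (a + 1)) := by
  have hG := (Gamma_pos_of_pos h).ne'
  rw [jacobiP, Finset.sum_eq_single_of_mem 0 (by simp) fun m _ hm => by simp [hm]]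
  simp only [Nat.cast_zero, add_zero, Nat.factorial_zero, Nat.sub_zero, Nat.cast_one, one_mul,
    pow_zero, mul_one]
  field_simp

section

variable {a b : ℝ} (ha : -1 / 2 < a) (hb : -1 / 2 < b)
include ha hb

lemma jacobiP_one_pos (n : ℕ) : 0 < jacobiP a b n 1 := by
  have h_num : 0 < Gamma (a + n + 1) := Gamma_pos_of_pos (by linarith)
  have h_den : 0 < Gamma (a + 1) := Gamma_pos_of_pos (by linarith)
  rw [jacobiP_one (by linarith)]
  positivity

lemma jacobiP_cos (n : ℕ) (θ : ℝ) :
    jacobiP a b n (cos θ) = jacobiP a b n 1 * (jacobiPoly a b n).eval (sin (θ / 2) ^ 2) := by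
  have h_half : (cos θ - 1) / 2 = -sin (θ / 2) ^ 2 := by
    rw [← mul_div_cancel₀ θ (two_ne_zero' ℝ), cos_two_mul, cos_sq']
    ring_nf
  rw [jacobiP_one (by linarith), jacobiP, jacobiPoly, eval_finsetSum, Finset.mul_sum, h_half]
  refine Finset.sum_congr rfl fun m hm => ?_
  have h_Gab := Gamma_pos_of_pos (s := a + b + n + 1) (by linarith)
  have h_Ga := Gamma_pos_of_pos (s := a + 1) (by linarith)
  have h_poch := poch_pos (x := a + 1) (by linarith) m
  rw [show a + b + n + m + 1 = a + b + n + 1 + m by ring, Gamma_add_natCast (by linarith),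
    show a + m + 1 = a + 1 + m by ring, Gamma_add_natCast (by linarith), eval_C_mul, eval_X_pow,
    eigenGapProd, hyp01Term, poch_neg_natCast (Finset.mem_range_succ_iff.1 hm),
    show (n : ℝ) + a + b + 1 = a + b + n + 1 by ring, neg_pow, one_pow]
  field_simp

end

lemma jPsi_sq (a b : ℝ) {θ : ℝ} (hθ : θ ∈ Ioo 0 π) : jPsi a b θ ^ 2 = jacobiWeight a b θ := by
  have hs := sin_half_pos hθ
  have hc := cos_half_pos hθ
  rw [jPsi, abs_of_pos hs, jacobiWeight, mul_pow, ← rpow_mul_natCast hs.le,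
    ← rpow_mul_natCast hc.le]
  push_cast
  ring_nf

lemma jacobiMeasurePlus_eq_withDensity (a b : ℝ) : jacobiMeasurePlus a b =
    (volume.restrict (Ioo 0 π)).withDensity fun θ => ENNReal.ofReal (jacobiWeight a b θ) := by
  have h_sub : Ioo 0 π ∩ Ioo (-π) π = Ioo 0 π :=
    inter_eq_left.2 (Ioo_subset_Ioo_left (by linarith [pi_pos]))
  rw [jacobiMeasurePlus, jacobiMeasure, restrict_withDensity measurableSet_Ioo,
    Measure.restrict_restrict measurableSet_Ioo, h_sub]
  refine withDensity_congr_ae ((ae_restrict_iff' measurableSet_Ioo).2 (.of_forall fun θ hθ => ?_))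
  simp only [jPsi_sq a b hθ]

lemma measurable_jacobiWeight (a b : ℝ) : Measurable (jacobiWeight a b) := by
  unfold jacobiWeight
  fun_prop

lemma integral_jacobiMeasurePlus (a b : ℝ) (f : ℝ → ℝ) :
    ∫ θ, f θ ∂(jacobiMeasurePlus a b) = ∫ θ in Ioo 0 π, jacobiWeight a b θ * f θ := by
  rw [jacobiMeasurePlus_eq_withDensity, integral_withDensity_eq_integral_toReal_smul
    (measurable_jacobiWeight a b).ennreal_ofReal (.of_forall fun _ => ENNReal.ofReal_lt_top)]
  refine setIntegral_congr_fun measurableSet_Ioo fun θ hθ => ?_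
  rw [ENNReal.toReal_ofReal (jacobiWeight_pos a b hθ).le, smul_eq_mul]

section

variable {a b : ℝ} (ha : -1 / 2 < a) (hb : -1 / 2 < b)
include ha hb

lemma integral_jacobiP_cos_sq (n : ℕ) :
    ∫ θ, jacobiP a b n (cos θ) ^ 2 ∂(jacobiMeasurePlus a b) =
      jacobiP a b n 1 ^ 2 * jacobiNormSq a b n := by
  rw [integral_jacobiMeasurePlus, jacobiNormSq, jacobiIntegral,
    ← intervalIntegral.integral_const_mul, intervalIntegral.integral_of_le pi_pos.le,
    integral_Ioc_eq_integral_Ioo]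
  congr! 2
  rw [jacobiP_cos ha hb, eval_mul]
  ring

lemma cJ_sq (n : ℕ) : cJ a b n ^ 2 = (jacobiP a b n 1 ^ 2 * jacobiNormSq a b n)⁻¹ := by
  have h_norm := (jacobiNormSq_pos ha hb n).le
  rw [cJ, integral_jacobiP_cos_sq ha hb, ← rpow_mul_natCast (by positivity), ← rpow_neg_one]
  norm_num

lemma trigP_mul_trigP (n : ℕ) (θ φ : ℝ) :
    trigP a b n θ * trigP a b n φ =
      (jacobiPoly a b n).eval (sin (θ / 2) ^ 2) * (jacobiPoly a b n).eval (sin (φ / 2) ^ 2) /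
        jacobiNormSq a b n := by
  have h_one := (jacobiP_one_pos ha hb n).ne'
  have h_norm := (jacobiNormSq_pos ha hb n).ne'
  rw [trigP, trigP, mul_mul_mul_comm, ← sq, cJ_sq ha hb, jacobiP_cos ha hb, jacobiP_cos ha hb]
  field_simp

lemma trigP_mul_trigP_eq_appellF4 (n : ℕ) (θ φ : ℝ) :
    trigP a b n θ * trigP a b n φ * ((a + b + 1) * jacobiIntegral a b 1) =
      (-1) ^ n * ((2 * n + a + b + 1) * poch (a + b + 1) n / n.factorial) *
        appellF4 a b n (sin (θ / 2) ^ 2) (sin (φ / 2) ^ 2) := by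
  have hab : 0 < a + b + 1 := by linarith
  have h_int := jacobiIntegral_one_pos ha.le hb.le
  have h_pocha := poch_pos (x := a + 1) (by linarith) n
  have h_pochb := poch_pos (x := b + 1) (by linarith) n
  have h_pochab := poch_pos hab n
  rw [trigP_mul_trigP ha hb, ← jacobiPoly_one_mul_appellF4 (by linarith) (by linarith),
    eval_one_jacobiPoly n (by linarith) (by linarith), jacobiNormSq_eq n ha hb]
  field_simp

end

end NormalizedSystem

/-! ### Convergence of the Poisson series -/

section Convergence

open Polynomial

lemma ringChoose_eq_poch (σ : ℝ) (n : ℕ) :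
    Ring.choose (σ + n - 1) n = poch σ n / n.factorial := by
  rw [← Ring.multichoose_eq, eq_div_iff (by positivity), mul_comm, ← nsmul_eq_mul,
    Ring.factorial_nsmul_multichoose_eq_ascPochhammer, poch, ascPochhammer_smeval_eq_eval]

lemma hasSum_poch_mul_pow (σ : ℝ) {x : ℝ} (hx : |x| < 1) :
    HasSum (fun j : ℕ => poch σ j / j.factorial * x ^ j) ((1 - x) ^ (-σ)) := by
  have h := (Real.one_div_one_sub_rpow_hasFPowerSeriesOnBall_zero σ).hasSum (y := x)
    (by simpa [enorm_eq_nnnorm] using! hx)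
  simp only [FormalMultilinearSeries.ofScalars_apply_eq, zero_add, smul_eq_mul,
    ringChoose_eq_poch] at h
  rwa [rpow_neg (by linarith [(abs_lt.1 hx).2]), ← one_div]

lemma hasSum_natCast_mul_poch_mul_pow (σ : ℝ) {x : ℝ} (hx : |x| < 1) :
    HasSum (fun j : ℕ => j * (poch σ j / j.factorial * x ^ j))
      (σ * x * (1 - x) ^ (-(σ + 1))) := by
  rw [← hasSum_nat_add_iff' 1]
  simp only [Finset.sum_range_one, CharP.cast_eq_zero, zero_mul, sub_zero]
  refine ((hasSum_poch_mul_pow (σ + 1) hx).mul_left (σ * x)).congr_fun fun j => ?_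
  rw [poch_succ_left, Nat.factorial_succ, pow_succ]
  push_cast
  field_simp

lemma hasSum_poch_mul_add_two_mul_mul_pow (σ : ℝ) {x : ℝ} (hx : |x| < 1) :
    HasSum (fun j : ℕ => poch σ j / j.factorial * (σ + 2 * j) * x ^ j)
      (σ * (1 + x) * (1 - x) ^ (-(σ + 1))) := by
  have h_pos : 0 < 1 - x := by linarith [(abs_lt.1 hx).2]
  have h_rpow : (1 - x) ^ (-σ) = (1 - x) * (1 - x) ^ (-(σ + 1)) := by
    rw [neg_add, rpow_add h_pos, rpow_neg_one]
    field_simp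
  have h_sum := ((hasSum_poch_mul_pow σ hx).mul_left σ).add
    ((hasSum_natCast_mul_poch_mul_pow σ hx).mul_left 2)
  rw [h_rpow] at h_sum
  convert! h_sum using 1
  · ext j
    ring
  · ring

/-- Sonin's function `n (n + a + b + 1) p² + X (1 - X) p'²` of `p = jacobiPoly a b n`, which
dominates `p²` on `[0, 1]` and has a single turning point there, a minimum. -/
def soninPoly (a b : ℝ) (n : ℕ) : ℝ[X] :=
  C ((n : ℝ) * (n + a + b + 1)) * jacobiPoly a b n ^ 2 +
    X * (1 - X) * derivative (jacobiPoly a b n) ^ 2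

lemma derivative_soninPoly {a : ℝ} (ha : -1 < a) (b : ℝ) (n : ℕ) :
    derivative (soninPoly a b n) = derivative (jacobiPoly a b n) ^ 2 *
      (C (2 * a + 2 * b + 2) * X - C (2 * a + 1)) := by
  have h_eigen := jacobiOp_jacobiPoly ha b n
  rw [jacobiOp_apply, smul_eq_C_mul] at h_eigen
  simp only [soninPoly, derivative_add, derivative_mul, derivative_C, derivative_pow, derivative_X,
    derivative_sub, derivative_one, C_add, C_neg, C_mul, C_1, map_ofNat, Nat.cast_ofNat,
    Nat.add_one_sub_one, pow_one] at h_eigen ⊢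
  linear_combination 2 * derivative (jacobiPoly a b n) * h_eigen

lemma eval_soninPoly_le_max {a b : ℝ} (ha : -1 / 2 < a) (hb : -1 / 2 < b) (n : ℕ) {x : ℝ}
    (hx : x ∈ Icc (0 : ℝ) 1) :
    (soninPoly a b n).eval x ≤ max ((soninPoly a b n).eval 0) ((soninPoly a b n).eval 1) := by
  set f := soninPoly a b n
  set c : ℝ := (2 * a + 1) / (2 * a + 2 * b + 2)
  have hab : 0 < 2 * a + 2 * b + 2 := by linarith
  have hc0 : 0 ≤ c := div_nonneg (by linarith) hab.le
  have hc1 : c ≤ 1 := (div_le_one hab).2 (by linarith)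
  have h_deriv (y : ℝ) : deriv (fun y => f.eval y) y =
      (derivative (jacobiPoly a b n)).eval y ^ 2 * ((2 * a + 2 * b + 2) * (y - c)) := by
    rw [Polynomial.deriv, derivative_soninPoly (by linarith)]
    simp only [eval_mul, eval_pow, eval_sub, eval_C, eval_X, mul_sub]
    rw [mul_div_cancel₀ _ hab.ne']
  rcases le_total x c with hxc | hcx
  · have h_anti : AntitoneOn (fun y => f.eval y) (Icc 0 c) := by
      refine antitoneOn_of_deriv_nonpos (convex_Icc _ _) f.continuous.continuousOn
        f.differentiable.differentiableOn fun y hy => ?_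
      rw [interior_Icc] at hy
      rw [h_deriv]
      exact mul_nonpos_of_nonneg_of_nonpos (sq_nonneg _)
        (mul_nonpos_of_nonneg_of_nonpos hab.le (by linarith [hy.2]))
    exact (h_anti (left_mem_Icc.2 hc0) ⟨hx.1, hxc⟩ hx.1).trans (le_max_left _ _)
  · have h_mono : MonotoneOn (fun y => f.eval y) (Icc c 1) := by
      refine monotoneOn_of_deriv_nonneg (convex_Icc _ _) f.continuous.continuousOn
        f.differentiable.differentiableOn fun y hy => ?_
      rw [interior_Icc] at hy
      rw [h_deriv]
      exact mul_nonneg (sq_nonneg _) (mul_nonneg hab.le (by linarith [hy.1]))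
    exact (h_mono ⟨hcx, hx.2⟩ (right_mem_Icc.2 hc1) hx.2).trans (le_max_right _ _)

lemma eval_jacobiPoly_sq_le_max {a b : ℝ} (ha : -1 / 2 < a) (hb : -1 / 2 < b) (n : ℕ) {x : ℝ}
    (hx : x ∈ Icc (0 : ℝ) 1) :
    (jacobiPoly a b n).eval x ^ 2 ≤ max 1 ((jacobiPoly a b n).eval 1 ^ 2) := by
  rcases Nat.eq_zero_or_pos n with rfl | hn
  · simp [jacobiPoly_zero]
  have h_eig : 0 < (n : ℝ) * (n + a + b + 1) := by
    have : (1 : ℝ) ≤ n := mod_cast hn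
    exact mul_pos (by linarith) (by linarith)
  have h_le : (n : ℝ) * (n + a + b + 1) * (jacobiPoly a b n).eval x ^ 2 ≤
      (soninPoly a b n).eval x := by
    have : 0 ≤ x * (1 - x) * (derivative (jacobiPoly a b n)).eval x ^ 2 :=
      mul_nonneg (mul_nonneg hx.1 (by linarith [hx.2])) (sq_nonneg _)
    simpa [soninPoly] using this
  refine le_of_mul_le_mul_left ((h_le.trans (eval_soninPoly_le_max ha hb n hx)).trans_eq ?_) h_eig
  rw [mul_max_of_nonneg _ _ h_eig.le]
  simp [soninPoly, eval_zero_jacobiPoly]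

lemma summable_poch_div_poch_mul_pow {a b σ z : ℝ} (ha : 0 < a) (hb : 0 < b) (hσ : 0 < σ)
    (hz : 0 < z) (hz1 : z < 1) : Summable fun n : ℕ =>
      poch b n / poch a n * ((2 * n + σ) * poch σ n / n.factorial) * z ^ n := by
  set u : ℕ → ℝ := fun n => poch b n / poch a n * ((2 * n + σ) * poch σ n / n.factorial) * z ^ n
  have hu (n : ℕ) : 0 < u n := by
    have := poch_pos ha n
    have := poch_pos hb n
    have := poch_pos hσ n
    positivity
  have h_ratio (n : ℕ) : ‖u (n + 1)‖ / ‖u n‖ =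
      (b + 1 * n) / (a + 1 * n) * ((2 + σ + 2 * n) / (σ + 2 * n)) *
        ((σ + 1 * n) / (1 + 1 * n)) * z := by
    have := poch_pos ha n
    have := poch_pos hb n
    have := poch_pos hσ n
    rw [norm_of_nonneg (hu _).le, norm_of_nonneg (hu _).le]
    simp only [u, poch_succ, Nat.factorial_succ]
    push_cast
    field_simp
    ring
  refine summable_of_ratio_test_tendsto_lt_one hz1 (.of_forall fun n => (hu n).ne') ?_
  simp only [h_ratio]
  simpa using (((tendsto_add_mul_div_add_mul_atTop_nhds b a 1 one_ne_zero).mul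
    (tendsto_add_mul_div_add_mul_atTop_nhds (2 + σ) σ 2 two_ne_zero)).mul
    (tendsto_add_mul_div_add_mul_atTop_nhds σ 1 1 one_ne_zero)).mul_const z

lemma sin_sq_mem_Icc (θ : ℝ) : sin θ ^ 2 ∈ Icc (0 : ℝ) 1 := ⟨sq_nonneg _, sin_sq_le_one θ⟩

lemma abs_eval_mul_eval_le {a b : ℝ} (ha : -1 / 2 < a) (hb : -1 / 2 < b) (n : ℕ) {x y : ℝ}
    (hx : x ∈ Icc (0 : ℝ) 1) (hy : y ∈ Icc (0 : ℝ) 1) :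
    |(jacobiPoly a b n).eval x * (jacobiPoly a b n).eval y| ≤
      1 + (poch (b + 1) n / poch (a + 1) n) ^ 2 := by
  have h_one : (jacobiPoly a b n).eval 1 ^ 2 = (poch (b + 1) n / poch (a + 1) n) ^ 2 := by
    rw [eval_one_jacobiPoly n (by linarith) (by linarith), mul_pow, ← pow_mul, mul_comm n,
      pow_mul, neg_one_sq, one_pow, one_mul]
  have h_sq {u : ℝ} (hu : u ∈ Icc (0 : ℝ) 1) :
      |(jacobiPoly a b n).eval u| ^ 2 ≤ 1 + (poch (b + 1) n / poch (a + 1) n) ^ 2 := by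
    rw [sq_abs, ← h_one]
    exact (eval_jacobiPoly_sq_le_max ha hb n hu).trans
      (max_le_add_of_nonneg zero_le_one (sq_nonneg _))
  rw [abs_mul]
  linarith [two_mul_le_add_sq |(jacobiPoly a b n).eval x| |(jacobiPoly a b n).eval y|,
    h_sq hx, h_sq hy]

lemma summable_abs_trigP_mul_pow {a b : ℝ} (ha : -1 / 2 < a) (hb : -1 / 2 < b) (θ φ : ℝ) {z : ℝ}
    (hz : 0 < z) (hz1 : z < 1) :
    Summable fun n : ℕ => |trigP a b n θ * trigP a b n φ| * z ^ n := by
  have hab : 0 < a + b + 1 := by linarith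
  have h_int := jacobiIntegral_one_pos ha.le hb.le
  have h_summable := (summable_poch_div_poch_mul_pow (a := a + 1) (b := b + 1) (σ := a + b + 1)
      (by linarith) (by linarith) hab hz hz1).add
    (summable_poch_div_poch_mul_pow (a := b + 1) (b := a + 1) (σ := a + b + 1)
      (by linarith) (by linarith) hab hz hz1)
  refine Summable.of_nonneg_of_le (fun n => by positivity) (fun n => ?_)
    (h_summable.mul_left ((a + b + 1) * jacobiIntegral a b 1)⁻¹)
  have h_pocha := poch_pos (x := a + 1) (by linarith) n
  have h_pochb := poch_pos (x := b + 1) (by linarith) n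
  have h_pochab := poch_pos hab n
  have h_norm := jacobiNormSq_pos ha hb n
  have h_num := abs_eval_mul_eval_le ha hb n (sin_sq_mem_Icc (θ / 2)) (sin_sq_mem_Icc (φ / 2))
  rw [trigP_mul_trigP ha hb, abs_div, abs_of_pos h_norm]
  calc _ ≤ (1 + (poch (b + 1) n / poch (a + 1) n) ^ 2) / jacobiNormSq a b n * z ^ n := by gcongr
    _ = _ := by
      rw [jacobiNormSq_eq n ha hb]
      field_simp
      ring

end Convergence

/-! ### Moments of linear forms in cosines -/

section Moments

open Finset.HasAntidiagonal

/-- The measure on `(0, π)` with density `sin ω ^ (2 a)`. -/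
def sinMeasure (a : ℝ) : Measure ℝ :=
  (volume.restrict (Ioo 0 π)).withDensity fun ω => ENNReal.ofReal (sin ω ^ (2 * a))

lemma integral_sinMeasure (a : ℝ) (f : ℝ → ℝ) :
    ∫ ω, f ω ∂(sinMeasure a) = ∫ ω in (0 : ℝ)..π, sin ω ^ (2 * a) * f ω := by
  rw [sinMeasure, integral_withDensity_eq_integral_toReal_smul (by fun_prop)
    (.of_forall fun _ => ENNReal.ofReal_lt_top), intervalIntegral.integral_of_le pi_pos.le,
    integral_Ioc_eq_integral_Ioo]
  refine setIntegral_congr_fun measurableSet_Ioo fun ω hω => ?_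
  rw [ENNReal.toReal_ofReal (rpow_nonneg (sin_pos_of_mem_Ioo hω).le _), smul_eq_mul]

lemma continuous_sin_rpow {a : ℝ} (ha : 0 ≤ a) : Continuous fun ω => sin ω ^ (2 * a) :=
  Continuous.rpow_const (by fun_prop) fun _ => Or.inr (by linarith)

lemma isFiniteMeasure_sinMeasure {a : ℝ} (ha : 0 ≤ a) : IsFiniteMeasure (sinMeasure a) := by
  have h_int : IntegrableOn (fun ω => sin ω ^ (2 * a)) (Ioo 0 π) :=
    (continuous_sin_rpow ha).integrableOn_Icc.mono_set Ioo_subset_Icc_self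
  exact isFiniteMeasure_withDensity_ofReal h_int.2

/-- The `j`-th moment of `cos ω` under `sinMeasure a`. -/
def cosMoment (a : ℝ) (j : ℕ) : ℝ := ∫ ω, cos ω ^ j ∂(sinMeasure a)

lemma cosMoment_of_odd (a : ℝ) {j : ℕ} (hj : Odd j) : cosMoment a j = 0 := by
  have h_reflect := intervalIntegral.integral_comp_sub_left
    (fun ω => sin ω ^ (2 * a) * cos ω ^ j) (a := 0) (b := π) π
  simp only [sin_pi_sub, cos_pi_sub, hj.neg_pow, mul_neg, sub_self, sub_zero,
    intervalIntegral.integral_neg] at h_reflect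
  rw [cosMoment, integral_sinMeasure]
  linarith

lemma cosMoment_add_two {a : ℝ} (ha : 0 ≤ a) (j : ℕ) :
    (j + 2 * a + 2) * cosMoment a (j + 2) = (j + 1) * cosMoment a j := by
  have h_int (i : ℕ) : IntervalIntegrable (fun ω => sin ω ^ (2 * a) * cos ω ^ i) volume 0 π :=
    ((continuous_sin_rpow ha).mul (by fun_prop)).intervalIntegrable _ _
  have h_deriv : ∀ ω ∈ uIcc 0 π, HasDerivAt (fun ω => sin ω ^ (2 * a + 1) * cos ω ^ (j + 1))
      ((j + 2 * a + 2) * (sin ω ^ (2 * a) * cos ω ^ (j + 2)) -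
        (j + 1) * (sin ω ^ (2 * a) * cos ω ^ j)) ω := by
    intro ω hω
    rw [uIcc_of_le pi_pos.le] at hω
    have h_sin := (hasDerivAt_sin ω).rpow_const (p := 2 * a + 1) (Or.inr (by linarith))
    refine (h_sin.fun_mul ((hasDerivAt_cos ω).fun_pow (j + 1))).congr_deriv ?_
    rw [add_sub_cancel_right, rpow_add_one' (sin_nonneg_of_mem_Icc hω) (by linarith),
      Nat.add_sub_cancel]
    push_cast
    linear_combination -((j + 1) * sin ω ^ (2 * a) * cos ω ^ j) * sin_sq ω
  have h_parts := intervalIntegral.integral_eq_sub_of_hasDerivAt h_deriv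
    (((h_int _).const_mul _).sub ((h_int _).const_mul _))
  rw [intervalIntegral.integral_sub ((h_int _).const_mul _) ((h_int _).const_mul _),
    intervalIntegral.integral_const_mul, intervalIntegral.integral_const_mul,
    ← integral_sinMeasure, ← integral_sinMeasure, sin_pi, sin_zero,
    zero_rpow (by linarith), zero_mul, zero_mul, sub_self] at h_parts
  exact sub_eq_zero.1 h_parts

lemma cosMoment_two_mul {a : ℝ} (ha : 0 ≤ a) (i : ℕ) : cosMoment a (2 * i) =
    cosMoment a 0 * ((2 * i).factorial / (4 ^ i * (i.factorial * poch (a + 1) i))) := by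
  induction i with
  | zero => simp
  | succ i ih =>
    have h_step := cosMoment_add_two ha (2 * i)
    have h_poch := poch_pos (x := a + 1) (by linarith) i
    have h_ne : ((2 * i : ℕ) : ℝ) + 2 * a + 2 ≠ 0 := by positivity
    refine mul_left_cancel₀ h_ne ?_
    rw [Nat.mul_succ, h_step, ih, Nat.factorial_succ, Nat.factorial_succ, Nat.factorial_succ,
      poch_succ, pow_succ]
    push_cast
    field_simp
    ring

lemma cosMoment_zero_pos {a : ℝ} (ha : 0 ≤ a) : 0 < cosMoment a 0 := by
  rw [cosMoment, integral_sinMeasure]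
  refine intervalIntegral.intervalIntegral_pos_of_pos_on
    (((continuous_sin_rpow ha).mul (by fun_prop)).intervalIntegrable _ _) (fun ω hω => ?_) pi_pos
  have := sin_pos_of_mem_Ioo hω
  positivity

/-- The product of `sinMeasure a` and `sinMeasure b`, against which the Poisson kernel is an
integral. -/
def sinProdMeasure (a b : ℝ) : Measure (ℝ × ℝ) := (sinMeasure a).prod (sinMeasure b)

lemma isFiniteMeasure_sinProdMeasure {a b : ℝ} (ha : 0 ≤ a) (hb : 0 ≤ b) :
    IsFiniteMeasure (sinProdMeasure a b) := by
  have := isFiniteMeasure_sinMeasure ha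
  have := isFiniteMeasure_sinMeasure hb
  unfold sinProdMeasure
  infer_instance

/-- The linear form `A cos p₁ + B cos p₂` in the cosines of a pair of angles. -/
def cosForm (A B : ℝ) (p : ℝ × ℝ) : ℝ := A * cos p.1 + B * cos p.2

@[fun_prop]
lemma continuous_cosForm (A B : ℝ) : Continuous (cosForm A B) := by
  unfold cosForm
  fun_prop

lemma abs_cosForm_le {A B : ℝ} (hA : 0 ≤ A) (hB : 0 ≤ B) (p : ℝ × ℝ) :
    |cosForm A B p| ≤ A + B := by
  rw [cosForm]
  calc _ ≤ |A * cos p.1| + |B * cos p.2| := abs_add_le _ _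
    _ ≤ A * 1 + B * 1 := by
      rw [abs_mul, abs_mul, abs_of_nonneg hA, abs_of_nonneg hB]
      gcongr <;> exact abs_cos_le_one _
    _ = A + B := by ring

section

variable {a b : ℝ} (ha : 0 ≤ a) (hb : 0 ≤ b)
include ha hb

lemma integral_cosForm_pow (A B : ℝ) (m : ℕ) :
    ∫ p, cosForm A B p ^ m ∂(sinProdMeasure a b) = ∑ q ∈ antidiagonal m,
      (m.choose q.1 : ℝ) * A ^ q.1 * B ^ q.2 * (cosMoment a q.1 * cosMoment b q.2) := by
  have := isFiniteMeasure_sinProdMeasure ha hb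
  have h_expand (p : ℝ × ℝ) : cosForm A B p ^ m = ∑ q ∈ antidiagonal m,
      (m.choose q.1 : ℝ) * A ^ q.1 * B ^ q.2 * (cos p.1 ^ q.1 * cos p.2 ^ q.2) := by
    rw [cosForm, add_pow, Finset.Nat.sum_antidiagonal_eq_sum_range_succ_mk]
    refine Finset.sum_congr rfl fun i _ => ?_
    rw [mul_pow, mul_pow]
    ring
  simp_rw [h_expand]
  rw [integral_finsetSum]
  · refine Finset.sum_congr rfl fun q _ => ?_
    have := isFiniteMeasure_sinMeasure ha
    have := isFiniteMeasure_sinMeasure hb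
    rw [integral_const_mul, sinProdMeasure,
      integral_prod_mul (fun x => cos x ^ q.1) (fun x => cos x ^ q.2), cosMoment, cosMoment]
  · intro q _
    refine Integrable.const_mul (.of_bound (by fun_prop) 1 (.of_forall fun p => ?_)) _
    rw [norm_mul, norm_pow, norm_pow]
    exact mul_le_one₀ (pow_le_one₀ (norm_nonneg _) (abs_cos_le_one _)) (by positivity)
      (pow_le_one₀ (norm_nonneg _) (abs_cos_le_one _))

lemma integral_cosForm_pow_two_mul_add_one (A B : ℝ) (m : ℕ) :
    ∫ p, cosForm A B p ^ (2 * m + 1) ∂(sinProdMeasure a b) = 0 := by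
  rw [integral_cosForm_pow ha hb]
  refine Finset.sum_eq_zero fun q hq => ?_
  have h_odd : Odd (q.1 + q.2) := (mem_antidiagonal.1 hq) ▸ odd_two_mul_add_one m
  rcases Nat.even_or_odd q.1 with h | h
  · rw [cosMoment_of_odd b ((Nat.odd_add'.1 h_odd).2 h)]
    ring
  · rw [cosMoment_of_odd a h]
    ring

lemma choose_mul_cosMoment_mul_cosMoment (i j : ℕ) :
    ((2 * i + 2 * j).choose (2 * i) : ℝ) * (cosMoment a (2 * i) * cosMoment b (2 * j)) =
      cosMoment a 0 * cosMoment b 0 * ((2 * i + 2 * j).factorial / 4 ^ (i + j)) *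
        (hyp01Term a 1 i * hyp01Term b 1 j) := by
  have h_choose := Nat.choose_mul_factorial_mul_factorial (Nat.le_add_right (2 * i) (2 * j))
  rw [Nat.add_sub_cancel_left] at h_choose
  have h_pocha := poch_pos (x := a + 1) (by linarith) i
  have h_pochb := poch_pos (x := b + 1) (by linarith) j
  rw [cosMoment_two_mul ha, cosMoment_two_mul hb, ← h_choose, hyp01Term, hyp01Term, pow_add,
    one_pow, one_pow]
  push_cast
  field_simp

lemma integral_cosForm_pow_two_mul {A B x y : ℝ} (hA : A ^ 2 = x * y)
    (hB : B ^ 2 = (1 - x) * (1 - y)) (k : ℕ) :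
    ∫ p, cosForm A B p ^ (2 * k) ∂(sinProdMeasure a b) =
      cosMoment a 0 * cosMoment b 0 * ((2 * k).factorial / 4 ^ k) * appellLayer a b x y k := by
  rw [integral_cosForm_pow ha hb, appellLayer, Finset.mul_sum]
  symm
  refine Finset.sum_of_injOn (fun q => (2 * q.1, 2 * q.2)) ?_ ?_ ?_ ?_
  · intro q _ q' _ h
    simp only [Prod.mk.injEq] at h
    ext <;> omega
  · intro q hq
    simp only [Finset.mem_coe, Finset.HasAntidiagonal.mem_antidiagonal] at hq ⊢
    omega
  · intro q hq hq_range
    rcases Nat.even_or_odd' q.1 with ⟨i, h | h⟩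
    · rw [Finset.HasAntidiagonal.mem_antidiagonal] at hq
      refine absurd ⟨(i, k - i), ?_, ?_⟩ hq_range
      · simp only [Finset.mem_coe, Finset.HasAntidiagonal.mem_antidiagonal]
        omega
      · ext <;> simp only <;> omega
    · rw [cosMoment_of_odd a ⟨i, h⟩]
      ring
  · rintro ⟨i, j⟩ hq
    obtain rfl := mem_antidiagonal.1 hq
    have h_moment := choose_mul_cosMoment_mul_cosMoment ha hb i j
    have h_scale (c u : ℝ) (m : ℕ) : hyp01Term c u m = hyp01Term c 1 m * u ^ m := by
      rw [← hyp01Term_mul, one_mul]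
    simp only [mul_add 2 i j, pow_mul, hA, hB, h_scale a (x * y), h_scale b ((1 - x) * (1 - y))]
    linear_combination -(x * y) ^ i * ((1 - x) * (1 - y)) ^ j * h_moment

end

end Moments

/-! ### The Poisson kernel as a double integral -/

section PowerSeries

lemma analyticAt_tsum_mul_pow {c : ℕ → ℝ} {R : ℝ}
    (h_summable : ∀ r, 0 < r → r < R → Summable fun n => |c n| * r ^ n) {x : ℝ} (hx : |x| < R) :
    AnalyticAt ℝ (fun x => ∑' n, c n * x ^ n) x := by
  obtain ⟨r, hxr, hrR⟩ := exists_between hx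
  have hr : 0 < r := (abs_nonneg x).trans_lt hxr
  let p := FormalMultilinearSeries.ofScalars ℝ c
  have h_radius : ENNReal.ofReal r ≤ p.radius :=
    p.le_radius_of_summable (r := r.toNNReal) (by
      simpa only [p, FormalMultilinearSeries.ofScalars_norm, Real.coe_toNNReal r hr.le,
        Real.norm_eq_abs] using h_summable r hr hrR)
  have h_ball := p.hasFPowerSeriesOnBall ((ENNReal.ofReal_pos.2 hr).trans_le h_radius)
  have hx_mem : x ∈ Metric.eball 0 p.radius := by
    rw [Metric.mem_eball, edist_zero_right, ← ofReal_norm, Real.norm_eq_abs]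
    exact ((ENNReal.ofReal_lt_ofReal_iff hr).2 hxr).trans_le h_radius
  refine (h_ball.analyticAt_of_mem hx_mem).congr (.of_forall fun y => ?_)
  simp [p, FormalMultilinearSeries.sum, mul_comm]

lemma hasSum_integral_one_sub_mul_rpow {X : Type*} [MeasurableSpace X] {μ : Measure X}
    [IsFiniteMeasure μ] {w : X → ℝ} (hw : AEStronglyMeasurable w μ) (hw_le : ∀ p, |w p| ≤ 1)
    {s u : ℝ} (hs : 0 < s) (hu : 0 ≤ u) (hu_lt : u < 1) :
    HasSum (fun j : ℕ => poch s j / j.factorial * u ^ j * ∫ p, w p ^ j ∂μ)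
      (∫ p, (1 - u * w p) ^ (-s) ∂μ) := by
  have h_norm_le (j : ℕ) (p : X) :
      ‖poch s j / j.factorial * u ^ j * w p ^ j‖ ≤ poch s j / j.factorial * u ^ j := by
    have h_poch := poch_pos hs j
    rw [norm_mul, norm_pow, norm_of_nonneg (by positivity)]
    exact mul_le_of_le_one_right (by positivity) (pow_le_one₀ (norm_nonneg _) (hw_le p))
  have h_int (j : ℕ) : Integrable (fun p => poch s j / j.factorial * u ^ j * w p ^ j) μ :=
    .of_bound ((hw.pow j).const_mul _) _ (.of_forall (h_norm_le j))
  have h_majorant := (hasSum_poch_mul_pow s (by rwa [abs_of_nonneg hu])).summable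
  have h_sum := hasSum_integral_of_summable_integral_norm h_int <|
    .of_nonneg_of_le (fun j => by positivity)
      (fun j => (integral_mono (h_int j).norm (integrable_const _) (h_norm_le j)).trans_eq
        (integral_const _)) (h_majorant.mul_left _)
  have h_tsum (p : X) :
      ∑' j : ℕ, poch s j / j.factorial * u ^ j * w p ^ j = (1 - u * w p) ^ (-s) := by
    have h_lt : |u * w p| < 1 := by
      rw [abs_mul, abs_of_nonneg hu]
      exact (mul_le_of_le_one_right hu (hw_le p)).trans_lt hu_lt
    simpa only [mul_pow, mul_assoc] using (hasSum_poch_mul_pow s h_lt).tsum_eq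
  simp_rw [h_tsum, integral_const_mul] at h_sum
  exact h_sum

end PowerSeries

section GeneratingFunction

variable {a b : ℝ}

lemma appellLayer_nonneg (ha : -1 < a) (hb : -1 < b) {x y : ℝ} (hx : x ∈ Icc (0 : ℝ) 1)
    (hy : y ∈ Icc (0 : ℝ) 1) (k : ℕ) : 0 ≤ appellLayer a b x y k := by
  have h_xy : 0 ≤ x * y := mul_nonneg hx.1 hy.1
  have h_compl : 0 ≤ (1 - x) * (1 - y) := mul_nonneg (sub_nonneg.2 hx.2) (sub_nonneg.2 hy.2)
  refine Finset.sum_nonneg fun p _ => ?_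
  have := poch_pos (x := a + 1) (by linarith) p.1
  have := poch_pos (x := b + 1) (by linarith) p.2
  unfold hyp01Term
  positivity

/-- The coefficients of the power series in `z / (1 + z) ^ 2` to which the generating function
`∑ n, 𝒫_n(θ) 𝒫_n(φ) z ^ n` reduces. -/
def generatingCoeff (a b θ φ : ℝ) (k : ℕ) : ℝ :=
  poch (a + b + 2) (2 * k) * appellLayer a b (sin (θ / 2) ^ 2) (sin (φ / 2) ^ 2) k

lemma generatingCoeff_nonneg (ha : -1 < a) (hb : -1 < b) (θ φ : ℝ) (k : ℕ) :
    0 ≤ generatingCoeff a b θ φ k :=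
  mul_nonneg (poch_pos (by linarith) _).le
    (appellLayer_nonneg ha hb (sin_sq_mem_Icc _) (sin_sq_mem_Icc _) k)

/-- The terms of the double series which sums over antidiagonals to the generating function of
`𝒫_n(θ) 𝒫_n(φ)`, and over rows to the series with coefficients `generatingCoeff`; both happen at
`w = -z`, while `w = z` provides a positive majorant. -/
def generatingTerm (a b θ φ z w : ℝ) (q : ℕ × ℕ) : ℝ :=
  z ^ q.1 * appellLayer a b (sin (θ / 2) ^ 2) (sin (φ / 2) ^ 2) q.1 * poch (a + b + 1) (2 * q.1) *
    (poch (a + b + 1 + 2 * q.1) q.2 / q.2.factorial * (a + b + 1 + 2 * q.1 + 2 * q.2) * w ^ q.2)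

lemma hasSum_generatingTerm (a b θ φ z : ℝ) {w : ℝ} (hw : |w| < 1) (k : ℕ) :
    HasSum (fun j => generatingTerm a b θ φ z w (k, j))
      ((a + b + 1) * (1 + w) * (1 - w) ^ (-(a + b + 2)) *
        (generatingCoeff a b θ φ k * (z / (1 - w) ^ 2) ^ k)) := by
  have h_pos : 0 < 1 - w := by linarith [(abs_lt.1 hw).2]
  have h_poch : poch (a + b + 1) (2 * k) * (a + b + 1 + 2 * k) =
      (a + b + 1) * poch (a + b + 2) (2 * k) := by
    have h := poch_succ_left (a + b + 1) (2 * k)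
    rw [poch_succ] at h
    push_cast at h
    rw [h]
    ring_nf
  have h_rpow : (1 - w) ^ (-(a + b + 1 + 2 * k + 1)) =
      (1 - w) ^ (-(a + b + 2)) * (((1 - w) ^ 2) ^ k)⁻¹ := by
    rw [← pow_mul, ← rpow_natCast (1 - w), ← rpow_neg h_pos.le, ← rpow_add h_pos]
    push_cast
    ring_nf
  convert! (hasSum_poch_mul_add_two_mul_mul_pow (a + b + 1 + 2 * k) hw).mul_left
    (z ^ k * appellLayer a b (sin (θ / 2) ^ 2) (sin (φ / 2) ^ 2) k * poch (a + b + 1) (2 * k))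
    using 1
  rw [generatingCoeff, h_rpow, div_pow]
  linear_combination (-z ^ k * appellLayer a b (sin (θ / 2) ^ 2) (sin (φ / 2) ^ 2) k * (1 + w) *
    (1 - w) ^ (-(a + b + 2)) * (((1 - w) ^ 2) ^ k)⁻¹) * h_poch

lemma sum_antidiagonal_generatingTerm (ha : -1 / 2 < a) (hb : -1 / 2 < b) (θ φ z : ℝ) (n : ℕ) :
    ∑ q ∈ Finset.HasAntidiagonal.antidiagonal n, generatingTerm a b θ φ z (-z) q =
      (a + b + 1) * jacobiIntegral a b 1 * (trigP a b n θ * trigP a b n φ * z ^ n) := by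
  rw [mul_comm, mul_right_comm, trigP_mul_trigP_eq_appellF4 ha hb, appellF4,
    Finset.Nat.sum_antidiagonal_eq_sum_range_succ_mk, Finset.mul_sum, Finset.sum_mul]
  refine Finset.sum_congr rfl fun k hk => ?_
  obtain ⟨j, rfl⟩ := Nat.exists_eq_add_of_le (Finset.mem_range_succ_iff.1 hk)
  have h_poch : poch (a + b + 1) (2 * k) * poch (a + b + 1 + 2 * k) j =
      poch (a + b + 1) (k + j) * poch (k + j + a + b + 1) k := by
    have h_left := poch_add (a + b + 1) (2 * k) j
    have h_right := poch_add (a + b + 1) (k + j) k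
    rw [show k + j + k = 2 * k + j by ring, h_left] at h_right
    push_cast at h_right
    rw [h_right, show a + b + 1 + (k + j : ℝ) = k + j + a + b + 1 by ring]
  have h_sign : (-1 : ℝ) ^ k * (-1) ^ k = 1 := by rw [← mul_pow, neg_one_mul, neg_neg, one_pow]
  simp only [generatingTerm, eigenGapProd, Nat.add_sub_cancel_left]
  rw [poch_neg_natCast (Nat.le_add_right k j), Nat.add_sub_cancel_left, neg_pow z, pow_add z,
    pow_add (-1 : ℝ)]
  push_cast
  field_simp
  generalize appellLayer a b (sin (θ / 2) ^ 2) (sin (φ / 2) ^ 2) k = c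
  linear_combination z ^ k * z ^ j * c * (a + b + 1 + 2 * k + 2 * j) *
    (h_poch - poch (a + b + 1) (k + j) * poch (k + j + a + b + 1) k * h_sign)

/-- The linear form `sin (θ/2) sin (φ/2) cos u + cos (θ/2) cos (φ/2) cos v` whose moments generate
the product `𝒫_n(θ) 𝒫_n(φ)`. -/
def halfAngleForm (θ φ : ℝ) : ℝ × ℝ → ℝ :=
  cosForm (sin (θ / 2) * sin (φ / 2)) (cos (θ / 2) * cos (φ / 2))

@[fun_prop]
lemma continuous_halfAngleForm (θ φ : ℝ) : Continuous (halfAngleForm θ φ) := continuous_cosForm _ _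

lemma abs_halfAngleForm_le {θ φ : ℝ} (hθ : θ ∈ Icc 0 π) (hφ : φ ∈ Icc 0 π) (p : ℝ × ℝ) :
    |halfAngleForm θ φ p| ≤ cos ((θ - φ) / 2) := by
  refine (abs_cosForm_le (mul_nonneg (sin_half_nonneg hθ) (sin_half_nonneg hφ))
    (mul_nonneg (cos_half_nonneg hθ) (cos_half_nonneg hφ)) p).trans_eq ?_
  rw [sub_div, cos_sub, add_comm]

section

variable (ha : 0 ≤ a) (hb : 0 ≤ b)
include ha hb

section

variable {θ φ : ℝ} (hθ : θ ∈ Icc 0 π) (hφ : φ ∈ Icc 0 π)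
include hθ hφ

lemma hasSum_generatingCoeff_mul_pow {u : ℝ} (hu : 0 ≤ u) (hu_lt : u < 1) :
    HasSum (fun k => generatingCoeff a b θ φ k * (u ^ 2 / 4) ^ k)
      ((cosMoment a 0 * cosMoment b 0)⁻¹ *
        ∫ p, (1 - u * halfAngleForm θ φ p) ^ (-(a + b + 2)) ∂(sinProdMeasure a b)) := by
  have := isFiniteMeasure_sinProdMeasure ha hb
  have h_sum := hasSum_integral_one_sub_mul_rpow (μ := sinProdMeasure a b)
    (continuous_halfAngleForm θ φ).aestronglyMeasurable
    (fun p => (abs_halfAngleForm_le hθ hφ p).trans (cos_le_one _))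
    (s := a + b + 2) (by linarith) hu hu_lt
  have h_inj : Function.Injective fun k : ℕ => 2 * k := fun i j h => by simpa using h
  rw [← h_inj.hasSum_iff] at h_sum
  · refine (h_sum.mul_left (cosMoment a 0 * cosMoment b 0)⁻¹).congr_fun fun k => ?_
    have := (cosMoment_zero_pos ha).ne'
    have := (cosMoment_zero_pos hb).ne'
    simp only [Function.comp, halfAngleForm]
    rw [integral_cosForm_pow_two_mul ha hb (x := sin (θ / 2) ^ 2) (y := sin (φ / 2) ^ 2)
      (mul_pow _ _ _) (by rw [mul_pow, cos_sq', cos_sq']), generatingCoeff, pow_mul, div_pow]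
    field_simp
  · intro j hj
    obtain ⟨i, rfl | rfl⟩ := Nat.even_or_odd' j
    · exact absurd ⟨i, rfl⟩ hj
    · rw [halfAngleForm, integral_cosForm_pow_two_mul_add_one ha hb, mul_zero]

lemma summable_generatingCoeff_mul_pow {r : ℝ} (hr : 0 ≤ r) (hr_lt : r < 1 / 4) :
    Summable fun k => generatingCoeff a b θ φ k * r ^ k := by
  have h := (hasSum_generatingCoeff_mul_pow ha hb hθ hφ (u := √(4 * r)) (by positivity)
    (by rw [Real.sqrt_lt' one_pos]; linarith)).summable
  rwa [sq_sqrt (by positivity), mul_div_cancel_left₀ r four_ne_zero] at h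

lemma summable_generatingTerm_self {z : ℝ} (hz : 0 < z) (hz_lt : z < 1 / 10) :
    Summable (generatingTerm a b θ φ z z) := by
  have h_row (k : ℕ) :=
    hasSum_generatingTerm a b θ φ z (w := z) (by rw [abs_of_pos hz]; linarith) k
  rw [summable_prod_of_nonneg]
  · refine ⟨fun k => (h_row k).summable, ?_⟩
    simp_rw [fun k => (h_row k).tsum_eq]
    refine (summable_generatingCoeff_mul_pow ha hb hθ hφ (by positivity) ?_).mul_left _
    rw [div_lt_iff₀ (by nlinarith)]
    nlinarith
  · intro q
    have := appellLayer_nonneg (a := a) (b := b) (by linarith) (by linarith)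
      (sin_sq_mem_Icc (θ / 2)) (sin_sq_mem_Icc (φ / 2)) q.1
    have := poch_pos (x := a + b + 1) (by linarith) (2 * q.1)
    have := poch_pos (x := a + b + 1 + 2 * q.1) (by positivity) q.2
    simp only [generatingTerm, Pi.zero_apply]
    positivity

lemma summable_generatingTerm_neg {z : ℝ} (hz : 0 < z) (hz_lt : z < 1 / 10) :
    Summable (generatingTerm a b θ φ z (-z)) := by
  refine .of_norm ((summable_generatingTerm_self ha hb hθ hφ hz hz_lt).norm.congr fun q => ?_)
  simp only [generatingTerm, norm_mul, norm_pow, norm_neg]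

lemma tsum_trigP_mul_trigP_mul_pow_of_lt {z : ℝ} (hz : 0 < z) (hz_lt : z < 1 / 10) :
    (a + b + 1) * jacobiIntegral a b 1 * ∑' n, trigP a b n θ * trigP a b n φ * z ^ n =
      (a + b + 1) * (1 - z) * (1 + z) ^ (-(a + b + 2)) *
        ∑' k, generatingCoeff a b θ φ k * (z / (1 + z) ^ 2) ^ k := by
  have h_sum := (summable_generatingTerm_neg ha hb hθ hφ hz hz_lt).hasSum
  have h_rows := h_sum.prod_fiberwise fun k =>
    hasSum_generatingTerm a b θ φ z (w := -z) (by rw [abs_neg, abs_of_pos hz]; linarith) k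
  have h_antidiagonals :=
    ((Equiv.hasSum_iff Finset.HasAntidiagonal.sigmaAntidiagonalEquivProd).2 h_sum).sigma
      (g := fun n => (a + b + 1) * jacobiIntegral a b 1 * (trigP a b n θ * trigP a b n φ * z ^ n))
      fun n => by
        rw [← sum_antidiagonal_generatingTerm (by linarith) (by linarith)]
        exact Finset.hasSum _ _
  rw [← tsum_mul_left, h_antidiagonals.tsum_eq, ← h_rows.tsum_eq, tsum_mul_left, sub_neg_eq_add,
    ← sub_eq_add_neg]

lemma analyticAt_tsum_generatingCoeff {z : ℝ} (hz : z ∈ Ioo (0 : ℝ) 1) :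
    AnalyticAt ℝ (fun z : ℝ => ∑' k, generatingCoeff a b θ φ k * (z / (1 + z) ^ 2) ^ k) z := by
  have hz_pos := hz.1
  refine AnalyticAt.fun_comp (g := fun y : ℝ => ∑' k, generatingCoeff a b θ φ k * y ^ k)
    (analyticAt_tsum_mul_pow (R := 1 / 4) (fun r hr hr_lt => ?_) ?_)
    (analyticAt_id.div ((analyticAt_const.add analyticAt_id).pow 2) (pow_ne_zero 2 (by positivity)))
  · refine (summable_generatingCoeff_mul_pow ha hb hθ hφ hr.le hr_lt).congr fun k => ?_
    rw [abs_of_nonneg (generatingCoeff_nonneg (by linarith) (by linarith) θ φ k)]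
  · rw [abs_of_pos (by positivity), div_lt_iff₀ (by positivity)]
    nlinarith [sq_pos_of_pos (sub_pos.2 hz.2)]

lemma tsum_trigP_mul_trigP_mul_pow {z : ℝ} (hz : z ∈ Ioo (0 : ℝ) 1) :
    (a + b + 1) * jacobiIntegral a b 1 * ∑' n, trigP a b n θ * trigP a b n φ * z ^ n =
      (a + b + 1) * (1 - z) * (1 + z) ^ (-(a + b + 2)) *
        ∑' k, generatingCoeff a b θ φ k * (z / (1 + z) ^ 2) ^ k := by
  have h_left : AnalyticOnNhd ℝ (fun z : ℝ => (a + b + 1) * jacobiIntegral a b 1 *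
      ∑' n, trigP a b n θ * trigP a b n φ * z ^ n) (Ioo 0 1) := fun z hz =>
    analyticAt_const.mul <| analyticAt_tsum_mul_pow (R := 1)
      (fun r hr hr_lt => summable_abs_trigP_mul_pow (by linarith) (by linarith) θ φ hr hr_lt)
      (by rw [abs_of_pos hz.1]; exact hz.2)
  have h_right : AnalyticOnNhd ℝ (fun z : ℝ => (a + b + 1) * (1 - z) * (1 + z) ^ (-(a + b + 2)) *
      ∑' k, generatingCoeff a b θ φ k * (z / (1 + z) ^ 2) ^ k) (Ioo 0 1) := by
    intro z hz
    have h_rpow : AnalyticAt ℝ (fun z : ℝ => (1 + z) ^ (-(a + b + 2))) z :=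
      (contDiffAt_rpow_const_of_ne (by linarith [hz.1])).analyticAt.fun_comp
        (analyticAt_const.add analyticAt_id)
    exact ((analyticAt_const.mul (analyticAt_const.sub analyticAt_id)).mul h_rpow).mul
      (analyticAt_tsum_generatingCoeff ha hb hθ hφ hz)
  refine h_left.eqOn_of_preconnected_of_eventuallyEq h_right isPreconnected_Ioo (z₀ := 1 / 20)
    (by norm_num) ?_ hz
  filter_upwards [Ioo_mem_nhds (a := 0) (b := 1 / 10) (by norm_num) (by norm_num)] with w hw
  exact tsum_trigP_mul_trigP_mul_pow_of_lt ha hb hθ hφ hw.1 hw.2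

end

end

end GeneratingFunction

section PoissonKernel

variable {a b : ℝ}

lemma one_add_exp_neg (t : ℝ) : 1 + exp (-t) = 2 * exp (-(t / 2)) * cosh (t / 2) := by
  have h_inv : exp (-(t / 2)) * exp (t / 2) = 1 := by rw [← exp_add, neg_add_cancel, exp_zero]
  rw [cosh_eq, show -t = -(t / 2) + -(t / 2) by ring, exp_add]
  linear_combination -h_inv

lemma one_sub_exp_neg (t : ℝ) : 1 - exp (-t) = 2 * exp (-(t / 2)) * sinh (t / 2) := by
  have h_inv : exp (-(t / 2)) * exp (t / 2) = 1 := by rw [← exp_add, neg_add_cancel, exp_zero]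
  rw [sinh_eq, show -t = -(t / 2) + -(t / 2) by ring, exp_add]
  linear_combination -h_inv

/-- The integrand `sinh (t/2) (cosh (t/2) - w) ^ (-s)` of the integral representation of the
Jacobi–Poisson kernel. -/
def poissonDensity (s t w : ℝ) : ℝ := sinh (t / 2) * (cosh (t / 2) - w) ^ (-s)

/-- The normalizing constant in the integral representation of the Jacobi–Poisson kernel. -/
def poissonConst (a b : ℝ) : ℝ :=
  2 ^ (-(a + b + 1)) / (jacobiIntegral a b 1 * (cosMoment a 0 * cosMoment b 0))

lemma poissonDensity_eq (s : ℝ) {t w : ℝ} (hw : w ≤ 1) :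
    poissonDensity s t w =
      sinh (t / 2) * cosh (t / 2) ^ (-s) * (1 - (cosh (t / 2))⁻¹ * w) ^ (-s) := by
  have h_cosh := cosh_pos (t / 2)
  have h_nonneg : 0 ≤ 1 - (cosh (t / 2))⁻¹ * w := by
    rw [sub_nonneg, inv_mul_le_one₀ h_cosh]
    exact hw.trans (one_le_cosh _)
  rw [poissonDensity, mul_assoc, ← mul_rpow h_cosh.le h_nonneg, mul_sub, mul_one,
    mul_inv_cancel_left₀ h_cosh.ne']

lemma tsum_exp_mul_trigP_mul_trigP (ha : 0 ≤ a) (hb : 0 ≤ b) {θ φ : ℝ} (hθ : θ ∈ Icc 0 π)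
    (hφ : φ ∈ Icc 0 π) {t : ℝ} (ht : 0 < t) :
    ∑' n : ℕ, exp (-t * (n + (a + b + 1) / 2)) * trigP a b n θ * trigP a b n φ =
      poissonConst a b *
        ∫ p, poissonDensity (a + b + 2) t (halfAngleForm θ φ p) ∂(sinProdMeasure a b) := by
  have h_cosh := cosh_pos (t / 2)
  have h_int := jacobiIntegral_one_pos (a := a) (b := b) (by linarith) (by linarith)
  have h_inv_lt : (cosh (t / 2))⁻¹ < 1 := inv_lt_one_of_one_lt₀ (one_lt_cosh.2 (by positivity))
  have h_arg : exp (-t) / (1 + exp (-t)) ^ 2 = (cosh (t / 2))⁻¹ ^ 2 / 4 := by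
    rw [one_add_exp_neg, show -t = -(t / 2) + -(t / 2) by ring, exp_add]
    field_simp
    norm_num
  have h_gen := tsum_trigP_mul_trigP_mul_pow ha hb hθ hφ
    ⟨exp_pos (-t), exp_lt_one_iff.2 (neg_lt_zero.2 ht)⟩
  rw [h_arg, (hasSum_generatingCoeff_mul_pow ha hb hθ hφ (by positivity) h_inv_lt).tsum_eq,
    one_add_exp_neg, one_sub_exp_neg, mul_rpow (by positivity) h_cosh.le,
    mul_rpow two_pos.le (exp_pos _).le, ← exp_mul] at h_gen
  have h_series : ∑' n : ℕ, exp (-t * (n + (a + b + 1) / 2)) * trigP a b n θ * trigP a b n φ =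
      exp (-t * ((a + b + 1) / 2)) * ∑' n, trigP a b n θ * trigP a b n φ * exp (-t) ^ n := by
    rw [← tsum_mul_left]
    refine tsum_congr fun n => ?_
    rw [mul_add, exp_add, ← exp_nat_mul, mul_comm (n : ℝ) (-t)]
    ring
  have h_integral := integral_congr_ae (μ := sinProdMeasure a b) (.of_forall fun p =>
    poissonDensity_eq (a + b + 2) (t := t)
      ((le_abs_self _).trans ((abs_halfAngleForm_le hθ hφ p).trans (cos_le_one _))))
  have h_two : (2 : ℝ) ^ (-(a + b + 1)) = 2 * 2 ^ (-(a + b + 2)) := by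
    rw [show -(a + b + 1) = 1 + -(a + b + 2) by ring, rpow_add two_pos, rpow_one]
  have h_exp :
      exp (-t * ((a + b + 1) / 2)) * exp (-(t / 2)) * exp (-(t / 2) * -(a + b + 2)) = 1 := by
    rw [← exp_add, ← exp_add, exp_eq_one_iff]
    ring
  rw [h_series, h_integral, integral_const_mul, poissonConst, h_two]
  have h_momenta := (cosMoment_zero_pos ha).ne'
  have h_momentb := (cosMoment_zero_pos hb).ne'
  have : 0 < a + b + 1 := by linarith
  generalize ∫ p, (1 - (cosh (t / 2))⁻¹ * halfAngleForm θ φ p) ^ (-(a + b + 2))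
    ∂(sinProdMeasure a b) = I at h_gen ⊢
  generalize exp (-t * ((a + b + 1) / 2)) = E₁, exp (-(t / 2)) = E₂,
    exp (-(t / 2) * -(a + b + 2)) = E₃ at h_gen h_exp ⊢
  field_simp at h_gen ⊢
  linear_combination E₁ * h_gen +
    2 * sinh (t / 2) * 2 ^ (-(a + b + 2)) * cosh (t / 2) ^ (-(a + b + 2)) * I * h_exp

end PoissonKernel

/-! ### The time derivative of the Poisson density -/

section PoissonDensity

lemma cosh_half_sub_pos {t w : ℝ} (ht : 0 < t) (hw : w ≤ 1) : 0 < cosh (t / 2) - w :=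
  sub_pos.2 (hw.trans_lt (one_lt_cosh.2 (by positivity)))

/-- The derivative of `poissonDensity s t w` with respect to `t`. -/
def poissonDensityDeriv (s t w : ℝ) : ℝ :=
  cosh (t / 2) / 2 * (cosh (t / 2) - w) ^ (-s) -
    s / 2 * sinh (t / 2) ^ 2 * (cosh (t / 2) - w) ^ (-s - 1)

section

variable {s t w : ℝ} (ht : 0 < t) (hw : w ≤ 1)
include ht hw

lemma hasDerivAt_poissonDensity (s : ℝ) :
    HasDerivAt (fun t => poissonDensity s t w) (poissonDensityDeriv s t w) t := by
  have h_half : HasDerivAt (fun t : ℝ => t / 2) (1 / 2) t := (hasDerivAt_id t).div_const 2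
  have h_rpow := (h_half.cosh.sub_const w).rpow_const (p := -s)
    (Or.inl (cosh_half_sub_pos ht hw).ne')
  refine (h_half.sinh.fun_mul h_rpow).congr_deriv ?_
  rw [poissonDensityDeriv]
  ring

lemma hasDerivAt_poissonDensityDeriv_right (s : ℝ) :
    HasDerivAt (fun w => poissonDensityDeriv s t w) (s * poissonDensityDeriv (s + 1) t w) w := by
  have h_sub := (hasDerivAt_id' w).const_sub (cosh (t / 2))
  have h_rpow (p : ℝ) := h_sub.rpow_const (p := p) (Or.inl (cosh_half_sub_pos ht hw).ne')
  refine (((h_rpow (-s)).const_mul (cosh (t / 2) / 2)).fun_sub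
    ((h_rpow (-s - 1)).const_mul (s / 2 * sinh (t / 2) ^ 2))).congr_deriv ?_
  rw [poissonDensityDeriv, neg_add']
  ring

lemma abs_poissonDensityDeriv_le (hs : 0 ≤ s) : |poissonDensityDeriv s t w| ≤
    (1 / 2 + s) * (cosh (t / 2) * (cosh (t / 2) - w) ^ (-s)) := by
  have h_pos := cosh_half_sub_pos ht hw
  have h_cosh := one_le_cosh (t / 2)
  have h_sinh : sinh (t / 2) ^ 2 ≤ 2 * cosh (t / 2) * (cosh (t / 2) - w) := by
    nlinarith [cosh_sq (t / 2)]
  have h_rpow : (cosh (t / 2) - w) * (cosh (t / 2) - w) ^ (-s - 1) = (cosh (t / 2) - w) ^ (-s) := by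
    rw [rpow_sub_one h_pos.ne', mul_div_cancel₀ _ h_pos.ne']
  calc |poissonDensityDeriv s t w|
      ≤ cosh (t / 2) / 2 * (cosh (t / 2) - w) ^ (-s) +
        s / 2 * sinh (t / 2) ^ 2 * (cosh (t / 2) - w) ^ (-s - 1) := by
        refine (abs_sub _ _).trans_eq ?_
        rw [abs_of_nonneg (by positivity), abs_of_nonneg (by positivity)]
    _ ≤ cosh (t / 2) / 2 * (cosh (t / 2) - w) ^ (-s) +
        s / 2 * (2 * cosh (t / 2) * (cosh (t / 2) - w)) * (cosh (t / 2) - w) ^ (-s - 1) := by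
        gcongr
    _ = (1 / 2 + s) * (cosh (t / 2) * (cosh (t / 2) - w) ^ (-s)) := by
        linear_combination s * cosh (t / 2) * h_rpow

end

lemma sq_mul_sqrt_cosh_half_le {t : ℝ} (ht : 0 ≤ t) :
    t ^ 2 * √(cosh (t / 2)) ≤ 32 * (cosh (t / 2) - 1) := by
  obtain ⟨v, rfl⟩ : ∃ v, t = 8 * v := ⟨t / 8, by ring⟩
  have h_cosh₄ : cosh (8 * v / 2) = 2 * cosh (2 * v) ^ 2 - 1 := by
    rw [show 8 * v / 2 = 2 * (2 * v) by ring, cosh_two_mul (2 * v), sinh_sq]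
    ring
  have h_cosh₂ : cosh (2 * v) = 2 * cosh v ^ 2 - 1 := by
    rw [cosh_two_mul, sinh_sq]
    ring
  have h_sqrt : √(cosh (8 * v / 2)) ≤ 3 / 2 * cosh (2 * v) := by
    rw [sqrt_le_left (by positivity), h_cosh₄]
    nlinarith [one_le_cosh (2 * v)]
  have h_sinh : v ≤ sinh v := self_le_sinh_iff.2 (by linarith)
  calc (8 * v) ^ 2 * √(cosh (8 * v / 2))
      ≤ (8 * v) ^ 2 * (3 / 2 * (2 * cosh v ^ 2)) := by
        gcongr
        linarith
    _ = 192 * (v ^ 2 * cosh v ^ 2) := by ring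
    _ ≤ 192 * (sinh v ^ 2 * cosh v ^ 2) := by
        gcongr
        linarith
    _ ≤ 256 * (sinh v ^ 2 * cosh v ^ 2) := by gcongr; norm_num
    _ = 32 * (cosh (8 * v / 2) - 1) := by
        rw [h_cosh₄, h_cosh₂, sinh_sq]
        ring

lemma cosh_half_mul_rpow_le {p t w : ℝ} (hp : 2 ≤ p) (ht : 0 < t) (hw : w ∈ Icc (-1 : ℝ) 1) :
    cosh (t / 2) * (cosh (t / 2) - w) ^ (-p) ≤ 34 ^ p * (t ^ 2 + (1 - w)) ^ (-p) := by
  obtain ⟨hw_ge, hw_le⟩ := hw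
  have h_cosh := one_le_cosh (t / 2)
  obtain ⟨r, hr⟩ : ∃ r, r = √(cosh (t / 2)) := ⟨_, rfl⟩
  have h_sq : cosh (t / 2) = r ^ 2 := by rw [hr, sq_sqrt (by linarith)]
  have hr_one : 1 ≤ r := by rwa [hr, one_le_sqrt]
  have h_growth := sq_mul_sqrt_cosh_half_le ht.le
  rw [← hr, h_sq] at h_growth
  rw [h_sq]
  have : 0 < t ^ 2 + (1 - w) := add_pos_of_pos_of_nonneg (by positivity) (by linarith)
  have h_base : r * (t ^ 2 + (1 - w)) / 34 ≤ r ^ 2 - w := by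
    rw [div_le_iff₀ (by norm_num)]
    nlinarith [mul_nonneg (sub_nonneg.2 hr_one) (sub_nonneg.2 hw_le)]
  have h_rpow : (r * (t ^ 2 + (1 - w)) / 34) ^ (-p) =
      r ^ (-p) * (34 ^ p * (t ^ 2 + (1 - w)) ^ (-p)) := by
    rw [div_rpow (by positivity) (by norm_num), mul_rpow (by positivity) (by positivity),
      rpow_neg (x := 34) (by norm_num)]
    field_simp
  have h_decay : r ^ 2 * r ^ (-p) ≤ 1 := by
    rw [← rpow_two, ← rpow_add (by positivity)]
    exact rpow_le_one_of_one_le_of_nonpos hr_one (by linarith)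
  calc r ^ 2 * (r ^ 2 - w) ^ (-p)
      ≤ r ^ 2 * (r * (t ^ 2 + (1 - w)) / 34) ^ (-p) :=
        mul_le_mul_of_nonneg_left
          (rpow_le_rpow_of_nonpos (by positivity) h_base (by linarith)) (sq_nonneg r)
    _ = r ^ 2 * r ^ (-p) * (34 ^ p * (t ^ 2 + (1 - w)) ^ (-p)) := by
        rw [h_rpow]
        ring
    _ ≤ 34 ^ p * (t ^ 2 + (1 - w)) ^ (-p) := mul_le_of_le_one_left (by positivity) h_decay

lemma abs_poissonDensityDeriv_le_rpow {s t w : ℝ} (hs : 2 ≤ s) (ht : 0 < t)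
    (hw : w ∈ Icc (-1 : ℝ) 1) :
    |poissonDensityDeriv s t w| ≤ (1 / 2 + s) * 34 ^ s * (t ^ 2 + (1 - w)) ^ (-s) := by
  rw [mul_assoc]
  exact (abs_poissonDensityDeriv_le ht hw.2 (by linarith)).trans
    (mul_le_mul_of_nonneg_left (cosh_half_mul_rpow_le hs ht hw) (by linarith))

end PoissonDensity

/-! ### Integrals of negative powers of quadratic distances -/

section PowerIntegrals

lemma sq_div_five_le_one_sub_cos {x : ℝ} (hx : |x| ≤ π) : x ^ 2 / 5 ≤ 1 - cos x := by
  have h_cos := cos_le_one_sub_mul_cos_sq hx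
  have h_const : 5⁻¹ ≤ 2 / π ^ 2 := by
    rw [le_div_iff₀ (by positivity)]
    nlinarith [pi_lt_d2, pi_pos]
  rw [div_eq_inv_mul]
  linarith [mul_le_mul_of_nonneg_right h_const (sq_nonneg x)]

/-- The constant `∫₀^∞ v ^ (2 a) (1 + v ^ 2) ^ (-p) dv`, a value of the Beta function. -/
def radialIntegral (a p : ℝ) : ℝ := ∫ v in Ioi (0 : ℝ), v ^ (2 * a) * (1 + v ^ 2) ^ (-p)

lemma radialIntegral_nonneg (a p : ℝ) : 0 ≤ radialIntegral a p :=
  setIntegral_nonneg measurableSet_Ioi fun v (hv : 0 < v) => by positivity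

section OneVariable

variable {a p : ℝ} (ha : 0 ≤ a) (hp : a + 1 / 2 < p)
include ha hp

lemma integrableOn_rpow_mul_one_add_sq_rpow :
    IntegrableOn (fun v : ℝ => v ^ (2 * a) * (1 + v ^ 2) ^ (-p)) (Ioi 0) := by
  have h_cont : Continuous fun v : ℝ => v ^ (2 * a) * (1 + v ^ 2) ^ (-p) :=
    (continuous_id.rpow_const fun _ => Or.inr (by linarith)).mul
      (Continuous.rpow_const (by fun_prop) fun x => Or.inl (by positivity))
  rw [← Ioc_union_Ioi_eq_Ioi (zero_le_one (α := ℝ)), integrableOn_union]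
  refine ⟨h_cont.integrableOn_Icc.mono_set Ioc_subset_Icc_self, ?_⟩
  refine (integrableOn_Ioi_rpow_of_lt (a := 2 * a - 2 * p) (by linarith) one_pos).mono'
    h_cont.aestronglyMeasurable ((ae_restrict_iff' measurableSet_Ioi).2 (.of_forall fun v hv => ?_))
  have hv_pos : 0 < v := one_pos.trans hv
  rw [norm_of_nonneg (by positivity), sub_eq_add_neg, rpow_add hv_pos]
  gcongr
  calc (1 + v ^ 2) ^ (-p) ≤ (v ^ 2) ^ (-p) :=
        rpow_le_rpow_of_nonpos (by positivity) (by linarith) (by linarith)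
    _ = v ^ (-(2 * p)) := by
        rw [← rpow_two, ← rpow_mul hv_pos.le]
        ring_nf

section

variable {δ σ : ℝ} (hδ : 0 < δ) (hσ : 0 < σ)
include hδ hσ

omit ha hp in
lemma rpow_mul_add_mul_sq_rpow_eq (a p : ℝ) {v : ℝ} (hv : 0 < v) :
    v ^ (2 * a) * (δ + σ * v ^ 2) ^ (-p) = δ ^ (-p) * √(σ / δ) ^ (-(2 * a)) *
      ((√(σ / δ) * v) ^ (2 * a) * (1 + (√(σ / δ) * v) ^ 2) ^ (-p)) := by
  have h_factor : δ + σ * v ^ 2 = δ * (1 + (√(σ / δ) * v) ^ 2) := by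
    rw [mul_pow, sq_sqrt (by positivity)]
    field_simp
  rw [h_factor, mul_rpow hδ.le (by positivity), mul_rpow (sqrt_nonneg _) hv.le,
    rpow_neg (sqrt_nonneg _)]
  field_simp

lemma integrableOn_rpow_mul_add_mul_sq_rpow :
    IntegrableOn (fun v : ℝ => v ^ (2 * a) * (δ + σ * v ^ 2) ^ (-p)) (Ioi 0) := by
  have h_scale : 0 < √(σ / δ) := by positivity
  have h_int := (integrableOn_Ioi_comp_mul_left_iff
    (fun v : ℝ => v ^ (2 * a) * (1 + v ^ 2) ^ (-p)) 0 h_scale).2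
    (by rw [mul_zero]; exact integrableOn_rpow_mul_one_add_sq_rpow ha hp)
  exact (integrableOn_congr_fun (fun v hv => rpow_mul_add_mul_sq_rpow_eq hδ hσ a p hv)
    measurableSet_Ioi).2 (h_int.const_mul _)

omit ha hp in
lemma integral_rpow_mul_add_mul_sq_rpow (a p : ℝ) :
    ∫ v in Ioi (0 : ℝ), v ^ (2 * a) * (δ + σ * v ^ 2) ^ (-p) =
      radialIntegral a p * (δ ^ (-(p - a - 1 / 2)) * σ ^ (-(a + 1 / 2))) := by
  have h_scale : 0 < √(σ / δ) := by positivity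
  have h_const : δ ^ (-p) * √(σ / δ) ^ (-(2 * a)) * (√(σ / δ))⁻¹ =
      δ ^ (-(p - a - 1 / 2)) * σ ^ (-(a + 1 / 2)) := by
    rw [mul_assoc, ← rpow_neg_one √(σ / δ), ← rpow_add h_scale, sqrt_eq_rpow,
      ← rpow_mul (by positivity), div_rpow hσ.le hδ.le,
      show -(p - a - 1 / 2) = -p - 1 / 2 * (-(2 * a) + -1) by ring,
      show -(a + 1 / 2) = 1 / 2 * (-(2 * a) + -1) by ring, rpow_sub hδ]
    ring
  rw [setIntegral_congr_fun measurableSet_Ioi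
      (fun v hv => rpow_mul_add_mul_sq_rpow_eq hδ hσ a p hv), integral_const_mul,
    integral_comp_mul_left_Ioi (fun v : ℝ => v ^ (2 * a) * (1 + v ^ 2) ^ (-p)) 0 h_scale, mul_zero,
    smul_eq_mul, ← radialIntegral, ← h_const]
  ring

end

lemma sin_rpow_mul_add_one_sub_cos_rpow_le {δ A ω : ℝ} (hδ : 0 < δ) (hA : 0 ≤ A)
    (hω : ω ∈ Ioo 0 π) : sin ω ^ (2 * a) * (δ + A * (1 - cos ω)) ^ (-p) ≤
      20 ^ p * (ω ^ (2 * a) * (δ + (δ + A) * ω ^ 2) ^ (-p)) := by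
  have h_sin := sin_pos_of_mem_Ioo hω
  have hω_pos := hω.1
  have h_cos := sq_div_five_le_one_sub_cos (x := ω) (by rw [abs_of_pos hω.1]; exact hω.2.le)
  have h_sq : ω ^ 2 ≤ 10 := by nlinarith [hω.2, pi_lt_d2]
  have h_base : (δ + (δ + A) * ω ^ 2) / 20 ≤ δ + A * (1 - cos ω) := by
    nlinarith [mul_le_mul_of_nonneg_left h_cos hA, mul_le_mul_of_nonneg_left h_sq hδ.le]
  calc sin ω ^ (2 * a) * (δ + A * (1 - cos ω)) ^ (-p)
      ≤ ω ^ (2 * a) * ((δ + (δ + A) * ω ^ 2) / 20) ^ (-p) :=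
        mul_le_mul (rpow_le_rpow h_sin.le (sin_le hω_pos.le) (by linarith))
          (rpow_le_rpow_of_nonpos (by positivity) h_base (by linarith))
          (rpow_nonneg (le_trans (by positivity) h_base) _) (by positivity)
    _ = 20 ^ p * (ω ^ (2 * a) * (δ + (δ + A) * ω ^ 2) ^ (-p)) := by
        rw [div_rpow (by positivity) (by norm_num), rpow_neg (x := 20) (by norm_num)]
        field_simp

lemma integral_add_one_sub_cos_rpow_le {δ A : ℝ} (hδ : 0 < δ) (hA : 0 ≤ A) :
    ∫ ω, (δ + A * (1 - cos ω)) ^ (-p) ∂(sinMeasure a) ≤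
      20 ^ p * radialIntegral a p * (δ ^ (-(p - a - 1 / 2)) * (δ + A) ^ (-(a + 1 / 2))) := by
  have hδA : 0 < δ + A := by linarith
  have h_int : IntegrableOn (fun v : ℝ => 20 ^ p * (v ^ (2 * a) * (δ + (δ + A) * v ^ 2) ^ (-p)))
      (Ioi 0) := (integrableOn_rpow_mul_add_mul_sq_rpow ha hp hδ hδA).const_mul _
  rw [mul_assoc, ← integral_rpow_mul_add_mul_sq_rpow hδ hδA, integral_sinMeasure,
    intervalIntegral.integral_of_le pi_pos.le, integral_Ioc_eq_integral_Ioo, ← integral_const_mul]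
  calc ∫ ω in Ioo 0 π, sin ω ^ (2 * a) * (δ + A * (1 - cos ω)) ^ (-p)
      ≤ ∫ v in Ioo 0 π, 20 ^ p * (v ^ (2 * a) * (δ + (δ + A) * v ^ 2) ^ (-p)) := by
        refine integral_mono_of_nonneg
          ((ae_restrict_iff' measurableSet_Ioo).2 (.of_forall fun ω hω => ?_))
          (h_int.mono_set Ioo_subset_Ioi_self) ((ae_restrict_iff' measurableSet_Ioo).2
            (.of_forall fun ω => sin_rpow_mul_add_one_sub_cos_rpow_le ha hp hδ hA))
        have h_sin := sin_pos_of_mem_Ioo hω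
        have h_cos : 0 ≤ A * (1 - cos ω) := mul_nonneg hA (sub_nonneg.2 (cos_le_one ω))
        simp only [Pi.zero_apply]
        positivity
    _ ≤ ∫ v in Ioi (0 : ℝ), 20 ^ p * (v ^ (2 * a) * (δ + (δ + A) * v ^ 2) ^ (-p)) :=
        setIntegral_mono_set h_int ((ae_restrict_iff' measurableSet_Ioi).2
          (.of_forall fun v (hv : 0 < v) => by simp only [Pi.zero_apply]; positivity))
          Ioo_subset_Ioi_self.eventuallyLE

lemma integral_add_one_sub_cos_rpow_le_of_le {δ ε A : ℝ} (hδ : 0 < δ) (hδε : δ ≤ ε) (hA : 0 ≤ A) :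
    ∫ ω, (ε + A * (1 - cos ω)) ^ (-p) ∂(sinMeasure a) ≤
      20 ^ p * radialIntegral a p * (δ + A) ^ (-(a + 1 / 2)) * ε ^ (-(p - a - 1 / 2)) := by
  have hε : 0 < ε := hδ.trans_le hδε
  refine (integral_add_one_sub_cos_rpow_le ha hp hε hA).trans ?_
  rw [mul_comm (ε ^ _), ← mul_assoc]
  exact mul_le_mul_of_nonneg_right (mul_le_mul_of_nonneg_left
    (rpow_le_rpow_of_nonpos (by linarith) (by linarith) (by linarith))
    (mul_nonneg (by positivity) (radialIntegral_nonneg _ _))) (by positivity)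

end OneVariable

lemma integrable_rpow_neg_of_le {X : Type*} [TopologicalSpace X] [MeasurableSpace X]
    [OpensMeasurableSpace X] {μ : Measure X} [IsFiniteMeasure μ] {f : X → ℝ} {δ p : ℝ}
    (hf : Continuous f) (hδ : 0 < δ) (hf_le : ∀ x, δ ≤ f x) (hp : 0 ≤ p) :
    Integrable (fun x => f x ^ (-p)) μ := by
  have hf_pos (x : X) : 0 < f x := hδ.trans_le (hf_le x)
  refine .of_bound (hf.rpow_const fun x => Or.inl (hf_pos x).ne').aestronglyMeasurable (δ ^ (-p))
    (.of_forall fun x => ?_)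
  rw [norm_of_nonneg (rpow_nonneg (hf_pos x).le _)]
  exact rpow_le_rpow_of_nonpos hδ (hf_le x) (by linarith)

lemma exists_integral_sinProdMeasure_rpow_le {a b p : ℝ} (ha : 0 ≤ a) (hb : 0 ≤ b)
    (hp : a + b + 1 < p) :
    ∃ C : ℝ, 0 ≤ C ∧ ∀ δ A B : ℝ, 0 < δ → 0 ≤ A → 0 ≤ B →
      ∫ q, (δ + A * (1 - cos q.1) + B * (1 - cos q.2)) ^ (-p) ∂(sinProdMeasure a b) ≤
        C * (δ ^ (-(p - a - b - 1)) * (δ + A) ^ (-(a + 1 / 2)) * (δ + B) ^ (-(b + 1 / 2))) := by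
  have := isFiniteMeasure_sinMeasure ha
  have := isFiniteMeasure_sinMeasure hb
  have := isFiniteMeasure_sinProdMeasure ha hb
  set C₁ := 20 ^ p * radialIntegral b p
  set C₂ := 20 ^ (p - b - 1 / 2) * radialIntegral a (p - b - 1 / 2)
  have hC₁_nonneg : 0 ≤ C₁ := mul_nonneg (by positivity) (radialIntegral_nonneg _ _)
  have hC₂_nonneg : 0 ≤ C₂ := mul_nonneg (by positivity) (radialIntegral_nonneg _ _)
  refine ⟨C₁ * C₂, by positivity, fun δ A B hδ hA hB => ?_⟩
  have h_cosA (ω : ℝ) : 0 ≤ A * (1 - cos ω) := mul_nonneg hA (sub_nonneg.2 (cos_le_one ω))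
  have h_cosB (ω : ℝ) : 0 ≤ B * (1 - cos ω) := mul_nonneg hB (sub_nonneg.2 (cos_le_one ω))
  have h_int : Integrable (fun q : ℝ × ℝ => (δ + A * (1 - cos q.1) + B * (1 - cos q.2)) ^ (-p))
      (sinProdMeasure a b) :=
    integrable_rpow_neg_of_le (by fun_prop) hδ
      (fun q => by linarith [h_cosA q.1, h_cosB q.2]) (by linarith)
  have h_int_fst : Integrable (fun x : ℝ => (δ + A * (1 - cos x)) ^ (-(p - b - 1 / 2)))
      (sinMeasure a) :=
    integrable_rpow_neg_of_le (by fun_prop) hδ (fun x => by linarith [h_cosA x]) (by linarith)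
  have h_inner (x : ℝ) :
      ∫ y, (δ + A * (1 - cos x) + B * (1 - cos y)) ^ (-p) ∂(sinMeasure b) ≤
        C₁ * (δ + B) ^ (-(b + 1 / 2)) * (δ + A * (1 - cos x)) ^ (-(p - b - 1 / 2)) :=
    integral_add_one_sub_cos_rpow_le_of_le hb (by linarith) hδ (by linarith [h_cosA x]) hB
  calc ∫ q, (δ + A * (1 - cos q.1) + B * (1 - cos q.2)) ^ (-p) ∂(sinProdMeasure a b)
      ≤ ∫ x, C₁ * (δ + B) ^ (-(b + 1 / 2)) * (δ + A * (1 - cos x)) ^ (-(p - b - 1 / 2))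
          ∂(sinMeasure a) := by
        rw [sinProdMeasure, integral_prod _ h_int]
        exact integral_mono h_int.integral_prod_left (h_int_fst.const_mul _) h_inner
    _ ≤ C₁ * (δ + B) ^ (-(b + 1 / 2)) *
          (C₂ * (δ ^ (-(p - b - 1 / 2 - a - 1 / 2)) * (δ + A) ^ (-(a + 1 / 2)))) := by
        rw [integral_const_mul]
        gcongr
        exact integral_add_one_sub_cos_rpow_le ha (by linarith) hδ hA
    _ = C₁ * C₂ *
          (δ ^ (-(p - a - b - 1)) * (δ + A) ^ (-(a + 1 / 2)) * (δ + B) ^ (-(b + 1 / 2))) := by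
        rw [show p - b - 1 / 2 - a - 1 / 2 = p - a - b - 1 by ring]
        ring

end PowerIntegrals

/-! ### Size and smoothness of the differentiated Poisson integral -/

section HalfAngleDist

/-- The quantity `1 - cos ((θ - φ) / 2)`, comparable to `(θ - φ) ^ 2` on `[0, π]`. -/
def halfAngleDist (θ φ : ℝ) : ℝ := 1 - cos ((θ - φ) / 2)

/-- The part of the kernel estimates that is comparable, up to a factor `|θ - φ|`, to the inverse
measure of the ball of centre `θ` and radius `|θ - φ|`, where `a = α + 1` and `b = β + 1`. -/
def volumeFactor (a b θ φ : ℝ) : ℝ :=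
  (1 - cos (θ / 2) * cos (φ / 2)) ^ (-(a + 1 / 2)) *
    (1 - sin (θ / 2) * sin (φ / 2)) ^ (-(b + 1 / 2))

lemma halfAngleDist_comm (θ φ : ℝ) : halfAngleDist θ φ = halfAngleDist φ θ := by
  rw [halfAngleDist, halfAngleDist, ← cos_neg, ← neg_div, neg_sub]

lemma volumeFactor_comm (a b θ φ : ℝ) : volumeFactor a b θ φ = volumeFactor a b φ θ := by
  rw [volumeFactor, volumeFactor, mul_comm (cos (θ / 2)), mul_comm (sin (θ / 2))]

lemma halfAngleDist_add_sin_mul_sin (θ φ : ℝ) :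
    halfAngleDist θ φ + sin (θ / 2) * sin (φ / 2) = 1 - cos (θ / 2) * cos (φ / 2) := by
  rw [halfAngleDist, sub_div, cos_sub]
  ring

lemma halfAngleDist_add_cos_mul_cos (θ φ : ℝ) :
    halfAngleDist θ φ + cos (θ / 2) * cos (φ / 2) = 1 - sin (θ / 2) * sin (φ / 2) := by
  rw [halfAngleDist, sub_div, cos_sub]
  ring

lemma one_sub_halfAngleForm (θ φ : ℝ) (q : ℝ × ℝ) :
    1 - halfAngleForm θ φ q = halfAngleDist θ φ +
      sin (θ / 2) * sin (φ / 2) * (1 - cos q.1) + cos (θ / 2) * cos (φ / 2) * (1 - cos q.2) := by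
  rw [halfAngleForm, cosForm, halfAngleDist, sub_div, cos_sub]
  ring

variable {θ φ : ℝ} (hθ : θ ∈ Icc 0 π) (hφ : φ ∈ Icc 0 π)
include hθ hφ

lemma halfAngleForm_mem_Icc (q : ℝ × ℝ) : halfAngleForm θ φ q ∈ Icc (-1 : ℝ) 1 :=
  abs_le.1 ((abs_halfAngleForm_le hθ hφ q).trans (cos_le_one _))

lemma halfAngleDist_le_one_sub_halfAngleForm (q : ℝ × ℝ) :
    halfAngleDist θ φ ≤ 1 - halfAngleForm θ φ q :=
  sub_le_sub_left ((le_abs_self _).trans (abs_halfAngleForm_le hθ hφ q)) 1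

lemma sq_div_twenty_le_halfAngleDist : (θ - φ) ^ 2 / 20 ≤ halfAngleDist θ φ := by
  have h_abs : |(θ - φ) / 2| ≤ π := by
    rw [abs_le]
    constructor <;> linarith [hθ.1, hθ.2, hφ.1, hφ.2, pi_pos]
  rw [halfAngleDist]
  linarith [sq_div_five_le_one_sub_cos h_abs]

variable (hne : θ ≠ φ)
include hne

lemma halfAngleDist_pos : 0 < halfAngleDist θ φ := by
  have := sub_ne_zero.2 hne
  exact lt_of_lt_of_le (by positivity) (sq_div_twenty_le_halfAngleDist hθ hφ)

lemma one_sub_cos_mul_cos_pos : 0 < 1 - cos (θ / 2) * cos (φ / 2) := by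
  rw [← halfAngleDist_add_sin_mul_sin]
  exact add_pos_of_pos_of_nonneg (halfAngleDist_pos hθ hφ hne)
    (mul_nonneg (sin_half_nonneg hθ) (sin_half_nonneg hφ))

lemma one_sub_sin_mul_sin_pos : 0 < 1 - sin (θ / 2) * sin (φ / 2) := by
  rw [← halfAngleDist_add_cos_mul_cos]
  exact add_pos_of_pos_of_nonneg (halfAngleDist_pos hθ hφ hne)
    (mul_nonneg (cos_half_nonneg hθ) (cos_half_nonneg hφ))

lemma volumeFactor_pos (a b : ℝ) : 0 < volumeFactor a b θ φ :=
  mul_pos (rpow_pos_of_pos (one_sub_cos_mul_cos_pos hθ hφ hne) _)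
    (rpow_pos_of_pos (one_sub_sin_mul_sin_pos hθ hφ hne) _)

end HalfAngleDist

section Lipschitz

-- `halfAngleForm (θ + π) φ` is twice the derivative of `halfAngleForm θ φ` in `θ`.
lemma halfAngleForm_add_two_mul (θ φ η : ℝ) (q : ℝ × ℝ) :
    halfAngleForm (θ + 2 * η) φ q =
      halfAngleForm θ φ q * cos η + halfAngleForm (θ + π) φ q * sin η := by
  simp only [halfAngleForm, cosForm]
  rw [show (θ + 2 * η) / 2 = θ / 2 + η by ring, add_div, sin_add, cos_add, sin_add_pi_div_two,
    cos_add_pi_div_two]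
  ring

lemma halfAngleForm_sq_add_sq_le_one (θ φ : ℝ) (q : ℝ × ℝ) :
    halfAngleForm θ φ q ^ 2 + halfAngleForm (θ + π) φ q ^ 2 ≤ 1 := by
  have h_sum : halfAngleForm θ φ q ^ 2 + halfAngleForm (θ + π) φ q ^ 2 =
      sin (φ / 2) ^ 2 * cos q.1 ^ 2 + cos (φ / 2) ^ 2 * cos q.2 ^ 2 := by
    simp only [halfAngleForm, cosForm]
    rw [add_div, sin_add_pi_div_two, cos_add_pi_div_two]
    linear_combination (sin (φ / 2) ^ 2 * cos q.1 ^ 2 + cos (φ / 2) ^ 2 * cos q.2 ^ 2) *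
      sin_sq_add_cos_sq (θ / 2)
  rw [h_sum, ← sin_sq_add_cos_sq (φ / 2)]
  exact add_le_add (mul_le_of_le_one_right (sq_nonneg _) (cos_sq_le_one _))
    (mul_le_of_le_one_right (sq_nonneg _) (cos_sq_le_one _))

lemma abs_mul_cos_add_mul_sin_sub_le {w v η : ℝ} (h_sq : w ^ 2 + v ^ 2 ≤ 1)
    (hη : |η| ≤ √(1 - w) / 8) : |w * cos η + v * sin η - w| ≤ 2 * |η| * √(1 - w) := by
  have hw : |w| ≤ 1 := by
    rw [← sq_le_one_iff_abs_le_one]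
    linarith [sq_nonneg v]
  obtain ⟨hw_ge, hw_le⟩ := abs_le.1 hw
  set S := √(1 - w)
  have hS_sq : S ^ 2 = 1 - w := sq_sqrt (by linarith)
  have : 0 ≤ S := sqrt_nonneg _
  have hv : |v| ≤ 3 / 2 * S := by
    refine abs_le_of_sq_le_sq ?_ (by positivity)
    nlinarith
  have h_cos : |1 - cos η| ≤ |η| ^ 2 / 2 := by
    rw [abs_of_nonneg (sub_nonneg.2 (cos_le_one η)), sq_abs]
    linarith [one_sub_sq_div_two_le_cos (x := η)]
  calc |w * cos η + v * sin η - w| = |v * sin η - w * (1 - cos η)| := by ring_nf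
    _ ≤ |v| * |sin η| + |w| * |1 - cos η| := by
        rw [← abs_mul, ← abs_mul]
        exact abs_sub _ _
    _ ≤ 3 / 2 * S * |η| + 1 * (|η| ^ 2 / 2) :=
        add_le_add (mul_le_mul hv abs_sin_le_abs (abs_nonneg _) (by positivity))
          (mul_le_mul hw h_cos (abs_nonneg _) zero_le_one)
    _ ≤ 2 * |η| * S := by nlinarith [abs_nonneg η]

section

variable {θ θ' φ : ℝ} (hθ : θ ∈ Icc 0 π) (hφ : φ ∈ Icc 0 π) (h_near : |θ' - θ| ≤ |θ - φ| / 20)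
include hθ hφ h_near

lemma abs_half_sub_le_sqrt_one_sub_halfAngleForm (q : ℝ × ℝ) :
    |(θ' - θ) / 2| ≤ √(1 - halfAngleForm θ φ q) / 8 := by
  have h_dist := (sq_div_twenty_le_halfAngleDist hθ hφ).trans
    (halfAngleDist_le_one_sub_halfAngleForm hθ hφ q)
  have h_sq : (θ' - θ) ^ 2 ≤ (θ - φ) ^ 2 / 20 ^ 2 := by
    rw [← sq_abs, ← sq_abs (θ - φ), ← div_pow]
    gcongr
  refine abs_le_of_sq_le_sq ?_ (by positivity)
  rw [div_pow, div_pow, sq_sqrt (le_trans (by positivity) h_dist)]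
  linarith [sq_nonneg (θ - φ)]

lemma abs_halfAngleForm_sub_le (q : ℝ × ℝ) : |halfAngleForm θ' φ q - halfAngleForm θ φ q| ≤
    |θ' - θ| * √(1 - halfAngleForm θ φ q) := by
  have h_add := halfAngleForm_add_two_mul θ φ ((θ' - θ) / 2) q
  rw [show θ + 2 * ((θ' - θ) / 2) = θ' by ring] at h_add
  rw [h_add]
  refine (abs_mul_cos_add_mul_sin_sub_le (halfAngleForm_sq_add_sq_le_one θ φ q)
    (abs_half_sub_le_sqrt_one_sub_halfAngleForm hθ hφ h_near q)).trans_eq ?_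
  rw [abs_div, abs_two]
  ring

lemma abs_halfAngleForm_sub_le_half (q : ℝ × ℝ) :
    |halfAngleForm θ' φ q - halfAngleForm θ φ q| ≤ (1 - halfAngleForm θ φ q) / 2 := by
  have h_half := abs_half_sub_le_sqrt_one_sub_halfAngleForm hθ hφ h_near q
  rw [abs_div, abs_two] at h_half
  have h_sq := sq_sqrt (sub_nonneg.2 (halfAngleForm_mem_Icc hθ hφ q).2)
  refine (abs_halfAngleForm_sub_le hθ hφ h_near q).trans ?_
  nlinarith [sqrt_nonneg (1 - halfAngleForm θ φ q)]

end

lemma abs_poissonDensityDeriv_le_rpow_of_half_le {s t w ξ : ℝ} (hs : 2 ≤ s) (ht : 0 < t)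
    (hw : w ≤ 1) (hξ : ξ ∈ Icc (-1 : ℝ) 1) (h_half : (1 - w) / 2 ≤ 1 - ξ) :
    |poissonDensityDeriv s t ξ| ≤ (1 / 2 + s) * 68 ^ s * (t ^ 2 + (1 - w)) ^ (-s) := by
  have : 0 < t ^ 2 + (1 - w) := add_pos_of_pos_of_nonneg (by positivity) (by linarith)
  have h_rpow : (t ^ 2 + (1 - ξ)) ^ (-s) ≤ ((t ^ 2 + (1 - w)) / 2) ^ (-s) :=
    rpow_le_rpow_of_nonpos (by positivity) (by linarith [sq_nonneg t]) (by linarith)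
  calc |poissonDensityDeriv s t ξ|
      ≤ (1 / 2 + s) * 34 ^ s * (t ^ 2 + (1 - ξ)) ^ (-s) := abs_poissonDensityDeriv_le_rpow hs ht hξ
    _ ≤ (1 / 2 + s) * 34 ^ s * ((t ^ 2 + (1 - w)) / 2) ^ (-s) :=
        mul_le_mul_of_nonneg_left h_rpow (by positivity)
    _ = (1 / 2 + s) * 68 ^ s * (t ^ 2 + (1 - w)) ^ (-s) := by
        rw [div_rpow (by positivity) (by norm_num), rpow_neg (x := 2) (by norm_num),
          show (68 : ℝ) = 34 * 2 by norm_num, mul_rpow (by norm_num) (by norm_num)]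
        field_simp

lemma abs_poissonDensityDeriv_sub_le {s t w w' : ℝ} (hs : 1 ≤ s) (ht : 0 < t)
    (hw : w ∈ Icc (-1 : ℝ) 1) (hw' : w' ∈ Icc (-1 : ℝ) 1) (h_half : |w' - w| ≤ (1 - w) / 2) :
    |poissonDensityDeriv s t w' - poissonDensityDeriv s t w| ≤
      s * ((1 / 2 + (s + 1)) * 68 ^ (s + 1)) * (t ^ 2 + (1 - w)) ^ (-(s + 1)) * |w' - w| := by
  refine (convex_uIcc w w').norm_image_sub_le_of_norm_hasDerivWithin_le
    (f := fun w => poissonDensityDeriv s t w) (fun ξ hξ => (hasDerivAt_poissonDensityDeriv_right ht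
      (uIcc_subset_Icc hw hw' hξ).2 s).hasDerivWithinAt) (fun ξ hξ => ?_)
    left_mem_uIcc right_mem_uIcc
  have hξ_half : (1 - w) / 2 ≤ 1 - ξ := by
    have h_abs := (abs_sub_left_of_mem_uIcc hξ).trans h_half
    linarith [(abs_le.1 h_abs).2]
  rw [norm_eq_abs, abs_mul, abs_of_nonneg (by linarith), mul_assoc s]
  exact mul_le_mul_of_nonneg_left (abs_poissonDensityDeriv_le_rpow_of_half_le (by linarith) ht hw.2
    (uIcc_subset_Icc hw hw' hξ) hξ_half) (by linarith)

lemma abs_poissonDensityDeriv_halfAngleForm_sub_le {s t θ θ' φ : ℝ} (hs : 1 ≤ s) (ht : 0 < t)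
    (hθ : θ ∈ Icc 0 π) (hθ' : θ' ∈ Icc 0 π) (hφ : φ ∈ Icc 0 π)
    (h_near : |θ' - θ| ≤ |θ - φ| / 20) (q : ℝ × ℝ) :
    |poissonDensityDeriv s t (halfAngleForm θ' φ q) -
        poissonDensityDeriv s t (halfAngleForm θ φ q)| ≤
      s * ((1 / 2 + (s + 1)) * 68 ^ (s + 1)) * |θ' - θ| *
        (t ^ 2 + (1 - halfAngleForm θ φ q)) ^ (-(s + 1 / 2)) := by
  have hw := halfAngleForm_mem_Icc hθ hφ q
  have h_lip := abs_halfAngleForm_sub_le hθ hφ h_near q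
  refine (abs_poissonDensityDeriv_sub_le hs ht hw (halfAngleForm_mem_Icc hθ' hφ q)
    (abs_halfAngleForm_sub_le_half hθ hφ h_near q)).trans ?_
  set w := halfAngleForm θ φ q
  have h_pos : 0 < t ^ 2 + (1 - w) := add_pos_of_pos_of_nonneg (by positivity) (by linarith [hw.2])
  have h_rpow : (t ^ 2 + (1 - w)) ^ (-(s + 1 / 2)) =
      (t ^ 2 + (1 - w)) ^ (-(s + 1)) * √(t ^ 2 + (1 - w)) := by
    rw [sqrt_eq_rpow, ← rpow_add h_pos]
    ring_nf
  have h_sqrt : √(1 - w) ≤ √(t ^ 2 + (1 - w)) := sqrt_le_sqrt (by linarith [sq_nonneg t])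
  calc s * ((1 / 2 + (s + 1)) * 68 ^ (s + 1)) * (t ^ 2 + (1 - w)) ^ (-(s + 1)) *
        |halfAngleForm θ' φ q - w|
      ≤ s * ((1 / 2 + (s + 1)) * 68 ^ (s + 1)) * (t ^ 2 + (1 - w)) ^ (-(s + 1)) *
        (|θ' - θ| * √(t ^ 2 + (1 - w))) := by
        gcongr
        exact h_lip.trans (by gcongr)
    _ = s * ((1 / 2 + (s + 1)) * 68 ^ (s + 1)) * |θ' - θ| *
        (t ^ 2 + (1 - w)) ^ (-(s + 1 / 2)) := by
        rw [h_rpow]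
        ring

end Lipschitz

section PoissonIntegral

/-- The time derivative of the integral that represents the Jacobi–Poisson kernel in
`tsum_exp_mul_trigP_mul_trigP`. -/
def poissonIntegralDeriv (a b t θ φ : ℝ) : ℝ :=
  ∫ q, poissonDensityDeriv (a + b + 2) t (halfAngleForm θ φ q) ∂(sinProdMeasure a b)

variable {a b : ℝ} (ha : 0 ≤ a) (hb : 0 ≤ b)
include ha hb

lemma integrable_comp_halfAngleForm {θ φ : ℝ} (hθ : θ ∈ Icc 0 π) (hφ : φ ∈ Icc 0 π) {f : ℝ → ℝ}
    (hf : ContinuousOn f (Icc (-1) 1)) :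
    Integrable (fun q => f (halfAngleForm θ φ q)) (sinProdMeasure a b) := by
  have := isFiniteMeasure_sinProdMeasure ha hb
  obtain ⟨C, hC⟩ := isCompact_Icc.exists_bound_of_continuousOn hf
  exact .of_bound (hf.comp_continuous (continuous_halfAngleForm θ φ)
    (halfAngleForm_mem_Icc hθ hφ)).aestronglyMeasurable C
    (.of_forall fun q => hC _ (halfAngleForm_mem_Icc hθ hφ q))

lemma integrable_poissonDensityDeriv_halfAngleForm {s t θ φ : ℝ} (ht : 0 < t) (hθ : θ ∈ Icc 0 π)
    (hφ : φ ∈ Icc 0 π) :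
    Integrable (fun q => poissonDensityDeriv s t (halfAngleForm θ φ q)) (sinProdMeasure a b) :=
  integrable_comp_halfAngleForm ha hb hθ hφ fun _ hw =>
    (hasDerivAt_poissonDensityDeriv_right ht hw.2 s).continuousAt.continuousWithinAt

lemma integrable_add_one_sub_halfAngleForm_rpow {p δ θ φ : ℝ} (hp : 0 ≤ p) (hδ : 0 < δ)
    (hθ : θ ∈ Icc 0 π) (hφ : φ ∈ Icc 0 π) :
    Integrable (fun q => (δ + (1 - halfAngleForm θ φ q)) ^ (-p)) (sinProdMeasure a b) := by
  have := isFiniteMeasure_sinProdMeasure ha hb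
  exact integrable_rpow_neg_of_le (by have := continuous_halfAngleForm θ φ; fun_prop) hδ
    (fun q => by linarith [(halfAngleForm_mem_Icc hθ hφ q).2]) hp

lemma exists_integral_add_one_sub_halfAngleForm_rpow_le {p : ℝ} (hp : a + b + 1 < p) :
    ∃ C : ℝ, 0 ≤ C ∧ ∀ θ ∈ Icc 0 π, ∀ φ ∈ Icc 0 π, θ ≠ φ → ∀ δ : ℝ, 0 ≤ δ →
      ∫ q, (δ + (1 - halfAngleForm θ φ q)) ^ (-p) ∂(sinProdMeasure a b) ≤
        C * ((δ + halfAngleDist θ φ) ^ (-(p - a - b - 1)) * volumeFactor a b θ φ) := by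
  obtain ⟨C, hC, h_bound⟩ := exists_integral_sinProdMeasure_rpow_le ha hb hp
  refine ⟨C, hC, fun θ hθ φ hφ hne δ hδ => ?_⟩
  have h_dist := halfAngleDist_pos hθ hφ hne
  have h_sin : (δ + halfAngleDist θ φ + sin (θ / 2) * sin (φ / 2)) ^ (-(a + 1 / 2)) ≤
      (1 - cos (θ / 2) * cos (φ / 2)) ^ (-(a + 1 / 2)) :=
    rpow_le_rpow_of_nonpos (one_sub_cos_mul_cos_pos hθ hφ hne)
      (by linarith [halfAngleDist_add_sin_mul_sin θ φ]) (by linarith)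
  have h_cos : (δ + halfAngleDist θ φ + cos (θ / 2) * cos (φ / 2)) ^ (-(b + 1 / 2)) ≤
      (1 - sin (θ / 2) * sin (φ / 2)) ^ (-(b + 1 / 2)) :=
    rpow_le_rpow_of_nonpos (one_sub_sin_mul_sin_pos hθ hφ hne)
      (by linarith [halfAngleDist_add_cos_mul_cos θ φ]) (by linarith)
  have h_sin_nonneg := mul_nonneg (sin_half_nonneg hθ) (sin_half_nonneg hφ)
  have h_cos_nonneg := mul_nonneg (cos_half_nonneg hθ) (cos_half_nonneg hφ)
  simp_rw [one_sub_halfAngleForm, ← add_assoc]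
  refine (h_bound (δ + halfAngleDist θ φ) _ _ (by positivity) h_sin_nonneg h_cos_nonneg).trans ?_
  rw [mul_assoc (_ ^ _), volumeFactor]
  gcongr
  exact rpow_nonneg (one_sub_cos_mul_cos_pos hθ hφ hne).le _

lemma exists_abs_poissonIntegralDeriv_le :
    ∃ C : ℝ, 0 ≤ C ∧ ∀ θ ∈ Icc 0 π, ∀ φ ∈ Icc 0 π, θ ≠ φ → ∀ t : ℝ, 0 < t →
      |poissonIntegralDeriv a b t θ φ| ≤
        C * ((t ^ 2 + halfAngleDist θ φ)⁻¹ * volumeFactor a b θ φ) := by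
  obtain ⟨C, hC, h_bound⟩ :=
    exists_integral_add_one_sub_halfAngleForm_rpow_le ha hb (p := a + b + 2) (by linarith)
  set K := (1 / 2 + (a + b + 2)) * 34 ^ (a + b + 2)
  refine ⟨K * C, by positivity, fun θ hθ φ hφ hne t ht => ?_⟩
  have h_int := h_bound θ hθ φ hφ hne (t ^ 2) (sq_nonneg t)
  rw [show a + b + 2 - a - b - 1 = 1 by ring, rpow_neg_one] at h_int
  have h_integrable := integrable_add_one_sub_halfAngleForm_rpow ha hb (p := a + b + 2)
    (by positivity) (sq_pos_of_pos ht) hθ hφ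
  rw [poissonIntegralDeriv, ← norm_eq_abs]
  calc ‖∫ q, poissonDensityDeriv (a + b + 2) t (halfAngleForm θ φ q) ∂(sinProdMeasure a b)‖
      ≤ ∫ q, K * (t ^ 2 + (1 - halfAngleForm θ φ q)) ^ (-(a + b + 2)) ∂(sinProdMeasure a b) :=
        norm_integral_le_of_norm_le (h_integrable.const_mul _) (.of_forall fun q =>
          abs_poissonDensityDeriv_le_rpow (by linarith) ht (halfAngleForm_mem_Icc hθ hφ q))
    _ ≤ K * C * ((t ^ 2 + halfAngleDist θ φ)⁻¹ * volumeFactor a b θ φ) := by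
        rw [integral_const_mul, mul_assoc K]
        gcongr

lemma exists_abs_poissonIntegralDeriv_sub_le :
    ∃ C : ℝ, 0 ≤ C ∧ ∀ θ ∈ Icc 0 π, ∀ θ' ∈ Icc 0 π, ∀ φ ∈ Icc 0 π, θ ≠ φ →
      |θ' - θ| ≤ |θ - φ| / 20 → ∀ t : ℝ, 0 < t →
      |poissonIntegralDeriv a b t θ' φ - poissonIntegralDeriv a b t θ φ| ≤
        C * |θ' - θ| * (√(halfAngleDist θ φ))⁻¹ *
          ((t ^ 2 + halfAngleDist θ φ)⁻¹ * volumeFactor a b θ φ) := by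
  obtain ⟨C, hC, h_bound⟩ := exists_integral_add_one_sub_halfAngleForm_rpow_le ha hb
    (p := a + b + 2 + 1 / 2) (by linarith)
  set K := (a + b + 2) * ((1 / 2 + (a + b + 2 + 1)) * 68 ^ (a + b + 2 + 1))
  refine ⟨K * C, by positivity, fun θ hθ θ' hθ' φ hφ hne h_near t ht => ?_⟩
  have h_int := h_bound θ hθ φ hφ hne (t ^ 2) (sq_nonneg t)
  have h_dist := halfAngleDist_pos hθ hφ hne
  have h_vol := volumeFactor_pos hθ hφ hne a b
  have h_rpow : (t ^ 2 + halfAngleDist θ φ) ^ (-(a + b + 2 + 1 / 2 - a - b - 1)) ≤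
      (√(halfAngleDist θ φ))⁻¹ * (t ^ 2 + halfAngleDist θ φ)⁻¹ := by
    rw [show -(a + b + 2 + 1 / 2 - a - b - 1) = -(1 / 2) + -1 by ring, rpow_add (by positivity),
      rpow_neg_one, rpow_neg (by positivity), ← sqrt_eq_rpow]
    gcongr
    linarith [sq_nonneg t]
  have h_integrable := integrable_add_one_sub_halfAngleForm_rpow ha hb (p := a + b + 2 + 1 / 2)
    (by positivity) (sq_pos_of_pos ht) hθ hφ
  rw [poissonIntegralDeriv, poissonIntegralDeriv, ← integral_sub
    (integrable_poissonDensityDeriv_halfAngleForm ha hb ht hθ' hφ)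
    (integrable_poissonDensityDeriv_halfAngleForm ha hb ht hθ hφ), ← norm_eq_abs]
  calc ‖∫ q, (poissonDensityDeriv (a + b + 2) t (halfAngleForm θ' φ q) -
          poissonDensityDeriv (a + b + 2) t (halfAngleForm θ φ q)) ∂(sinProdMeasure a b)‖
      ≤ ∫ q, K * |θ' - θ| * (t ^ 2 + (1 - halfAngleForm θ φ q)) ^ (-(a + b + 2 + 1 / 2))
          ∂(sinProdMeasure a b) :=
        norm_integral_le_of_norm_le (h_integrable.const_mul _) (.of_forall fun q =>
          abs_poissonDensityDeriv_halfAngleForm_sub_le (by linarith) ht hθ hθ' hφ h_near q)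
    _ ≤ K * |θ' - θ| * (C * ((√(halfAngleDist θ φ))⁻¹ * (t ^ 2 + halfAngleDist θ φ)⁻¹ *
          volumeFactor a b θ φ)) := by
        rw [integral_const_mul]
        gcongr
        exact h_int.trans (by gcongr)
    _ = K * C * |θ' - θ| * (√(halfAngleDist θ φ))⁻¹ *
          ((t ^ 2 + halfAngleDist θ φ)⁻¹ * volumeFactor a b θ φ) := by ring

end PoissonIntegral

/-! ### Laplace integrals -/

section LaplaceIntegrals

/-- An integral against a non-measurable factor takes the junk value `0`: the quotient of the
integrand by an analytic function that vanishes only on a null set would be measurable. -/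
lemma integral_mul_eq_zero_of_not_aestronglyMeasurable {f g : ℝ → ℝ} {s : Set ℝ}
    (hs : MeasurableSet s) (hs_conn : IsPreconnected s) (hf : AnalyticOnNhd ℝ f s)
    (hg : ¬AEStronglyMeasurable g (volume.restrict s)) : ∫ t in s, f t * g t = 0 := by
  rcases hf.eqOn_zero_or_eventually_ne_zero_of_preconnected hs_conn with h_zero | h_ne
  · exact setIntegral_eq_zero_of_forall_eq_zero fun t ht => by simp [h_zero ht]
  refine integral_undef fun h_integrable => hg ?_
  have hf_meas := (hf.continuousOn.aestronglyMeasurable (μ := volume) hs).aemeasurable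
  refine (h_integrable.aestronglyMeasurable.aemeasurable.div hf_meas).aestronglyMeasurable.congr ?_
  filter_upwards [ae_restrict_le_codiscreteWithin (μ := volume) hs h_ne] with t ht
  exact mul_div_cancel_left₀ _ ht

lemma inv_sq_add_eq {d : ℝ} (hd : 0 < d) (t : ℝ) :
    (t ^ 2 + d)⁻¹ = d⁻¹ * (1 + ((√d)⁻¹ * t) ^ 2)⁻¹ := by
  rw [← mul_inv, mul_pow, inv_pow, sq_sqrt hd.le]
  congr 1
  field_simp
  ring

lemma integrableOn_inv_sq_add {d : ℝ} (hd : 0 < d) :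
    IntegrableOn (fun t : ℝ => (t ^ 2 + d)⁻¹) (Ioi 0) := by
  simp_rw [inv_sq_add_eq hd]
  exact Integrable.const_mul ((integrableOn_Ioi_comp_mul_left_iff (fun x : ℝ => (1 + x ^ 2)⁻¹) 0
    (inv_pos.2 (sqrt_pos.2 hd))).2 integrable_inv_one_add_sq.integrableOn) _

lemma integral_inv_sq_add {d : ℝ} (hd : 0 < d) :
    ∫ t in Ioi (0 : ℝ), (t ^ 2 + d)⁻¹ = π / 2 * (√d)⁻¹ := by
  have h_sqrt := sqrt_pos.2 hd
  simp_rw [inv_sq_add_eq hd]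
  rw [integral_const_mul,
    integral_comp_mul_left_Ioi (fun x : ℝ => (1 + x ^ 2)⁻¹) 0 (inv_pos.2 h_sqrt), mul_zero,
    integral_Ioi_inv_one_add_sq, arctan_zero, sub_zero, inv_inv, smul_eq_mul]
  field_simp
  rw [sq_sqrt hd.le]

section

variable {f g : ℝ → ℝ} {K M d : ℝ} (hd : 0 < d) (hf : ∀ t, 0 < t → |f t| ≤ K * (t ^ 2 + d)⁻¹)
  (hg : ∀ t, 0 < t → |g t| ≤ M)
include hf hg

lemma ae_norm_mul_le_inv_sq_add :
    ∀ᵐ t ∂(volume.restrict (Ioi 0)), ‖f t * g t‖ ≤ K * M * (t ^ 2 + d)⁻¹ := by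
  filter_upwards [ae_restrict_mem measurableSet_Ioi] with t ht
  rw [norm_eq_abs, abs_mul, mul_right_comm]
  exact mul_le_mul (hf t ht) (hg t ht) (abs_nonneg _) ((abs_nonneg _).trans (hf t ht))

include hd

lemma integrableOn_mul_of_abs_le_inv_sq_add
    (hf_meas : AEStronglyMeasurable f (volume.restrict (Ioi 0)))
    (hg_meas : AEStronglyMeasurable g (volume.restrict (Ioi 0))) :
    IntegrableOn (fun t => f t * g t) (Ioi 0) :=
  ((integrableOn_inv_sq_add hd).const_mul _).mono' (hf_meas.mul hg_meas)
    (ae_norm_mul_le_inv_sq_add hf hg)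

lemma abs_integral_mul_le_of_abs_le_inv_sq_add :
    |∫ t in Ioi 0, f t * g t| ≤ K * M * (π / 2 * (√d)⁻¹) := by
  rw [← integral_inv_sq_add hd, ← integral_const_mul, ← norm_eq_abs]
  exact norm_integral_le_of_norm_le ((integrableOn_inv_sq_add hd).const_mul _)
    (ae_norm_mul_le_inv_sq_add hf hg)

end

end LaplaceIntegrals

section PoissonSum

/-- The Jacobi–Poisson kernel with the factor `sin θ sin φ / 8` of `jHtil` removed. -/
def poissonSum (a b t θ φ : ℝ) : ℝ :=
  ∑' n : ℕ, exp (-t * (n + (a + b + 1) / 2)) * trigP a b n θ * trigP a b n φ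

/-- The Laplace-type transform of the multiplier symbol `m` against the time derivative of the
Jacobi–Poisson kernel; `lapKer` is a multiple of it. -/
def laplaceIntegral (a b : ℝ) (m : ℝ → ℝ) (θ φ : ℝ) : ℝ :=
  ∫ t in Ioi (0 : ℝ), deriv (fun s => poissonSum a b s θ φ) t * m t

lemma poissonSum_comm (a b t θ φ : ℝ) : poissonSum a b t θ φ = poissonSum a b t φ θ :=
  tsum_congr fun _ => mul_right_comm _ _ _

lemma laplaceIntegral_comm (a b : ℝ) (m : ℝ → ℝ) (θ φ : ℝ) :
    laplaceIntegral a b m θ φ = laplaceIntegral a b m φ θ := by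
  simp_rw [laplaceIntegral, poissonSum_comm a b _ θ φ]

lemma jHtil_eq_poissonSum {α β : ℝ} (hα : -1 < α) (hβ : -1 < β) (t θ φ : ℝ) :
    jHtil α β t θ φ = 1 / 8 * sin θ * sin φ * poissonSum (α + 1) (β + 1) t θ φ := by
  have h_sqrt (n : ℕ) : √(jLam α β (n + 1)) = n + (α + 1 + (β + 1) + 1) / 2 := by
    have : (0 : ℝ) ≤ n := n.cast_nonneg
    rw [jLam, sqrt_sq (by push_cast; linarith)]
    push_cast
    ring
  simp_rw [jHtil, poissonSum, h_sqrt]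

lemma lapKer_eq_laplaceIntegral {α β : ℝ} (hα : -1 < α) (hβ : -1 < β) (m : ℝ → ℝ) (θ φ : ℝ) :
    lapKer α β m θ φ = -(1 / 8 * sin θ * sin φ * laplaceIntegral (α + 1) (β + 1) m θ φ) := by
  simp_rw [lapKer, laplaceIntegral, jHtil_eq_poissonSum hα hβ, deriv_const_mul_field,
    ← integral_const_mul, mul_assoc]

lemma lapKer_comm {α β : ℝ} (hα : -1 < α) (hβ : -1 < β) (m : ℝ → ℝ) (θ φ : ℝ) :
    lapKer α β m θ φ = lapKer α β m φ θ := by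
  rw [lapKer_eq_laplaceIntegral hα hβ, lapKer_eq_laplaceIntegral hα hβ, laplaceIntegral_comm,
    mul_right_comm (1 / 8)]

variable {a b : ℝ} (ha : 0 ≤ a) (hb : 0 ≤ b)
include ha hb

lemma hasDerivAt_integral_poissonDensity {t θ φ : ℝ} (hθ : θ ∈ Icc 0 π) (hφ : φ ∈ Icc 0 π)
    (ht : 0 < t) :
    HasDerivAt
      (fun t => ∫ q, poissonDensity (a + b + 2) t (halfAngleForm θ φ q) ∂(sinProdMeasure a b))
      (poissonIntegralDeriv a b t θ φ) t := by
  have := isFiniteMeasure_sinProdMeasure ha hb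
  have h_integrable (x : ℝ) (hx : 0 < x) :
      Integrable (fun q => poissonDensity (a + b + 2) x (halfAngleForm θ φ q))
        (sinProdMeasure a b) :=
    integrable_comp_halfAngleForm ha hb hθ hφ <| continuousOn_const.mul <|
      ContinuousOn.rpow_const (by fun_prop) fun w hw => Or.inl (cosh_half_sub_pos hx hw.2).ne'
  have h_pos (x : ℝ) (hx : x ∈ Ioi (t / 2)) : 0 < x := (half_pos ht).trans hx
  refine (hasDerivAt_integral_of_dominated_loc_of_deriv_le (s := Ioi (t / 2))
    (F' := fun t q => poissonDensityDeriv (a + b + 2) t (halfAngleForm θ φ q))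
    (bound := fun _ => (1 / 2 + (a + b + 2)) * 34 ^ (a + b + 2) * ((t / 2) ^ 2) ^ (-(a + b + 2)))
    (Ioi_mem_nhds (half_lt_self ht)) ?_ (h_integrable t ht)
    (integrable_poissonDensityDeriv_halfAngleForm ha hb ht hθ hφ).aestronglyMeasurable
    (.of_forall fun q x hx => ?_) (integrable_const _) (.of_forall fun q x hx =>
      hasDerivAt_poissonDensity (h_pos x hx) (halfAngleForm_mem_Icc hθ hφ q).2 _)).2
  · filter_upwards [Ioi_mem_nhds ht] with x hx using (h_integrable x hx).aestronglyMeasurable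
  · have hw := halfAngleForm_mem_Icc hθ hφ q
    refine (abs_poissonDensityDeriv_le_rpow (by linarith) (h_pos x hx) hw).trans ?_
    refine mul_le_mul_of_nonneg_left (rpow_le_rpow_of_nonpos (by positivity) ?_ (by linarith))
      (by positivity)
    have : (t / 2) ^ 2 ≤ x ^ 2 := pow_le_pow_left₀ (by positivity) (le_of_lt hx) 2
    linarith [hw.2]

lemma deriv_poissonSum {t θ φ : ℝ} (hθ : θ ∈ Icc 0 π) (hφ : φ ∈ Icc 0 π) (ht : 0 < t) :
    deriv (fun t => poissonSum a b t θ φ) t =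
      poissonConst a b * poissonIntegralDeriv a b t θ φ := by
  refine (((hasDerivAt_integral_poissonDensity ha hb hθ hφ ht).const_mul
    (poissonConst a b)).congr_of_eventuallyEq ?_).deriv
  filter_upwards [Ioi_mem_nhds ht] with x hx using tsum_exp_mul_trigP_mul_trigP ha hb hθ hφ hx

lemma analyticOnNhd_deriv_poissonSum (θ φ : ℝ) :
    AnalyticOnNhd ℝ (deriv fun t => poissonSum a b t θ φ) (Ioi 0) := by
  refine AnalyticOnNhd.deriv fun t ht => ?_
  have h_series : (fun t => poissonSum a b t θ φ) = fun t => exp (-t * ((a + b + 1) / 2)) *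
      ∑' n : ℕ, (trigP a b n θ * trigP a b n φ) * exp (-t) ^ n := by
    ext t
    rw [poissonSum, ← tsum_mul_left]
    refine tsum_congr fun n => ?_
    rw [mul_add, exp_add, mul_comm (-t) (n : ℝ), exp_nat_mul]
    ring
  have h_exp_lt : |exp (-t)| < 1 := by
    rw [abs_of_pos (exp_pos _)]
    exact exp_lt_one_iff.2 (neg_lt_zero.2 ht)
  have h_tsum := analyticAt_tsum_mul_pow (fun r hr hr1 =>
    summable_abs_trigP_mul_pow (a := a) (b := b) (by linarith) (by linarith) θ φ hr hr1) h_exp_lt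
  rw [h_series]
  exact AnalyticAt.fun_mul (by fun_prop)
    (AnalyticAt.fun_comp (f := fun t : ℝ => exp (-t)) h_tsum (by fun_prop))

lemma exists_abs_deriv_poissonSum_le :
    ∃ C : ℝ, 0 ≤ C ∧ ∀ θ ∈ Icc 0 π, ∀ φ ∈ Icc 0 π, θ ≠ φ → ∀ t : ℝ, 0 < t →
      |deriv (fun t => poissonSum a b t θ φ) t| ≤
        C * volumeFactor a b θ φ * (t ^ 2 + halfAngleDist θ φ)⁻¹ := by
  obtain ⟨C, hC, h_bound⟩ := exists_abs_poissonIntegralDeriv_le ha hb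
  refine ⟨|poissonConst a b| * C, by positivity, fun θ hθ φ hφ hne t ht => ?_⟩
  rw [deriv_poissonSum ha hb hθ hφ ht, abs_mul]
  refine (mul_le_mul_of_nonneg_left (h_bound θ hθ φ hφ hne t ht) (abs_nonneg _)).trans_eq ?_
  ring

lemma exists_abs_deriv_poissonSum_sub_le :
    ∃ C : ℝ, 0 ≤ C ∧ ∀ θ ∈ Icc 0 π, ∀ θ' ∈ Icc 0 π, ∀ φ ∈ Icc 0 π, θ ≠ φ →
      |θ' - θ| ≤ |θ - φ| / 20 → ∀ t : ℝ, 0 < t →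
      |deriv (fun t => poissonSum a b t θ' φ) t - deriv (fun t => poissonSum a b t θ φ) t| ≤
        C * |θ' - θ| * (√(halfAngleDist θ φ))⁻¹ * volumeFactor a b θ φ *
          (t ^ 2 + halfAngleDist θ φ)⁻¹ := by
  obtain ⟨C, hC, h_bound⟩ := exists_abs_poissonIntegralDeriv_sub_le ha hb
  refine ⟨|poissonConst a b| * C, by positivity, fun θ hθ θ' hθ' φ hφ hne h_near t ht => ?_⟩
  rw [deriv_poissonSum ha hb hθ hφ ht, deriv_poissonSum ha hb hθ' hφ ht, ← mul_sub, abs_mul]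
  refine (mul_le_mul_of_nonneg_left (h_bound θ hθ θ' hθ' φ hφ hne h_near t ht)
    (abs_nonneg _)).trans_eq ?_
  ring

end PoissonSum

/-! ### Kernel bounds in terms of the volume factor -/

section KernelBounds

lemma abs_sin_mul_sub_sin_mul_le {θ θ' x x' K D : ℝ} (hx : |x| ≤ K)
    (h_sub : |x' - x| ≤ |θ' - θ| * D) (h_near : |θ' - θ| * D ≤ K) (h_sin : 0 ≤ sin θ) :
    |sin θ' * x' - sin θ * x| ≤ |θ' - θ| * (2 * K + sin θ * D) := by
  have hx' : |x'| ≤ 2 * K := by linarith [abs_sub_abs_le_abs_sub x' x]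
  calc |sin θ' * x' - sin θ * x|
      = |(sin θ' - sin θ) * x' + sin θ * (x' - x)| := by ring_nf
    _ ≤ |sin θ' - sin θ| * |x'| + sin θ * |x' - x| := by
        refine (abs_add_le _ _).trans_eq ?_
        rw [abs_mul, abs_mul, abs_of_nonneg h_sin]
    _ ≤ |θ' - θ| * (2 * K) + sin θ * (|θ' - θ| * D) := by
        gcongr ?_ * ?_ + sin θ * ?_
        exact abs_sin_sub_sin_le θ' θ
    _ = |θ' - θ| * (2 * K + sin θ * D) := by ring

lemma abs_sub_mul_inv_halfAngleDist_le {θ θ' φ : ℝ} (hθ : θ ∈ Icc 0 π) (hφ : φ ∈ Icc 0 π)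
    (hne : θ ≠ φ) (h_near : |θ' - θ| ≤ |θ - φ| / 20) :
    |θ' - θ| * (halfAngleDist θ φ)⁻¹ ≤ (√(halfAngleDist θ φ))⁻¹ := by
  have h_dist := halfAngleDist_pos hθ hφ hne
  have h_sq : (θ' - θ) ^ 2 ≤ halfAngleDist θ φ := by
    have := pow_le_pow_left₀ (abs_nonneg _) h_near 2
    rw [div_pow, sq_abs, sq_abs] at this
    linarith [sq_div_twenty_le_halfAngleDist hθ hφ, sq_nonneg (θ - φ)]
  rw [mul_inv_le_iff₀ h_dist, inv_mul_eq_div, div_sqrt]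
  exact abs_le_sqrt h_sq

section

variable {a b : ℝ} (ha : 0 ≤ a) (hb : 0 ≤ b)
include ha hb

lemma exists_abs_laplaceIntegral_le :
    ∃ C : ℝ, 0 ≤ C ∧ ∀ (m : ℝ → ℝ) (M : ℝ), (∀ t, 0 < t → |m t| ≤ M) →
      ∀ θ ∈ Icc 0 π, ∀ φ ∈ Icc 0 π, θ ≠ φ →
      |laplaceIntegral a b m θ φ| ≤
        C * M * ((√(halfAngleDist θ φ))⁻¹ * volumeFactor a b θ φ) := by
  obtain ⟨C, hC, h_bound⟩ := exists_abs_deriv_poissonSum_le ha hb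
  refine ⟨C * (π / 2), by positivity, fun m M hm θ hθ φ hφ hne => ?_⟩
  refine (abs_integral_mul_le_of_abs_le_inv_sq_add (halfAngleDist_pos hθ hφ hne)
    (h_bound θ hθ φ hφ hne) hm).trans_eq ?_
  ring

lemma laplaceIntegral_sub {m : ℝ → ℝ} {M : ℝ} (hm : ∀ t, 0 < t → |m t| ≤ M) {θ θ' φ : ℝ}
    (hθ : θ ∈ Icc 0 π) (hθ' : θ' ∈ Icc 0 π) (hφ : φ ∈ Icc 0 π) (hne : θ ≠ φ) (hne' : θ' ≠ φ) :
    laplaceIntegral a b m θ' φ - laplaceIntegral a b m θ φ =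
      ∫ t in Ioi (0 : ℝ), (deriv (fun s => poissonSum a b s θ' φ) t -
        deriv (fun s => poissonSum a b s θ φ) t) * m t := by
  have h_analytic := analyticOnNhd_deriv_poissonSum ha hb (φ := φ)
  by_cases hm_meas : AEStronglyMeasurable m (volume.restrict (Ioi 0))
  · obtain ⟨C, -, h_bound⟩ := exists_abs_deriv_poissonSum_le ha hb
    have h_integrable (x : ℝ) (hx : x ∈ Icc 0 π) (hx_ne : x ≠ φ) :
        IntegrableOn (fun t => deriv (fun s => poissonSum a b s x φ) t * m t) (Ioi 0) :=
      integrableOn_mul_of_abs_le_inv_sq_add (halfAngleDist_pos hx hφ hx_ne)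
        (h_bound x hx φ hφ hx_ne) hm (measurable_deriv _).aestronglyMeasurable hm_meas
    simp_rw [sub_mul]
    exact (integral_sub (h_integrable θ' hθ' hne') (h_integrable θ hθ hne)).symm
  · have h_zero {f : ℝ → ℝ} (hf : AnalyticOnNhd ℝ f (Ioi 0)) : ∫ t in Ioi 0, f t * m t = 0 :=
      integral_mul_eq_zero_of_not_aestronglyMeasurable measurableSet_Ioi isPreconnected_Ioi hf
        hm_meas
    rw [laplaceIntegral, laplaceIntegral, h_zero (h_analytic θ), h_zero (h_analytic θ'), sub_zero]
    exact (h_zero fun t ht => (h_analytic θ' t ht).fun_sub (h_analytic θ t ht)).symm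

lemma exists_abs_laplaceIntegral_sub_le :
    ∃ C : ℝ, 0 ≤ C ∧ ∀ (m : ℝ → ℝ) (M : ℝ), (∀ t, 0 < t → |m t| ≤ M) →
      ∀ θ ∈ Icc 0 π, ∀ θ' ∈ Icc 0 π, ∀ φ ∈ Icc 0 π, θ ≠ φ → |θ' - θ| ≤ |θ - φ| / 20 →
      |laplaceIntegral a b m θ' φ - laplaceIntegral a b m θ φ| ≤
        |θ' - θ| * (C * M * ((halfAngleDist θ φ)⁻¹ * volumeFactor a b θ φ)) := by
  obtain ⟨C, hC, h_bound⟩ := exists_abs_deriv_poissonSum_sub_le ha hb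
  refine ⟨C * (π / 2), by positivity, fun m M hm θ hθ θ' hθ' φ hφ hne h_near => ?_⟩
  have h_dist := halfAngleDist_pos hθ hφ hne
  have hne' : θ' ≠ φ := by
    rintro rfl
    rw [abs_sub_comm] at h_near
    linarith [abs_pos.2 (sub_ne_zero.2 hne)]
  rw [laplaceIntegral_sub ha hb hm hθ hθ' hφ hne hne']
  refine (abs_integral_mul_le_of_abs_le_inv_sq_add h_dist
    (h_bound θ hθ θ' hθ' φ hφ hne h_near) hm).trans_eq ?_
  rw [← mul_self_sqrt h_dist.le, mul_inv, mul_self_sqrt h_dist.le]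
  ring

lemma exists_abs_sin_mul_laplaceIntegral_sub_le :
    ∃ C : ℝ, 0 ≤ C ∧ ∀ (m : ℝ → ℝ) (M : ℝ), (∀ t, 0 < t → |m t| ≤ M) →
      ∀ θ ∈ Icc 0 π, ∀ θ' ∈ Icc 0 π, ∀ φ ∈ Icc 0 π, θ ≠ φ → |θ' - θ| ≤ |θ - φ| / 20 →
      |sin θ' * laplaceIntegral a b m θ' φ - sin θ * laplaceIntegral a b m θ φ| ≤
        C * M * (((√(halfAngleDist θ φ))⁻¹ + sin θ * (halfAngleDist θ φ)⁻¹) *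
          volumeFactor a b θ φ) * |θ' - θ| := by
  obtain ⟨C₁, hC₁, h_size⟩ := exists_abs_laplaceIntegral_le ha hb
  obtain ⟨C₂, hC₂, h_lip⟩ := exists_abs_laplaceIntegral_sub_le ha hb
  refine ⟨2 * (C₁ + C₂), by positivity, fun m M hm θ hθ θ' hθ' φ hφ hne h_near => ?_⟩
  have hM : 0 ≤ M := (abs_nonneg _).trans (hm 1 one_pos)
  have h_dist := halfAngleDist_pos hθ hφ hne
  have h_vol := volumeFactor_pos hθ hφ hne a b
  have h_sin := sin_nonneg_of_mem_Icc hθ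
  have h_quot := abs_sub_mul_inv_halfAngleDist_le hθ hφ hne h_near
  replace h_size := h_size m M hm θ hθ φ hφ hne
  replace h_lip := h_lip m M hm θ hθ θ' hθ' φ hφ hne h_near
  set V := volumeFactor a b θ φ
  set d := halfAngleDist θ φ
  set C := C₁ + C₂
  have h_size_lip : |θ' - θ| * (C * M * (d⁻¹ * V)) ≤ C * M * ((√d)⁻¹ * V) :=
    calc |θ' - θ| * (C * M * (d⁻¹ * V)) = C * M * (|θ' - θ| * d⁻¹ * V) := by ring
      _ ≤ C * M * ((√d)⁻¹ * V) := by gcongr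
  have h_half : 1 / 2 * (sin θ * d⁻¹) ≤ sin θ * d⁻¹ :=
    mul_le_of_le_one_left (by positivity) (by norm_num)
  have hC₁_le : C₁ ≤ C := le_add_of_nonneg_right hC₂
  have hC₂_le : C₂ ≤ C := le_add_of_nonneg_left hC₁
  calc |sin θ' * laplaceIntegral a b m θ' φ - sin θ * laplaceIntegral a b m θ φ|
      ≤ |θ' - θ| * (2 * (C * M * ((√d)⁻¹ * V)) + sin θ * (C * M * (d⁻¹ * V))) :=
        abs_sin_mul_sub_sin_mul_le (h_size.trans (by gcongr)) (h_lip.trans (by gcongr))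
          h_size_lip h_sin
    _ = 2 * C * M * (((√d)⁻¹ + 1 / 2 * (sin θ * d⁻¹)) * V) * |θ' - θ| := by ring
    _ ≤ 2 * C * M * (((√d)⁻¹ + sin θ * d⁻¹) * V) * |θ' - θ| := by
        gcongr

end

section

variable {α β : ℝ} (hα : -1 < α) (hβ : -1 < β)
include hα hβ

lemma exists_abs_lapKer_le :
    ∃ C : ℝ, 0 ≤ C ∧ ∀ (m : ℝ → ℝ) (M : ℝ), (∀ t, 0 < t → |m t| ≤ M) →
      ∀ θ ∈ Ioo 0 π, ∀ φ ∈ Ioo 0 π, θ ≠ φ →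
      |lapKer α β m θ φ| ≤ C * M *
        (sin θ * sin φ * (√(halfAngleDist θ φ))⁻¹ * volumeFactor (α + 1) (β + 1) θ φ) := by
  obtain ⟨C, hC, h_bound⟩ := exists_abs_laplaceIntegral_le (a := α + 1) (b := β + 1)
    (by linarith) (by linarith)
  refine ⟨1 / 8 * C, by positivity, fun m M hm θ hθ φ hφ hne => ?_⟩
  have h_sin : 0 ≤ 1 / 8 * sin θ * sin φ := by
    have := sin_pos_of_mem_Ioo hθ
    have := sin_pos_of_mem_Ioo hφ
    positivity
  rw [lapKer_eq_laplaceIntegral hα hβ, abs_neg, abs_mul, abs_of_nonneg h_sin]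
  refine (mul_le_mul_of_nonneg_left (h_bound m M hm θ (Ioo_subset_Icc_self hθ) φ
    (Ioo_subset_Icc_self hφ) hne) h_sin).trans_eq ?_
  ring

lemma exists_abs_deriv_lapKer_le :
    ∃ C : ℝ, 0 ≤ C ∧ ∀ (m : ℝ → ℝ) (M : ℝ), (∀ t, 0 < t → |m t| ≤ M) →
      ∀ θ ∈ Ioo 0 π, ∀ φ ∈ Ioo 0 π, θ ≠ φ →
      |deriv (fun θ' => lapKer α β m θ' φ) θ| ≤ C * M *
        (sin φ * ((√(halfAngleDist θ φ))⁻¹ + sin θ * (halfAngleDist θ φ)⁻¹) *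
          volumeFactor (α + 1) (β + 1) θ φ) := by
  obtain ⟨C, hC, h_lip⟩ := exists_abs_sin_mul_laplaceIntegral_sub_le (a := α + 1) (b := β + 1)
    (by linarith) (by linarith)
  refine ⟨1 / 8 * C, by positivity, fun m M hm θ hθ φ hφ hne => ?_⟩
  have hθ_Icc := Ioo_subset_Icc_self hθ
  have hφ_Icc := Ioo_subset_Icc_self hφ
  have hM : 0 ≤ M := (abs_nonneg _).trans (hm 1 one_pos)
  have h_dist := halfAngleDist_pos hθ_Icc hφ_Icc hne
  have h_vol := volumeFactor_pos hθ_Icc hφ_Icc hne (α + 1) (β + 1)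
  have h_sin_θ := sin_pos_of_mem_Ioo hθ
  have h_sin_φ := sin_pos_of_mem_Ioo hφ
  have h_radius : 0 < |θ - φ| / 20 := div_pos (abs_pos.2 (sub_ne_zero.2 hne)) (by norm_num)
  rw [← norm_eq_abs]
  refine norm_deriv_le_of_lip' (by positivity) ?_
  filter_upwards [isOpen_Ioo.mem_nhds hθ, Metric.ball_mem_nhds θ h_radius] with θ' hθ' h_ball
  have h_lip := h_lip m M hm θ hθ_Icc θ' (Ioo_subset_Icc_self hθ') φ hφ_Icc hne (le_of_lt h_ball)
  have h_factor (x : ℝ) : lapKer α β m x φ =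
      -(1 / 8 * sin φ) * (sin x * laplaceIntegral (α + 1) (β + 1) m x φ) := by
    rw [lapKer_eq_laplaceIntegral hα hβ]
    ring
  rw [h_factor, h_factor, ← mul_sub, norm_mul, norm_neg,
    norm_of_nonneg (by positivity : 0 ≤ 1 / 8 * sin φ)]
  refine (mul_le_mul_of_nonneg_left h_lip (by positivity)).trans_eq ?_
  rw [norm_eq_abs]
  ring

end

end KernelBounds

/-! ### Comparison with the measure of balls -/

section PowerIntegrals

lemma rpow_le_of_mul_le_of_le {c s v : ℝ} (e : ℝ) (hc : 0 < c) (hv : 0 < v) (hcs : c * v ≤ s)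
    (hsv : s ≤ v) : s ^ e ≤ (c ^ e + 1) * v ^ e := by
  have hs : 0 < s := lt_of_lt_of_le (by positivity) hcs
  have hce := rpow_pos_of_pos hc e
  have hve := rpow_pos_of_pos hv e
  rcases le_total 0 e with he | he
  · nlinarith [rpow_le_rpow hs.le hsv he]
  · have h_anti := rpow_le_rpow_of_nonpos (by positivity) hcs he
    rw [mul_rpow hc.le hv.le] at h_anti
    linarith

lemma setLIntegral_Ioo_rpow_le_of_two_mul_le (e : ℝ) {θ r : ℝ} (hr : 0 < r) (hrθ : 2 * r ≤ θ) :
    ∫⁻ x in Ioo (θ - r) (θ + r), ENNReal.ofReal (x ^ e) ≤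
      ENNReal.ofReal (2 * ((1 / 3) ^ e + 1) * (r * (θ + r) ^ e)) := by
  have h_end : 0 < θ + r := by linarith
  calc ∫⁻ x in Ioo (θ - r) (θ + r), ENNReal.ofReal (x ^ e)
      ≤ ∫⁻ _ in Ioo (θ - r) (θ + r), ENNReal.ofReal (((1 / 3) ^ e + 1) * (θ + r) ^ e) :=
        setLIntegral_mono' measurableSet_Ioo fun x hx => ENNReal.ofReal_le_ofReal <|
          rpow_le_of_mul_le_of_le e (by norm_num) h_end (by linarith [hx.1]) hx.2.le
    _ = ENNReal.ofReal (2 * ((1 / 3) ^ e + 1) * (r * (θ + r) ^ e)) := by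
        rw [setLIntegral_const, volume_Ioo, ← ENNReal.ofReal_mul (by positivity)]
        congr 1
        ring

lemma setLIntegral_Ioc_rpow {e R : ℝ} (he : -1 < e) (hR : 0 ≤ R) :
    ∫⁻ x in Ioc 0 R, ENNReal.ofReal (x ^ e) = ENNReal.ofReal (R ^ (e + 1) / (e + 1)) := by
  have h_int : IntegrableOn (fun x : ℝ => x ^ e) (Ioc 0 R) :=
    (intervalIntegrable_iff_integrableOn_Ioc_of_le hR).1
      (intervalIntegral.intervalIntegrable_rpow' he)
  have h_nonneg : 0 ≤ᵐ[volume.restrict (Ioc 0 R)] fun x : ℝ => x ^ e :=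
    (ae_restrict_mem measurableSet_Ioc).mono fun x hx => rpow_nonneg hx.1.le e
  rw [← ofReal_integral_eq_lintegral_ofReal h_int h_nonneg, ← intervalIntegral.integral_of_le hR,
    integral_rpow (Or.inl he), zero_rpow (by linarith), sub_zero]

lemma exists_setLIntegral_rpow_le {e : ℝ} (he : -1 < e) :
    ∃ C : ℝ, 0 ≤ C ∧ ∀ θ r : ℝ, 0 < θ → 0 < r →
      ∫⁻ x in Ioo (θ - r) (θ + r) ∩ Ioi 0, ENNReal.ofReal (x ^ e) ≤
        ENNReal.ofReal (C * (r * (θ + r) ^ e)) := by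
  have he_succ : 0 < e + 1 := by linarith
  refine ⟨2 * ((1 / 3) ^ e + 1) + 3 / (e + 1), by positivity, fun θ r hθ hr => ?_⟩
  have h_end : 0 < θ + r := by linarith
  rcases le_total (2 * r) θ with h_far | h_near
  · refine (lintegral_mono_set inter_subset_left).trans
      ((setLIntegral_Ioo_rpow_le_of_two_mul_le e hr h_far).trans (ENNReal.ofReal_le_ofReal ?_))
    exact mul_le_mul_of_nonneg_right (le_add_of_nonneg_right (by positivity)) (by positivity)
  · have h_subset : Ioo (θ - r) (θ + r) ∩ Ioi 0 ⊆ Ioc 0 (θ + r) := fun x hx => ⟨hx.2, hx.1.2.le⟩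
    refine (lintegral_mono_set h_subset).trans
      ((setLIntegral_Ioc_rpow he h_end.le).trans_le (ENNReal.ofReal_le_ofReal ?_))
    calc (θ + r) ^ (e + 1) / (e + 1) = (θ + r) * (θ + r) ^ e / (e + 1) := by
          rw [rpow_add_one h_end.ne', mul_comm]
      _ ≤ 3 * r * (θ + r) ^ e / (e + 1) := by
          gcongr
          linarith
      _ = 3 / (e + 1) * (r * (θ + r) ^ e) := by ring
      _ ≤ (2 * ((1 / 3) ^ e + 1) + 3 / (e + 1)) * (r * (θ + r) ^ e) :=
          mul_le_mul_of_nonneg_right (le_add_of_nonneg_left (by positivity)) (by positivity)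

lemma setLIntegral_pi_sub_rpow_le (e θ r : ℝ) :
    ∫⁻ x in Ioo (θ - r) (θ + r) ∩ Ioo 0 π, ENNReal.ofReal ((π - x) ^ e) ≤
      ∫⁻ y in Ioo (π - θ - r) (π - θ + r) ∩ Ioi 0, ENNReal.ofReal (y ^ e) := by
  rw [← (Measure.measurePreserving_sub_left volume π).setLIntegral_comp_preimage
    (measurableSet_Ioo.inter measurableSet_Ioi) (by fun_prop)]
  refine lintegral_mono_set ?_
  rintro x ⟨⟨h_left, h_right⟩, -, hx_pi⟩
  exact ⟨⟨by linarith, by linarith⟩, sub_pos.2 hx_pi⟩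

end PowerIntegrals

section BallMeasure

lemma sin_half_rpow_le {y v : ℝ} (e : ℝ) (hy : y ∈ Ioo 0 π) (hvy : v / 4 ≤ y) (hyv : y ≤ v) :
    sin (y / 2) ^ e ≤ ((1 / 16) ^ e + 1) * v ^ e := by
  obtain ⟨hy_pos, hy_pi⟩ := hy
  have h_lower : y / 4 ≤ sin (y / 2) := by
    calc y / 4 ≤ y / π := by
          gcongr
          exact pi_le_four
      _ = 2 / π * (y / 2) := by ring
      _ ≤ sin (y / 2) := mul_le_sin (by linarith) (by linarith)
  have h_upper : sin (y / 2) ≤ y / 2 := sin_le (by linarith)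
  exact rpow_le_of_mul_le_of_le e (by norm_num) (by linarith) (by linarith) (by linarith)

lemma jacobiWeight_le_of_mem_ball (α β : ℝ) {θ r x : ℝ} (hθ : θ ∈ Ioo 0 π) (hr : r < π)
    (hx : x ∈ Ioo (θ - r) (θ + r)) (hx_mem : x ∈ Ioo 0 π) :
    jacobiWeight α β x ≤ ((1 / 16) ^ (2 * α + 1) + 1) * ((1 / 16) ^ (2 * β + 1) + 1) *
      ((π - θ + r) ^ (2 * β + 1) * x ^ (2 * α + 1) +
        (θ + r) ^ (2 * α + 1) * (π - x) ^ (2 * β + 1)) := by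
  obtain ⟨hθ_pos, hθ_pi⟩ := hθ
  obtain ⟨hx_left, hx_right⟩ := hx
  have hx_pos : 0 < x := hx_mem.1
  have hx_refl : π - x ∈ Ioo 0 π := ⟨sub_pos.2 hx_mem.2, by linarith⟩
  have h_refl_pos : 0 < π - x := hx_refl.1
  have h_left : 0 < π - θ + r := by linarith
  have h_right : 0 < θ + r := by linarith
  have h_cos : cos (x / 2) = sin ((π - x) / 2) := by
    rw [← cos_pi_div_two_sub, sub_div, sub_sub_cancel]
  have h_sin_nonneg := sin_half_nonneg (Ioo_subset_Icc_self hx_refl)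
  rw [jacobiWeight, h_cos]
  rcases le_total x (π / 2) with h_low | h_high
  · refine (mul_le_mul
      (sin_half_rpow_le (2 * α + 1) hx_mem (v := x) (by linarith) le_rfl)
      (sin_half_rpow_le (2 * β + 1) hx_refl (v := π - θ + r) (by linarith) (by linarith))
      (by positivity) (by positivity)).trans ?_
    rw [mul_mul_mul_comm, mul_comm (x ^ (2 * α + 1))]
    exact mul_le_mul_of_nonneg_left (le_add_of_nonneg_right (by positivity)) (by positivity)
  · refine (mul_le_mul
      (sin_half_rpow_le (2 * α + 1) hx_mem (v := θ + r) (by linarith) hx_right.le)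
      (sin_half_rpow_le (2 * β + 1) hx_refl (v := π - x) (by linarith) le_rfl)
      (by positivity) (by positivity)).trans ?_
    rw [mul_mul_mul_comm]
    exact mul_le_mul_of_nonneg_left (le_add_of_nonneg_left (by positivity)) (by positivity)

lemma ballMeasure_eq_setLIntegral (α β θ r : ℝ) : ballMeasure α β θ r =
    ∫⁻ x in Ioo (θ - r) (θ + r) ∩ Ioo 0 π, ENNReal.ofReal (jacobiWeight α β x) := by
  rw [ballMeasure, jacobiMeasurePlus_eq_withDensity, withDensity_apply _ measurableSet_Ioo,
    Measure.restrict_restrict measurableSet_Ioo]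

lemma setLIntegral_ofReal_mul_add_mul {s : Set ℝ} (hs : MeasurableSet s) {A B : ℝ} (hA : 0 ≤ A)
    (hB : 0 ≤ B) {f g : ℝ → ℝ} (hf : ∀ x ∈ s, 0 ≤ f x) (hg : ∀ x ∈ s, 0 ≤ g x)
    (hf_meas : Measurable f) (hg_meas : Measurable g) :
    ∫⁻ x in s, ENNReal.ofReal (A * f x + B * g x) =
      ENNReal.ofReal A * (∫⁻ x in s, ENNReal.ofReal (f x)) +
        ENNReal.ofReal B * ∫⁻ x in s, ENNReal.ofReal (g x) := by
  rw [← lintegral_const_mul _ (by fun_prop), ← lintegral_const_mul _ (by fun_prop),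
    ← lintegral_add_left (by fun_prop)]
  refine setLIntegral_congr_fun hs fun x hx => ?_
  simp only [ENNReal.ofReal_add (mul_nonneg hA (hf x hx)) (mul_nonneg hB (hg x hx)),
    ENNReal.ofReal_mul hA, ENNReal.ofReal_mul hB]

lemma ballMeasure_le_add (α β : ℝ) {θ r : ℝ} (hθ : θ ∈ Ioo 0 π) (hr : 0 ≤ r) (hr_pi : r < π) :
    ballMeasure α β θ r ≤
      ENNReal.ofReal (((1 / 16) ^ (2 * α + 1) + 1) * ((1 / 16) ^ (2 * β + 1) + 1)) *
        (ENNReal.ofReal ((π - θ + r) ^ (2 * β + 1)) *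
            (∫⁻ x in Ioo (θ - r) (θ + r) ∩ Ioo 0 π, ENNReal.ofReal (x ^ (2 * α + 1))) +
          ENNReal.ofReal ((θ + r) ^ (2 * α + 1)) *
            ∫⁻ x in Ioo (θ - r) (θ + r) ∩ Ioo 0 π, ENNReal.ofReal ((π - x) ^ (2 * β + 1))) := by
  have h_meas : MeasurableSet (Ioo (θ - r) (θ + r) ∩ Ioo 0 π) :=
    measurableSet_Ioo.inter measurableSet_Ioo
  rw [ballMeasure_eq_setLIntegral, ← setLIntegral_ofReal_mul_add_mul h_meas
      (rpow_nonneg (by linarith [hθ.2]) _) (rpow_nonneg (by linarith [hθ.1]) _)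
      (fun x hx => rpow_nonneg hx.2.1.le _) (fun x hx => rpow_nonneg (sub_pos.2 hx.2.2).le _)
      (by fun_prop) (by fun_prop),
    ← lintegral_const_mul _ (by fun_prop)]
  refine setLIntegral_mono' h_meas fun x hx => ?_
  rw [← ENNReal.ofReal_mul (by positivity)]
  exact ENNReal.ofReal_le_ofReal (jacobiWeight_le_of_mem_ball α β hθ hr_pi hx.1 hx.2)

lemma exists_ballMeasure_le {α β : ℝ} (hα : -1 < α) (hβ : -1 < β) :
    ∃ C : ℝ, 0 ≤ C ∧ ∀ θ r : ℝ, θ ∈ Ioo 0 π → 0 < r → r < π →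
      ballMeasure α β θ r ≤
        ENNReal.ofReal (C * (r * ((θ + r) ^ (2 * α + 1) * (π - θ + r) ^ (2 * β + 1)))) := by
  obtain ⟨C₁, hC₁, h_left⟩ := exists_setLIntegral_rpow_le (e := 2 * α + 1) (by linarith)
  obtain ⟨C₂, hC₂, h_right⟩ := exists_setLIntegral_rpow_le (e := 2 * β + 1) (by linarith)
  refine ⟨((1 / 16) ^ (2 * α + 1) + 1) * ((1 / 16) ^ (2 * β + 1) + 1) * (C₁ + C₂), by positivity,
    fun θ r hθ hr hr_pi => (ballMeasure_le_add α β hθ hr.le hr_pi).trans ?_⟩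
  have hX : 0 < (θ + r) ^ (2 * α + 1) := rpow_pos_of_pos (by linarith [hθ.1]) _
  have hY : 0 < (π - θ + r) ^ (2 * β + 1) := rpow_pos_of_pos (by linarith [hθ.2]) _
  rw [mul_assoc _ (C₁ + C₂), ENNReal.ofReal_mul (q := (C₁ + C₂) * _) (by positivity)]
  gcongr
  set X := (θ + r) ^ (2 * α + 1)
  set Y := (π - θ + r) ^ (2 * β + 1)
  have h_sum : (C₁ + C₂) * (r * (X * Y)) = Y * (C₁ * (r * X)) + X * (C₂ * (r * Y)) := by ring
  rw [h_sum, ENNReal.ofReal_add (by positivity) (by positivity), ENNReal.ofReal_mul hY.le,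
    ENNReal.ofReal_mul hX.le]
  gcongr
  · exact (lintegral_mono_set (inter_subset_inter_right _ Ioo_subset_Ioi_self)).trans
      (h_left θ r hθ.1 hr)
  · exact (setLIntegral_pi_sub_rpow_le _ θ r).trans (h_right (π - θ) r (sub_pos.2 hθ.2) hr)

lemma ballMeasure_ne_zero (α β : ℝ) {θ r : ℝ} (hθ : θ ∈ Ioo 0 π) (hr : 0 < r) :
    ballMeasure α β θ r ≠ 0 := by
  have h_open : IsOpen (Ioo (θ - r) (θ + r) ∩ Ioo 0 π) := isOpen_Ioo.inter isOpen_Ioo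
  have h_vol : 0 < volume (Ioo (θ - r) (θ + r) ∩ Ioo 0 π) :=
    h_open.measure_pos volume ⟨θ, ⟨by linarith, by linarith⟩, hθ⟩
  rw [ballMeasure_eq_setLIntegral]
  refine ((setLIntegral_pos_iff (measurable_jacobiWeight α β).ennreal_ofReal).2
    (h_vol.trans_le (measure_mono fun x hx => ⟨?_, hx⟩))).ne'
  exact (ENNReal.ofReal_pos.2 (jacobiWeight_pos α β hx.2)).ne'

end BallMeasure

section VolumeFactor

variable {θ φ : ℝ}

lemma sq_div_eighty_le_one_sub_cos_mul_cos (hθ : θ ∈ Icc 0 π) (hφ : φ ∈ Icc 0 π) :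
    (θ + |θ - φ|) ^ 2 / 80 ≤ 1 - cos (θ / 2) * cos (φ / 2) := by
  have h_cos_θ := cos_half_nonneg hθ
  have h_cos_φ := cos_half_nonneg hφ
  have h_half {x : ℝ} (hx : x ∈ Icc 0 π) : (x / 2) ^ 2 / 5 ≤ 1 - cos (x / 2) :=
    sq_div_five_le_one_sub_cos (abs_le.2 ⟨by linarith [hx.1, hx.2], by linarith [hx.1, hx.2]⟩)
  rcases le_total θ φ with h | h
  · rw [abs_of_nonpos (by linarith)]
    have h_le : cos (θ / 2) * cos (φ / 2) ≤ cos (φ / 2) :=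
      mul_le_of_le_one_left h_cos_φ (cos_le_one _)
    nlinarith [h_half hφ]
  · rw [abs_of_nonneg (by linarith)]
    have h_le : cos (θ / 2) * cos (φ / 2) ≤ cos (θ / 2) :=
      mul_le_of_le_one_right h_cos_θ (cos_le_one _)
    nlinarith [h_half hθ, hφ.1]

lemma one_sub_cos_mul_cos_rpow_neg_le (hθ : θ ∈ Icc 0 π) (hφ : φ ∈ Icc 0 π) (hne : θ ≠ φ)
    {p : ℝ} (hp : 0 ≤ p) : (1 - cos (θ / 2) * cos (φ / 2)) ^ (-p) ≤
      80 ^ p * ((θ + |θ - φ|) ^ (2 * p))⁻¹ := by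
  have h_pos : 0 < θ + |θ - φ| := add_pos_of_nonneg_of_pos hθ.1 (abs_pos.2 (sub_ne_zero.2 hne))
  refine (rpow_le_rpow_of_nonpos (by positivity) (sq_div_eighty_le_one_sub_cos_mul_cos hθ hφ)
    (neg_nonpos.2 hp)).trans_eq ?_
  rw [rpow_neg (by positivity), div_rpow (by positivity) (by norm_num), ← rpow_two,
    ← rpow_mul h_pos.le, inv_div, div_eq_mul_inv]

lemma one_sub_sin_mul_sin_rpow_neg_le (hθ : θ ∈ Icc 0 π) (hφ : φ ∈ Icc 0 π) (hne : θ ≠ φ)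
    {p : ℝ} (hp : 0 ≤ p) : (1 - sin (θ / 2) * sin (φ / 2)) ^ (-p) ≤
      80 ^ p * ((π - θ + |θ - φ|) ^ (2 * p))⁻¹ := by
  have h_refl {x : ℝ} (hx : x ∈ Icc 0 π) : π - x ∈ Icc 0 π :=
    ⟨by linarith [hx.2], by linarith [hx.1]⟩
  have h_sin (x : ℝ) : sin (x / 2) = cos ((π - x) / 2) := by
    rw [← cos_pi_div_two_sub, sub_div]
  have h_abs : |θ - φ| = |(π - θ) - (π - φ)| := by rw [sub_sub_sub_cancel_left, abs_sub_comm]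
  rw [h_sin, h_sin, h_abs]
  exact one_sub_cos_mul_cos_rpow_neg_le (h_refl hθ) (h_refl hφ) (fun h => hne (by linarith)) hp

lemma volumeFactor_le (hθ : θ ∈ Icc 0 π) (hφ : φ ∈ Icc 0 π) (hne : θ ≠ φ) {a b : ℝ}
    (ha : 0 ≤ a + 1 / 2) (hb : 0 ≤ b + 1 / 2) :
    volumeFactor a b θ φ ≤ 80 ^ (a + 1 / 2) * 80 ^ (b + 1 / 2) *
      ((θ + |θ - φ|) ^ (2 * (a + 1 / 2)) * (π - θ + |θ - φ|) ^ (2 * (b + 1 / 2)))⁻¹ := by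
  have h_pos : 0 < θ + |θ - φ| := add_pos_of_nonneg_of_pos hθ.1 (abs_pos.2 (sub_ne_zero.2 hne))
  rw [mul_inv, mul_mul_mul_comm]
  exact mul_le_mul (one_sub_cos_mul_cos_rpow_neg_le hθ hφ hne ha)
    (one_sub_sin_mul_sin_rpow_neg_le hθ hφ hne hb)
    (rpow_nonneg (one_sub_sin_mul_sin_pos hθ hφ hne).le _) (by positivity)

end VolumeFactor

section BallScale

/-- The product of the distances to the endpoints `0` and `π`, each enlarged by `|θ - φ|`. It bounds
`sin θ` and `sin φ`, and its square is the discrepancy between the volume factors with parameters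
`(α + 1, β + 1)` and `(α, β)`. -/
def ballScale (θ φ : ℝ) : ℝ := (θ + |θ - φ|) * (π - θ + |θ - φ|)

variable {θ φ : ℝ} (hθ : θ ∈ Ioo 0 π)

include hθ in
lemma ballScale_pos (φ : ℝ) : 0 < ballScale θ φ :=
  mul_pos (add_pos_of_pos_of_nonneg hθ.1 (abs_nonneg _))
    (add_pos_of_pos_of_nonneg (sub_pos.2 hθ.2) (abs_nonneg _))

lemma sin_le_mul {x u v : ℝ} (hx : x ∈ Icc 0 π) (hu : x ≤ u) (hv : π - x ≤ v) : sin x ≤ u * v := by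
  obtain ⟨hx_nonneg, hx_pi⟩ := hx
  have := pi_gt_three
  rcases le_total x (π / 2) with h | h
  · nlinarith [sin_le hx_nonneg]
  · have h_sin := sin_le (x := π - x) (by linarith)
    rw [sin_pi_sub] at h_sin
    nlinarith

include hθ in
lemma sin_le_ballScale_left (φ : ℝ) : sin θ ≤ ballScale θ φ :=
  sin_le_mul (Ioo_subset_Icc_self hθ) (le_add_of_nonneg_right (abs_nonneg _))
    (le_add_of_nonneg_right (abs_nonneg _))

lemma sin_le_ballScale_right (θ : ℝ) (hφ : φ ∈ Icc 0 π) : sin φ ≤ ballScale θ φ :=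
  sin_le_mul hφ (by linarith [neg_abs_le (θ - φ)]) (by linarith [le_abs_self (θ - φ)])

include hθ in
lemma abs_sub_le_ballScale (φ : ℝ) : |θ - φ| ≤ ballScale θ φ := by
  obtain ⟨hθ_pos, hθ_pi⟩ := hθ
  have := pi_gt_three
  have h_abs := abs_nonneg (θ - φ)
  rw [ballScale]
  rcases le_total θ (π / 2) with _ | _ <;> nlinarith

end BallScale

section BallBounds

lemma inv_sqrt_halfAngleDist_le {θ φ : ℝ} (hθ : θ ∈ Icc 0 π) (hφ : φ ∈ Icc 0 π) (hne : θ ≠ φ) :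
    (√(halfAngleDist θ φ))⁻¹ ≤ 5 * |θ - φ|⁻¹ := by
  have h_sqrt : |θ - φ| / 5 ≤ √(halfAngleDist θ φ) :=
    le_sqrt_of_sq_le (by nlinarith [sq_div_twenty_le_halfAngleDist hθ hφ, sq_abs (θ - φ)])
  exact (inv_anti₀ (by positivity) h_sqrt).trans_eq (by rw [inv_div, div_eq_mul_inv])

lemma inv_halfAngleDist_le {θ φ : ℝ} (hθ : θ ∈ Icc 0 π) (hφ : φ ∈ Icc 0 π) (hne : θ ≠ φ) :
    (halfAngleDist θ φ)⁻¹ ≤ 20 * (|θ - φ| ^ 2)⁻¹ := by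
  have h_dist := sq_div_twenty_le_halfAngleDist hθ hφ
  have h_sq : 0 < |θ - φ| ^ 2 := pow_pos (abs_pos.2 (sub_ne_zero.2 hne)) 2
  rw [← sq_abs] at h_dist
  exact (inv_anti₀ (div_pos h_sq (by norm_num)) h_dist).trans_eq (by rw [inv_div, div_eq_mul_inv])

lemma inv_sqrt_add_mul_inv_halfAngleDist_le {θ φ s : ℝ} (hθ : θ ∈ Ioo 0 π) (hφ : φ ∈ Icc 0 π)
    (hne : θ ≠ φ) (hs : s ≤ ballScale θ φ) :
    (√(halfAngleDist θ φ))⁻¹ + s * (halfAngleDist θ φ)⁻¹ ≤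
      25 * (ballScale θ φ * (|θ - φ| ^ 2)⁻¹) := by
  have hθ_Icc := Ioo_subset_Icc_self hθ
  have h_dist := halfAngleDist_pos hθ_Icc hφ hne
  have h_sqrt : (√(halfAngleDist θ φ))⁻¹ ≤ 5 * (ballScale θ φ * (|θ - φ| ^ 2)⁻¹) := by
    calc (√(halfAngleDist θ φ))⁻¹ ≤ 5 * |θ - φ|⁻¹ := inv_sqrt_halfAngleDist_le hθ_Icc hφ hne
      _ = 5 * (|θ - φ| * (|θ - φ| ^ 2)⁻¹) := by field_simp
      _ ≤ 5 * (ballScale θ φ * (|θ - φ| ^ 2)⁻¹) := by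
          gcongr
          exact abs_sub_le_ballScale hθ φ
  have h_inv : s * (halfAngleDist θ φ)⁻¹ ≤ ballScale θ φ * (20 * (|θ - φ| ^ 2)⁻¹) :=
    mul_le_mul hs (inv_halfAngleDist_le hθ_Icc hφ hne) (by positivity) (ballScale_pos hθ φ).le
  linarith

variable {α β : ℝ} (hα : -1 < α) (hβ : -1 < β)
include hα hβ

lemma toReal_ballMeasure_pos {θ φ : ℝ} (hθ : θ ∈ Ioo 0 π) (hφ : φ ∈ Ioo 0 π) (hne : θ ≠ φ) :
    0 < (ballMeasure α β θ |θ - φ|).toReal := by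
  obtain ⟨C, -, h_ball⟩ := exists_ballMeasure_le hα hβ
  have h_abs : 0 < |θ - φ| := abs_pos.2 (sub_ne_zero.2 hne)
  have h_abs_lt : |θ - φ| < π := abs_sub_lt_of_nonneg_of_lt hθ.1.le hθ.2 hφ.1.le hφ.2
  exact ENNReal.toReal_pos (ballMeasure_ne_zero α β hθ h_abs)
    ((h_ball θ _ hθ h_abs h_abs_lt).trans_lt ENNReal.ofReal_lt_top).ne

lemma exists_ballScale_sq_mul_volumeFactor_mul_ballMeasure_le :
    ∃ C : ℝ, 0 ≤ C ∧ ∀ θ ∈ Ioo 0 π, ∀ φ ∈ Ioo 0 π, θ ≠ φ →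
      ballScale θ φ ^ 2 * volumeFactor (α + 1) (β + 1) θ φ *
        (ballMeasure α β θ |θ - φ|).toReal ≤ C * |θ - φ| := by
  obtain ⟨C, hC, h_ball⟩ := exists_ballMeasure_le hα hβ
  refine ⟨80 ^ (α + 1 + 1 / 2) * 80 ^ (β + 1 + 1 / 2) * C, by positivity, fun θ hθ φ hφ hne => ?_⟩
  have h_abs : 0 < |θ - φ| := abs_pos.2 (sub_ne_zero.2 hne)
  have h_abs_lt : |θ - φ| < π := abs_sub_lt_of_nonneg_of_lt hθ.1.le hθ.2 hφ.1.le hφ.2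
  have h_vol := volumeFactor_le (Ioo_subset_Icc_self hθ) (Ioo_subset_Icc_self hφ) hne
    (a := α + 1) (b := β + 1) (by linarith) (by linarith)
  have h_split {x : ℝ} (hx : 0 < x) (a : ℝ) :
      x ^ (2 * (a + 1 + 1 / 2)) = x ^ (2 * a + 1) * x ^ 2 := by
    rw [← rpow_two, ← rpow_add hx]
    congr 1
    ring
  have h_left : 0 < θ + |θ - φ| := by linarith [hθ.1]
  have h_right : 0 < π - θ + |θ - φ| := by linarith [hθ.2]
  rw [h_split h_left, h_split h_right] at h_vol
  have hX := rpow_pos_of_pos h_left (2 * α + 1)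
  have hY := rpow_pos_of_pos h_right (2 * β + 1)
  have h_measure := ENNReal.toReal_le_of_le_ofReal (by positivity)
    (h_ball θ |θ - φ| hθ h_abs h_abs_lt)
  rw [ballScale]
  set X := (θ + |θ - φ|) ^ (2 * α + 1)
  set Y := (π - θ + |θ - φ|) ^ (2 * β + 1)
  refine (mul_le_mul (mul_le_mul_of_nonneg_left h_vol (sq_nonneg _)) h_measure
    ENNReal.toReal_nonneg (by positivity)).trans_eq ?_
  field_simp

lemma exists_mul_mul_inv_sqrt_halfAngleDist_mul_volumeFactor_le :
    ∃ C : ℝ, 0 ≤ C ∧ ∀ θ ∈ Ioo 0 π, ∀ φ ∈ Ioo 0 π, θ ≠ φ →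
      ∀ s ≤ ballScale θ φ, ∀ s' ∈ Icc 0 (ballScale θ φ),
      s * s' * (√(halfAngleDist θ φ))⁻¹ * volumeFactor (α + 1) (β + 1) θ φ ≤
        C / (ballMeasure α β θ |θ - φ|).toReal := by
  obtain ⟨C, hC, h_core⟩ := exists_ballScale_sq_mul_volumeFactor_mul_ballMeasure_le hα hβ
  refine ⟨5 * C, by positivity, fun θ hθ φ hφ hne s hs s' ⟨hs'_nonneg, hs'⟩ => ?_⟩
  have hθ_Icc := Ioo_subset_Icc_self hθ
  have hφ_Icc := Ioo_subset_Icc_self hφ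
  have h_vol := volumeFactor_pos hθ_Icc hφ_Icc hne (α + 1) (β + 1)
  have h_measure := toReal_ballMeasure_pos hα hβ hθ hφ hne
  have h_scale := ballScale_pos hθ φ
  have h_dist := inv_sqrt_halfAngleDist_le hθ_Icc hφ_Icc hne
  rw [le_div_iff₀ h_measure]
  calc s * s' * (√(halfAngleDist θ φ))⁻¹ * volumeFactor (α + 1) (β + 1) θ φ *
        (ballMeasure α β θ |θ - φ|).toReal
      ≤ ballScale θ φ * ballScale θ φ * (5 * |θ - φ|⁻¹) * volumeFactor (α + 1) (β + 1) θ φ *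
        (ballMeasure α β θ |θ - φ|).toReal := by gcongr
    _ = 5 * |θ - φ|⁻¹ * (ballScale θ φ ^ 2 * volumeFactor (α + 1) (β + 1) θ φ *
        (ballMeasure α β θ |θ - φ|).toReal) := by ring
    _ ≤ 5 * |θ - φ|⁻¹ * (C * |θ - φ|) :=
        mul_le_mul_of_nonneg_left (h_core θ hθ φ hφ hne) (by positivity)
    _ = 5 * C := by field_simp

lemma exists_mul_add_mul_inv_halfAngleDist_mul_volumeFactor_le :
    ∃ C : ℝ, 0 ≤ C ∧ ∀ θ ∈ Ioo 0 π, ∀ φ ∈ Ioo 0 π, θ ≠ φ →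
      ∀ s ≤ ballScale θ φ, ∀ s' ∈ Icc 0 (ballScale θ φ),
      s * ((√(halfAngleDist θ φ))⁻¹ + s' * (halfAngleDist θ φ)⁻¹) *
          volumeFactor (α + 1) (β + 1) θ φ ≤
        C / (|θ - φ| * (ballMeasure α β θ |θ - φ|).toReal) := by
  obtain ⟨C, hC, h_core⟩ := exists_ballScale_sq_mul_volumeFactor_mul_ballMeasure_le hα hβ
  refine ⟨25 * C, by positivity, fun θ hθ φ hφ hne s hs s' ⟨hs'_nonneg, hs'⟩ => ?_⟩
  have hθ_Icc := Ioo_subset_Icc_self hθ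
  have hφ_Icc := Ioo_subset_Icc_self hφ
  have h_vol := volumeFactor_pos hθ_Icc hφ_Icc hne (α + 1) (β + 1)
  have h_measure := toReal_ballMeasure_pos hα hβ hθ hφ hne
  have h_scale := ballScale_pos hθ φ
  have h_dist := halfAngleDist_pos hθ_Icc hφ_Icc hne
  have h_sum := inv_sqrt_add_mul_inv_halfAngleDist_le hθ hφ_Icc hne hs'
  rw [le_div_iff₀ (by positivity)]
  calc s * ((√(halfAngleDist θ φ))⁻¹ + s' * (halfAngleDist θ φ)⁻¹) *
        volumeFactor (α + 1) (β + 1) θ φ * (|θ - φ| * (ballMeasure α β θ |θ - φ|).toReal)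
      ≤ ballScale θ φ * (25 * (ballScale θ φ * (|θ - φ| ^ 2)⁻¹)) *
        volumeFactor (α + 1) (β + 1) θ φ * (|θ - φ| * (ballMeasure α β θ |θ - φ|).toReal) := by
          gcongr
    _ = 25 * |θ - φ|⁻¹ * (ballScale θ φ ^ 2 * volumeFactor (α + 1) (β + 1) θ φ *
        (ballMeasure α β θ |θ - φ|).toReal) := by field_simp
    _ ≤ 25 * |θ - φ|⁻¹ * (C * |θ - φ|) :=
        mul_le_mul_of_nonneg_left (h_core θ hθ φ hφ hne) (by positivity)
    _ = 25 * C := by field_simp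

end BallBounds

section StandardEstimates

variable {α β : ℝ} (hα : -1 < α) (hβ : -1 < β)
include hα hβ

lemma exists_abs_lapKer_le_div_ballMeasure :
    ∃ C : ℝ, 0 ≤ C ∧ ∀ (m : ℝ → ℝ) (M : ℝ), (∀ t, 0 < t → |m t| ≤ M) →
      ∀ θ ∈ Ioo 0 π, ∀ φ ∈ Ioo 0 π, θ ≠ φ →
      |lapKer α β m θ φ| ≤ C * M / (ballMeasure α β θ |θ - φ|).toReal := by
  obtain ⟨C₁, hC₁, h_kernel⟩ := exists_abs_lapKer_le hα hβ
  obtain ⟨C₂, hC₂, h_ball⟩ := exists_mul_mul_inv_sqrt_halfAngleDist_mul_volumeFactor_le hα hβ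
  refine ⟨C₁ * C₂, by positivity, fun m M hm θ hθ φ hφ hne => ?_⟩
  have hM : 0 ≤ M := (abs_nonneg _).trans (hm 1 one_pos)
  refine (h_kernel m M hm θ hθ φ hφ hne).trans ((mul_le_mul_of_nonneg_left
    (h_ball θ hθ φ hφ hne (sin θ) (sin_le_ballScale_left hθ φ)
      (sin φ) ⟨(sin_pos_of_mem_Ioo hφ).le, sin_le_ballScale_right θ (Ioo_subset_Icc_self hφ)⟩)
    (by positivity)).trans_eq ?_)
  ring

lemma exists_abs_deriv_lapKer_left_le_div_ballMeasure :
    ∃ C : ℝ, 0 ≤ C ∧ ∀ (m : ℝ → ℝ) (M : ℝ), (∀ t, 0 < t → |m t| ≤ M) →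
      ∀ θ ∈ Ioo 0 π, ∀ φ ∈ Ioo 0 π, θ ≠ φ →
      |deriv (fun θ' => lapKer α β m θ' φ) θ| ≤
        C * M / (|θ - φ| * (ballMeasure α β θ |θ - φ|).toReal) := by
  obtain ⟨C₁, hC₁, h_kernel⟩ := exists_abs_deriv_lapKer_le hα hβ
  obtain ⟨C₂, hC₂, h_ball⟩ := exists_mul_add_mul_inv_halfAngleDist_mul_volumeFactor_le hα hβ
  refine ⟨C₁ * C₂, by positivity, fun m M hm θ hθ φ hφ hne => ?_⟩
  have hM : 0 ≤ M := (abs_nonneg _).trans (hm 1 one_pos)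
  refine (h_kernel m M hm θ hθ φ hφ hne).trans ((mul_le_mul_of_nonneg_left
    (h_ball θ hθ φ hφ hne
      (sin φ) (sin_le_ballScale_right θ (Ioo_subset_Icc_self hφ))
      (sin θ) ⟨(sin_pos_of_mem_Ioo hθ).le, sin_le_ballScale_left hθ φ⟩)
    (by positivity)).trans_eq ?_)
  ring

lemma exists_abs_deriv_lapKer_right_le_div_ballMeasure :
    ∃ C : ℝ, 0 ≤ C ∧ ∀ (m : ℝ → ℝ) (M : ℝ), (∀ t, 0 < t → |m t| ≤ M) →
      ∀ θ ∈ Ioo 0 π, ∀ φ ∈ Ioo 0 π, θ ≠ φ →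
      |deriv (fun φ' => lapKer α β m θ φ') φ| ≤
        C * M / (|θ - φ| * (ballMeasure α β θ |θ - φ|).toReal) := by
  obtain ⟨C₁, hC₁, h_kernel⟩ := exists_abs_deriv_lapKer_le hα hβ
  obtain ⟨C₂, hC₂, h_ball⟩ := exists_mul_add_mul_inv_halfAngleDist_mul_volumeFactor_le hα hβ
  refine ⟨C₁ * C₂, by positivity, fun m M hm θ hθ φ hφ hne => ?_⟩
  have hM : 0 ≤ M := (abs_nonneg _).trans (hm 1 one_pos)
  have h_deriv := h_kernel m M hm φ hφ θ hθ hne.symm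
  rw [halfAngleDist_comm, volumeFactor_comm] at h_deriv
  simp only [lapKer_comm hα hβ m θ]
  refine h_deriv.trans ((mul_le_mul_of_nonneg_left
    (h_ball θ hθ φ hφ hne (sin θ) (sin_le_ballScale_left hθ φ)
      (sin φ) ⟨(sin_pos_of_mem_Ioo hφ).le, sin_le_ballScale_right θ (Ioo_subset_Icc_self hφ)⟩)
    (by positivity)).trans_eq ?_)
  ring

end StandardEstimates

end JacobiPoisson

/-- Theorem (standard estimates for the Laplace-type multiplier kernel). -/
theorem lapKer_standard_estimates (α β : ℝ) (hα : -1 < α) (hβ : -1 < β) :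
    ∃ C : ℝ, 0 < C ∧ ∀ φfun : ℝ → ℝ, ∀ Cφ : ℝ, (∀ t : ℝ, 0 < t → |φfun t| ≤ Cφ) →
      ∀ θ ∈ Ioo (0 : ℝ) π, ∀ ψ ∈ Ioo (0 : ℝ) π, θ ≠ ψ →
        |lapKer α β φfun θ ψ| ≤ C * Cφ / (ballMeasure α β θ |θ - ψ|).toReal ∧
        |deriv (fun θ' => lapKer α β φfun θ' ψ) θ| +
            |deriv (fun ψ' => lapKer α β φfun θ ψ') ψ| ≤
          C * Cφ / (|θ - ψ| * (ballMeasure α β θ |θ - ψ|).toReal) := by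
  obtain ⟨C₀, hC₀, h_size⟩ := JacobiPoisson.exists_abs_lapKer_le_div_ballMeasure hα hβ
  obtain ⟨C₁, hC₁, h_left⟩ :=
    JacobiPoisson.exists_abs_deriv_lapKer_left_le_div_ballMeasure hα hβ
  obtain ⟨C₂, hC₂, h_right⟩ :=
    JacobiPoisson.exists_abs_deriv_lapKer_right_le_div_ballMeasure hα hβ
  refine ⟨C₀ + (C₁ + C₂) + 1, by positivity, fun m M hm θ hθ φ hφ hne => ?_⟩
  have hM : 0 ≤ M := (abs_nonneg _).trans (hm 1 one_pos)
  constructor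
  · refine (h_size m M hm θ hθ φ hφ hne).trans ?_
    exact div_le_div_of_nonneg_right (mul_le_mul_of_nonneg_right (by linarith) hM) (by positivity)
  · refine (add_le_add (h_left m M hm θ hθ φ hφ hne) (h_right m M hm θ hθ φ hφ hne)).trans ?_
    rw [← add_div, ← add_mul]
    exact div_le_div_of_nonneg_right (mul_le_mul_of_nonneg_right (by linarith) hM) (by positivity)

end
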